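/- Let α ∈ (1,2), let f, g ∈ L^α(S, μ) be nonzero and satisfy Assumptions (A1) and (A2) with constants ε₁, ε₂, and let ξ, η be jointly SαS with spectral pair (f, g). Let b ≥ 1, β ∈ (0, α/2), and let K, L be functions satisfying Assumptions (K1) and (K2) with exponent β and threshold x₀ = b. Set K_b(x) := K(x)·1_{{|x|>b}} and L_b(x) := L(x)·1_{{|x|>b}}. Then K_b(ξ) and L_b(η) are square-integrable, and |Cov(K_b(ξ), L_b(η))| ≤ C b^{2β−α} ([f,g]₁ + [f,g]₂), where the constant C depends only on ε₁, ε₂, α, β, ‖f‖_α, ‖g‖_α and the constant in (K1). (Paper's Theorem 2.2.) -/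

import Mathlib

open MeasureTheory Real Set Filter
open scoped ENNReal Topology

noncomputable def nrm (α : ℝ) {S : Type*} [MeasurableSpace S] (μ : Measure S) (f : S → ℝ) : ℝ :=
  (∫ s, |f s| ^ α ∂μ) ^ (1 / α)

noncomputable def dep2 (α : ℝ) {S : Type*} [MeasurableSpace S] (μ : Measure S) (f g : S → ℝ) : ℝ :=
  ∫ s, |f s * g s| ^ (α / 2) ∂μ

noncomputable def dep1s (α : ℝ) {S : Type*} [MeasurableSpace S] (μ : Measure S) (f g : S → ℝ) : ℝ :=
  ∫ s, |f s| ^ (α - 1) * |g s| ∂μ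

noncomputable def dep1 (α : ℝ) {S : Type*} [MeasurableSpace S] (μ : Measure S) (f g : S → ℝ) : ℝ :=
  dep1s α μ f g + dep1s α μ g f

/-- `f ∈ L^α(S, μ)`. -/
def MemLalpha (α : ℝ) {S : Type*} [MeasurableSpace S] (μ : Measure S) (f : S → ℝ) : Prop :=
  AEStronglyMeasurable f μ ∧ Integrable (fun s => |f s| ^ α) μ

/-- Assumption (A1) with constant ε₁. -/
def A1 (α ε₁ : ℝ) {S : Type*} [MeasurableSpace S] (μ : Measure S) (f g : S → ℝ) : Prop :=
  nrm α μ f ^ (α / 2) * nrm α μ g ^ (α / 2) - dep2 α μ f g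
    ≥ ε₁ * (nrm α μ f ^ (α / 2) * nrm α μ g ^ (α / 2))

/-- Assumption (A2) with constant ε₂. -/
def A2 (α ε₂ : ℝ) {S : Type*} [MeasurableSpace S] (μ : Measure S) (f g : S → ℝ) : Prop :=
  ∀ u v : ℝ, nrm α μ (fun s => u * f s + v * g s) ^ α
    ≥ ε₂ * (|u| ^ α * nrm α μ f ^ α + |v| ^ α * nrm α μ g ^ α)

noncomputable def Ufun (α : ℝ) {S : Type*} [MeasurableSpace S] (μ : Measure S)
    (f g : S → ℝ) (u v : ℝ) : ℝ :=
  Real.exp (-(nrm α μ (fun s => u * f s + v * g s) ^ α)) -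
    Real.exp (-(nrm α μ (fun s => u * f s) ^ α) - nrm α μ (fun s => v * g s) ^ α)

/-- signed power `a^⟨p⟩ = sign(a)|a|^p`. -/
noncomputable def spow (a p : ℝ) : ℝ := Real.sign a * |a| ^ p

noncomputable def D1 (α : ℝ) {S : Type*} [MeasurableSpace S] (μ : Measure S)
    (f g : S → ℝ) (u v : ℝ) : ℝ :=
  -α * (∫ s, spow (u * f s + v * g s) (α - 1) * f s ∂μ) *
      Real.exp (-(nrm α μ (fun s => u * f s + v * g s) ^ α)) +
    α * (∫ s, spow (u * f s) (α - 1) * f s ∂μ) *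
      Real.exp (-(nrm α μ (fun s => u * f s) ^ α) - nrm α μ (fun s => v * g s) ^ α)

noncomputable def D2 (α : ℝ) {S : Type*} [MeasurableSpace S] (μ : Measure S)
    (f g : S → ℝ) (u v : ℝ) : ℝ :=
  -(α * (α - 1)) * (∫ s, (if f s = 0 ∨ g s = 0 then (0:ℝ) else
        |u * f s + v * g s| ^ (α - 2) * (f s * g s)) ∂μ) *
      Real.exp (-(nrm α μ (fun s => u * f s + v * g s) ^ α)) +
    α ^ 2 * (∫ s, spow (u * f s + v * g s) (α - 1) * f s ∂μ) *
      (∫ s, spow (u * f s + v * g s) (α - 1) * g s ∂μ) *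
      Real.exp (-(nrm α μ (fun s => u * f s + v * g s) ^ α)) -
    α ^ 2 * (∫ s, spow (u * f s) (α - 1) * f s ∂μ) *
      (∫ s, spow (v * g s) (α - 1) * g s ∂μ) *
      Real.exp (-(nrm α μ (fun s => u * f s) ^ α) - nrm α μ (fun s => v * g s) ^ α)

/-- `(ξ, η)` is jointly SαS with spectral pair `(f, g)`. -/
def JointSAS (α : ℝ) {S : Type*} [MeasurableSpace S] (μ : Measure S) (f g : S → ℝ)
    {Ω : Type*} [MeasurableSpace Ω] (P : Measure Ω) (ξ η : Ω → ℝ) : Prop :=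
  ∀ u v : ℝ, (∫ ω, Complex.exp (Complex.I * ((u * ξ ω + v * η ω : ℝ) : ℂ)) ∂P)
    = Complex.exp (-((nrm α μ (fun s => u * f s + v * g s) ^ α : ℝ) : ℂ))

section part1
/-- signed power with exponent `α - 1` -/
noncomputable def sp (α x : ℝ) : ℝ := |x| ^ (α - 2) * x

lemma sp_pos {α x : ℝ} (hx : 0 < x) : sp α x = x ^ (α - 1) := by
  unfold sp
  rw [abs_of_pos hx, show α - 1 = (α - 2) + 1 by ring, Real.rpow_add_one hx.ne']

lemma sp_neg' (α x : ℝ) : sp α (-x) = - sp α x := by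
  unfold sp; rw [abs_neg]; ring

lemma sp_zero (α : ℝ) : sp α 0 = 0 := by simp [sp]

lemma abs_sp {α : ℝ} (hα : 1 < α) (x : ℝ) : |sp α x| = |x| ^ (α - 1) := by
  rcases lt_trichotomy x 0 with h | h | h
  · have : sp α x = - (-x) ^ (α - 1) := by
      rw [← sp_pos (neg_pos.mpr h), sp_neg']; ring
    rw [this, abs_neg, abs_of_neg h, abs_of_nonneg]
    exact Real.rpow_nonneg (by linarith) _
  · subst h; simp [sp_zero, Real.zero_rpow (by linarith : α - 1 ≠ 0)]
  · rw [sp_pos h, abs_of_pos h, abs_of_nonneg (Real.rpow_nonneg h.le _)]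

lemma measurable_sp (α : ℝ) : Measurable (sp α) := by
  unfold sp; fun_prop

lemma rpow_sub_le {p a b : ℝ} (hp : 0 ≤ p) (hp1 : p ≤ 1) (ha : 0 ≤ a) (hab : a ≤ b) :
    b ^ p - a ^ p ≤ (b - a) ^ p := by
  have := Real.rpow_add_le_add_rpow ha (sub_nonneg.mpr hab) hp hp1
  rw [add_sub_cancel] at this
  linarith

lemma sp_holder_aux {α : ℝ} (hα : 1 < α) (hα2 : α < 2) {x y : ℝ} (hxy : x ≤ y) :
    |sp α x - sp α y| ≤ 2 * |x - y| ^ (α - 1) := by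
  have key : ∀ a b : ℝ, 0 ≤ a → a ≤ b → |sp α a - sp α b| ≤ |a - b| ^ (α - 1) := by
    intro a b ha hab
    have e : ∀ c : ℝ, 0 ≤ c → sp α c = c ^ (α - 1) := by
      intro c hc
      rcases hc.eq_or_lt with h | h
      · rw [← h, sp_zero, Real.zero_rpow (by linarith)]
      · exact sp_pos h
    rw [e a ha, e b (ha.trans hab), abs_sub_comm, abs_sub_comm a b,
      abs_of_nonneg (sub_nonneg.mpr hab),
      abs_of_nonneg (sub_nonneg.mpr (Real.rpow_le_rpow ha hab (by linarith)))]
    exact rpow_sub_le (by linarith) (by linarith) ha hab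
  have nn : 0 ≤ |x - y| ^ (α - 1) := by positivity
  rcases le_total 0 x with hx | hx
  · linarith [key x y hx hxy]
  · rcases le_total 0 y with hy | hy
    · calc |sp α x - sp α y| ≤ |sp α x| + |sp α y| := abs_sub _ _
        _ ≤ |x - y| ^ (α - 1) + |x - y| ^ (α - 1) := by
          rw [abs_sp hα, abs_sp hα]
          have h1 : |x - y| = y - x := by rw [abs_sub_comm]; exact abs_of_nonneg (by linarith)
          rw [h1, abs_of_nonpos hx, abs_of_nonneg hy]
          exact add_le_add (Real.rpow_le_rpow (by linarith) (by linarith) (by linarith))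
            (Real.rpow_le_rpow (by linarith) (by linarith) (by linarith))
        _ = _ := by ring
    · have := key (-y) (-x) (by linarith) (by linarith)
      rw [sp_neg', sp_neg'] at this
      have e1 : |-y - -x| = |x - y| := by congr 1; ring
      have e2 : |-sp α y - -sp α x| = |sp α x - sp α y| := by congr 1; ring
      rw [e1, e2] at this
      linarith

lemma sp_holder {α : ℝ} (hα : 1 < α) (hα2 : α < 2) (x y : ℝ) :
    |sp α x - sp α y| ≤ 2 * |x - y| ^ (α - 1) := by
  rcases le_total x y with h | h
  · exact sp_holder_aux hα hα2 h
  · rw [abs_sub_comm, abs_sub_comm x y]; exact sp_holder_aux hα hα2 h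

lemma hasDerivAt_absrpow {α : ℝ} (hα : 1 < α) (x : ℝ) :
    HasDerivAt (fun x : ℝ => |x| ^ α) (α * sp α x) x := by
  have := hasDerivAt_abs_rpow x hα
  unfold sp; convert this using 1; ring

lemma abs_rpow_add_sub {α : ℝ} (hα : 1 < α) (hα2 : α < 2) (x y : ℝ) :
    |(|x + y| ^ α - |x| ^ α - |y| ^ α)| ≤ 2 * α * (|x| ^ (α - 1) * |y|) := by
  have hd : ∀ w ∈ (univ : Set ℝ), HasDerivWithinAt (fun w : ℝ => |x + w| ^ α - |w| ^ α)
      (α * sp α (x + w) - α * sp α w) univ w := by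
    intro w _
    have h1 : HasDerivAt (fun w : ℝ => |x + w| ^ α) (α * sp α (x + w)) w := by
      have := (hasDerivAt_absrpow hα (x + w)).comp w ((hasDerivAt_id w).const_add x)
      simpa [Function.comp_def] using this
    exact (h1.sub (hasDerivAt_absrpow hα w)).hasDerivWithinAt
  have hb : ∀ w ∈ (univ : Set ℝ), ‖α * sp α (x + w) - α * sp α w‖ ≤ 2 * α * |x| ^ (α - 1) := by
    intro w _
    rw [← mul_sub, norm_mul, Real.norm_eq_abs, Real.norm_eq_abs, abs_of_pos (by linarith : 0 < α)]
    have := sp_holder hα hα2 (x + w) w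
    rw [show x + w - w = x by ring] at this
    nlinarith
  have := Convex.norm_image_sub_le_of_norm_hasDerivWithin_le hd hb convex_univ (mem_univ 0) (mem_univ y)
  simp only [add_zero, abs_zero, Real.zero_rpow (by linarith : α ≠ 0), sub_zero, Real.norm_eq_abs] at this
  calc _ = |(|x + y| ^ α - |y| ^ α - |x| ^ α)| := by congr 1; ring
    _ ≤ _ := this
    _ = _ := by ring

lemma hasDerivAt_sp {α x : ℝ} (hx : x ≠ 0) :
    HasDerivAt (sp α) ((α - 1) * |x| ^ (α - 2)) x := by
  have hpos : ∀ y : ℝ, 0 < y → HasDerivAt (sp α) ((α - 1) * |y| ^ (α - 2)) y := by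
    intro y hy
    have h1 := Real.hasDerivAt_rpow_const (x := y) (p := α - 1) (Or.inl hy.ne')
    rw [abs_of_pos hy]
    rw [show α - 1 - 1 = α - 2 by ring] at h1
    refine h1.congr_of_eventuallyEq ?_
    filter_upwards [lt_mem_nhds hy] with z hz
    exact sp_pos hz
  rcases lt_or_gt_of_ne hx with h | h
  · have h1 := (hpos (-x) (by linarith)).comp x (hasDerivAt_neg x)
    have h2 := h1.neg
    have e : (fun y => -((sp α) ∘ Neg.neg) y) = sp α := by
      funext y; simp [sp_neg']
    have e' : (-(sp α ∘ Neg.neg)) = sp α := e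
    rw [abs_neg] at h2
    rw [e'] at h2
    simpa using h2
  · exact hpos x h

lemma continuous_sp {α : ℝ} (hα : 1 < α) : Continuous (sp α) := by
  rw [continuous_iff_continuousAt]
  intro x
  by_cases hx : x = 0
  · subst hx
    rw [ContinuousAt, sp_zero]
    apply squeeze_zero_norm (a := fun x : ℝ => |x| ^ (α - 1))
    · intro y; rw [Real.norm_eq_abs, abs_sp hα]
    · have : Continuous (fun x : ℝ => |x| ^ (α - 1)) :=
        continuous_abs.rpow_const (fun _ => Or.inr (by linarith))
      have h := this.tendsto 0
      simpa [Real.zero_rpow (by linarith : α - 1 ≠ 0)] using h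
  · exact (hasDerivAt_sp hx).continuousAt

/-- integration by parts against a shifted signed power -/
lemma ibp_sp {α : ℝ} (hα : 1 < α) (c g : ℝ) (hg : g ≠ 0) {h h' : ℝ → ℂ}
    (hd : ∀ v, HasDerivAt h (h' v) v)
    (hi1 : Integrable (fun v => h' v * (sp α (c + v * g) : ℂ)))
    (hi2 : Integrable (fun v => h v * ((|c + v * g| ^ (α - 2) : ℝ) : ℂ)))
    (hi3 : Integrable (fun v => h v * (sp α (c + v * g) : ℂ))) :
    ∫ v, h' v * (sp α (c + v * g) : ℂ)
      = - (((α - 1) * g : ℝ) : ℂ) * ∫ v, h v * ((|c + v * g| ^ (α - 2) : ℝ) : ℂ) := by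
  set v0 := - c / g with hv0
  have hz : ∀ v, c + v * g = 0 ↔ v = v0 := by
    intro v; rw [hv0, eq_div_iff hg]; constructor <;> intro h <;> linarith
  set F : ℝ → ℂ := fun v => h v * (sp α (c + v * g) : ℂ) with hF
  set F' : ℝ → ℂ := fun v => h' v * (sp α (c + v * g) : ℂ)
    + (((α - 1) * g : ℝ) : ℂ) * (h v * ((|c + v * g| ^ (α - 2) : ℝ) : ℂ)) with hF'
  have hdF : ∀ v, v ≠ v0 → HasDerivAt F (F' v) v := by
    intro v hv
    have h1 : HasDerivAt (fun v : ℝ => sp α (c + v * g)) ((α - 1) * |c + v * g| ^ (α - 2) * g) v := by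
      have := (hasDerivAt_sp (α := α) (x := c + v * g) (fun hh => hv ((hz v).1 hh))).comp v
        (((hasDerivAt_id v).mul_const g).const_add c)
      simpa [Function.comp_def] using this
    have h2 := (hd v).mul h1.ofReal_comp
    refine h2.congr_deriv ?_
    simp only [hF']
    push_cast; ring
  have hFi : Integrable F' := hi1.add (hi2.const_mul _)
  have hcont : Continuous F := by
    have h1 : Continuous h := continuous_iff_continuousAt.2 fun v => (hd v).continuousAt
    have h2 : Continuous (fun v : ℝ => sp α (c + v * g)) := (continuous_sp hα).comp (by fun_prop)
    exact h1.mul (Complex.continuous_ofReal.comp h2)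
  have hF0 : F v0 = 0 := by
    simp [hF, (hz v0).2 rfl, sp_zero]
  have t1 : Tendsto F atTop (𝓝 0) :=
    tendsto_zero_of_hasDerivAt_of_integrableOn_Ioi (a := v0)
      (fun x hx => hdF x (ne_of_gt hx)) hFi.integrableOn hi3.integrableOn
  have t2 : Tendsto F atBot (𝓝 0) :=
    tendsto_zero_of_hasDerivAt_of_integrableOn_Iic (a := v0 - 1)
      (fun x hx => hdF x (by
        intro hh; have h3 : x ≤ v0 - 1 := hx; linarith)) hFi.integrableOn hi3.integrableOn
  have i1 := integral_Ioi_of_hasDerivAt_of_tendsto (a := v0) hcont.continuousWithinAt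
      (fun x hx => hdF x (ne_of_gt hx)) hFi.integrableOn t1
  have i2 := integral_Iic_of_hasDerivAt_of_tendsto (a := v0) hcont.continuousWithinAt
      (fun x hx => hdF x (ne_of_lt hx)) hFi.integrableOn t2
  have i3 : ∫ v, F' v = 0 := by
    rw [← intervalIntegral.integral_Iic_add_Ioi (b := v0) hFi.integrableOn hFi.integrableOn, i1, i2, hF0]; simp
  simp only [hF'] at i3
  rw [integral_add hi1 (hi2.const_mul _), integral_const_mul] at i3
  rw [eq_neg_of_add_eq_zero_left i3]; ring

lemma integrable_of_even {f : ℝ → ℝ} (hf : IntegrableOn f (Ioi 0)) :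
    Integrable (fun x => f |x|) := by
  rw [← integrableOn_univ, ← Iic_union_Ioi (a := (0:ℝ)), integrableOn_union]
  have h1 : IntegrableOn (fun x => f |x|) (Ioi 0) :=
    hf.congr_fun (fun x hx => by rw [abs_of_pos hx]) measurableSet_Ioi
  refine ⟨?_, h1⟩
  have := (integrableOn_Ici_iff_integrableOn_Ioi (μ := volume) (b := (0:ℝ)) (f := fun x => f |x|)).2 h1
  have h2 := this.comp_neg
  simpa using h2

lemma integrable_abs_rpow_exp {s p b : ℝ} (hs : -1 < s) (hp : 0 < p) (hb : 0 < b) :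
    Integrable (fun x : ℝ => |x| ^ s * rexp (-b * |x| ^ p)) :=
  integrable_of_even (integrableOn_rpow_mul_exp_neg_mul_rpow hs hp hb)

lemma integrable_near {r : ℝ} (hr : -1 < r) (R : ℝ) :
    Integrable (fun x : ℝ => if |x| ≤ R then |x| ^ r else 0) := by
  apply integrable_of_even (f := fun y : ℝ => if y ≤ R then y ^ r else 0)
  have h1 : IntegrableOn (fun x : ℝ => x ^ r) (Ioc 0 R) := by
    rcases le_total R 0 with h | h
    · simp [Ioc_eq_empty_of_le h]
    · exact (intervalIntegrable_iff_integrableOn_Ioc_of_le h).1 (intervalIntegral.intervalIntegrable_rpow' hr)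
  have h2 := (integrable_indicator_iff measurableSet_Ioc).2 h1
  refine (h2.integrableOn (s := Ioi 0)).congr_fun (fun x hx => ?_) measurableSet_Ioi
  have hx' : 0 < x := hx
  simp only [indicator, mem_Ioc, hx', true_and]

lemma integrable_far {r : ℝ} (hr : r < -1) {R : ℝ} (hR : 0 < R) :
    Integrable (fun x : ℝ => if R < |x| then |x| ^ r else 0) := by
  apply integrable_of_even (f := fun y : ℝ => if R < y then y ^ r else 0)
  have h2 := (integrable_indicator_iff measurableSet_Ioi).2 (integrableOn_Ioi_rpow_of_lt hr hR)
  refine (h2.integrableOn (s := Ioi 0)).congr_fun (fun x hx => ?_) measurableSet_Ioi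
  simp only [indicator, mem_Ioi]

lemma integrable_kernel1 {α : ℝ} (hα : 1 < α) (hα2 : α < 2) :
    Integrable (fun w : ℝ => |w| ^ (-(α / 2)) * |1 + w| ^ (α - 2)) := by
  have i1 := (integrable_near (r := -(α/2)) (by linarith) (1/2)).const_mul ((1/2 : ℝ) ^ (α - 2))
  have i2 := ((integrable_near (r := α - 2) (by linarith) (1/2)).comp_add_left 1).const_mul
    ((1/2 : ℝ) ^ (-(α/2)))
  have i3 := (integrable_far (r := α/2 - 2) (by linarith) (show (0:ℝ) < 1/2 by norm_num)).const_mul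
    ((1/3 : ℝ) ^ (α - 2))
  refine ((i1.add i2).add i3).mono' (by fun_prop) (Eventually.of_forall fun w => ?_)
  have n1 : 0 ≤ (if |w| ≤ 1/2 then |w| ^ (-(α/2)) else 0) := by split_ifs <;> positivity
  have n2 : 0 ≤ (if |1 + w| ≤ 1/2 then |1 + w| ^ (α - 2) else 0) := by split_ifs <;> positivity
  have n3 : 0 ≤ (if 1/2 < |w| then |w| ^ (α/2 - 2) else 0) := by split_ifs <;> positivity
  have p1 : 0 ≤ ((1/2 : ℝ) ^ (α - 2)) := by positivity
  have p2 : 0 ≤ ((1/2 : ℝ) ^ (-(α/2))) := by positivity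
  have p3 : 0 ≤ ((1/3 : ℝ) ^ (α - 2)) := by positivity
  have m1 := mul_nonneg p1 n1
  have m2 := mul_nonneg p2 n2
  have m3 := mul_nonneg p3 n3
  rw [Real.norm_of_nonneg (by positivity)]
  simp only [Pi.add_apply]
  by_cases hw : |w| ≤ 1/2
  · have hb : (1/2 : ℝ) ≤ |1 + w| := by
      have := abs_sub_abs_le_abs_sub 1 (-w)
      simp only [abs_one, abs_neg, sub_neg_eq_add] at this; linarith
    have : |1 + w| ^ (α - 2) ≤ (1/2 : ℝ) ^ (α - 2) :=
      Real.rpow_le_rpow_of_nonpos (by norm_num) hb (by linarith)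
    have : |w| ^ (-(α / 2)) * |1 + w| ^ (α - 2) ≤ (1/2 : ℝ) ^ (α - 2) * |w| ^ (-(α / 2)) := by
      rw [mul_comm]; gcongr
    rw [if_pos hw]
    linarith
  · push Not at hw
    by_cases hw2 : |1 + w| ≤ 1/2
    · have : |w| ^ (-(α/2)) ≤ (1/2 : ℝ) ^ (-(α/2)) :=
        Real.rpow_le_rpow_of_nonpos (by norm_num) hw.le (by linarith)
      have : |w| ^ (-(α / 2)) * |1 + w| ^ (α - 2) ≤ (1/2 : ℝ) ^ (-(α/2)) * |1 + w| ^ (α - 2) := by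
        gcongr
      rw [if_pos hw2]
      linarith
    · push Not at hw2
      have hb : 1/3 * |w| ≤ |1 + w| := by
        rcases abs_cases w with h | h <;> rcases abs_cases (1 + w) with h' | h' <;> linarith
      have h1 : |1 + w| ^ (α - 2) ≤ (1/3 * |w|) ^ (α - 2) :=
        Real.rpow_le_rpow_of_nonpos (by linarith) hb (by linarith)
      rw [Real.mul_rpow (by norm_num) (abs_nonneg _)] at h1
      have h2 : |w| ^ (-(α/2)) * |w| ^ (α - 2) = |w| ^ (α/2 - 2) := by
        rw [← Real.rpow_add (by linarith)]; congr 1; ring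
      rw [if_pos hw]
      have : |w| ^ (-(α / 2)) * |1 + w| ^ (α - 2) ≤ (1/3 : ℝ) ^ (α - 2) * |w| ^ (α/2 - 2) := by
        rw [← h2]
        calc _ ≤ |w| ^ (-(α / 2)) * ((1/3 : ℝ) ^ (α - 2) * |w| ^ (α - 2)) := by gcongr
          _ = _ := by ring
      linarith

noncomputable def ck1 (α : ℝ) : ℝ := ∫ w : ℝ, |w| ^ (-(α / 2)) * |1 + w| ^ (α - 2)

lemma ck1_nonneg (α : ℝ) : 0 ≤ ck1 α := integral_nonneg fun _ => by positivity

lemma kernel_scale {α c g : ℝ} (hc : c ≠ 0) (hg : g ≠ 0) (v : ℝ) :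
    |v| ^ (-(α / 2)) * |c + v * g| ^ (α - 2) =
      (|c| ^ (α / 2 - 2) * |g| ^ (α / 2)) *
      (|g / c * v| ^ (-(α / 2)) * |1 + g / c * v| ^ (α - 2)) := by
  have hc' : 0 < |c| := abs_pos.2 hc
  have hg' : 0 < |g| := abs_pos.2 hg
  have e1 : |c + v * g| = |c| * |1 + g / c * v| := by
    rw [← abs_mul]; congr 1; field_simp
  rw [e1, Real.mul_rpow (abs_nonneg _) (abs_nonneg _), abs_mul, abs_div,
    Real.mul_rpow (by positivity) (abs_nonneg _), Real.div_rpow hg'.le hc'.le]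
  have e2 : |g| ^ (α/2) * |g| ^ (-(α/2)) = 1 := by
    rw [← Real.rpow_add hg']; simp
  have e3 : |c| ^ (α/2 - 2) = |c| ^ (α - 2) * |c| ^ (-(α/2)) := by
    rw [← Real.rpow_add hc']; congr 1; ring
  rw [e3]
  have e4 : |c| ^ (-(α/2)) ≠ 0 := by positivity
  generalize |1 + g / c * v| ^ (α - 2) = X
  field_simp
  linear_combination (-|v| ^ (-(α/2)) * X) * e2

lemma integrable_kernel {α c g : ℝ} (hα : 1 < α) (hα2 : α < 2) (hc : c ≠ 0) (hg : g ≠ 0) :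
    Integrable (fun v : ℝ => |v| ^ (-(α / 2)) * |c + v * g| ^ (α - 2)) := by
  simp_rw [kernel_scale hc hg]
  exact ((integrable_comp_mul_left_iff (fun w : ℝ => |w| ^ (-(α / 2)) * |1 + w| ^ (α - 2))
    (div_ne_zero hg hc)).2 (integrable_kernel1 hα hα2)).const_mul _

lemma integral_kernel {α c g : ℝ} (hc : c ≠ 0) (hg : g ≠ 0) :
    ∫ v : ℝ, |v| ^ (-(α / 2)) * |c + v * g| ^ (α - 2) =
      ck1 α * (|c| ^ (α / 2 - 1) * |g| ^ (α / 2 - 1)) := by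
  have hc' : 0 < |c| := abs_pos.2 hc
  have hg' : 0 < |g| := abs_pos.2 hg
  simp_rw [kernel_scale hc hg]
  rw [integral_const_mul, Measure.integral_comp_mul_left
    (fun w : ℝ => |w| ^ (-(α / 2)) * |1 + w| ^ (α - 2)), ← ck1, smul_eq_mul, inv_div, abs_div]
  rw [show α/2 - 1 = (α/2 - 2) + 1 by ring, Real.rpow_add_one hc'.ne',
    show (α/2 - 2) + 1 = α/2 - 1 by ring, Real.rpow_sub_one hg'.ne']
  field_simp

lemma min_kernel_bound {α t u : ℝ} (hα : 1 < α) (hα2 : α < 2) (ht : 0 < t) (hu : u ≠ 0) :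
    min t (2 / |u|) ≤ 2 * t ^ (1 - α / 2) * |u| ^ (-(α / 2)) := by
  have hu' : 0 < |u| := abs_pos.2 hu
  set m := min t (2 / |u|) with hm
  have hm0 : 0 < m := lt_min ht (by positivity)
  have h1 : m = m ^ (1 - α/2) * m ^ (α/2) := by
    rw [← Real.rpow_add hm0]; simp
  have h2 : m ^ (1 - α/2) ≤ t ^ (1 - α/2) := Real.rpow_le_rpow hm0.le (min_le_left _ _) (by linarith)
  have h3 : m ^ (α/2) ≤ (2 / |u|) ^ (α/2) := Real.rpow_le_rpow hm0.le (min_le_right _ _) (by linarith)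
  have h4 : (2 / |u|) ^ (α/2) = 2 ^ (α/2) * |u| ^ (-(α/2)) := by
    rw [Real.div_rpow (by norm_num) hu'.le, Real.rpow_neg hu'.le]; rfl
  have h5 : (2:ℝ) ^ (α/2) ≤ 2 := by
    calc (2:ℝ) ^ (α/2) ≤ 2 ^ (1:ℝ) := Real.rpow_le_rpow_of_exponent_le (by norm_num) (by linarith)
      _ = 2 := by simp
  calc m = m ^ (1 - α/2) * m ^ (α/2) := h1
    _ ≤ t ^ (1 - α/2) * (2 * |u| ^ (-(α/2))) := by
      gcongr
      exact h3.trans (h4.le.trans (by gcongr))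
    _ = _ := by ring

lemma integrable_ck2 {α : ℝ} (hα : 1 < α) (hα2 : α < 2) :
    Integrable (fun x : ℝ => min 1 (2 / |x|) * |x| ^ (α / 2 - 1)) := by
  have i1 := integrable_near (r := α/2 - 1) (by linarith) 1
  have i2 := (integrable_far (r := α/2 - 2) (by linarith) (show (0:ℝ) < 1 by norm_num)).const_mul 2
  refine (i1.add i2).mono' (by fun_prop) (Eventually.of_forall fun x => ?_)
  have nn : 0 ≤ min 1 (2 / |x|) := le_min (by norm_num) (by positivity)
  rw [Real.norm_of_nonneg (by positivity)]
  simp only [Pi.add_apply]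
  by_cases h : |x| ≤ 1
  · rw [if_pos h, if_neg (not_lt.2 h)]
    have := min_le_left 1 (2 / |x|)
    have p : 0 ≤ |x| ^ (α/2 - 1) := by positivity
    nlinarith
  · push Not at h
    rw [if_neg (not_le.2 h), if_pos h]
    have := min_le_right 1 (2 / |x|)
    have e : |x| ^ (α/2 - 2) = |x| ^ (α/2 - 1) / |x| := by
      rw [← Real.rpow_sub_one (by linarith : |x| ≠ 0)]; congr 1; ring
    rw [e]
    have p : 0 ≤ |x| ^ (α/2 - 1) := by positivity
    calc _ ≤ 2 / |x| * |x| ^ (α/2 - 1) := by gcongr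
      _ = _ := by ring

noncomputable def ck2 (α : ℝ) : ℝ := ∫ x : ℝ, min 1 (2 / |x|) * |x| ^ (α / 2 - 1)

lemma ck2_scale {α t : ℝ} (ht : 0 < t) (u : ℝ) :
    min t (2 / |u|) * |u| ^ (α / 2 - 1) =
      t ^ (2 - α / 2) * (min 1 (2 / |t * u|) * |t * u| ^ (α / 2 - 1)) := by
  rw [abs_mul, abs_of_pos ht, Real.mul_rpow ht.le (abs_nonneg _)]
  have e1 : t * min 1 (2 / (t * |u|)) = min t (2 / |u|) := by
    rw [mul_min_of_nonneg _ _ ht.le]; congr 1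
    · ring
    · field_simp
  have e2 : t ^ (2 - α/2) * t ^ (α/2 - 1) = t := by
    rw [← Real.rpow_add ht]; ring_nf; simp
  rw [← e1]
  linear_combination (-min 1 (2 / (t * |u|)) * |u| ^ (α / 2 - 1)) * e2

lemma integrable_ck2' {α t : ℝ} (hα : 1 < α) (hα2 : α < 2) (ht : 0 < t) :
    Integrable (fun u : ℝ => min t (2 / |u|) * |u| ^ (α / 2 - 1)) := by
  simp_rw [ck2_scale ht]
  exact ((integrable_comp_mul_left_iff (fun x : ℝ => min 1 (2 / |x|) * |x| ^ (α / 2 - 1))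
    ht.ne').2 (integrable_ck2 hα hα2)).const_mul _

lemma integral_ck2 {α t : ℝ} (ht : 0 < t) :
    ∫ u : ℝ, min t (2 / |u|) * |u| ^ (α / 2 - 1) = ck2 α * t ^ (1 - α / 2) := by
  simp_rw [ck2_scale ht]
  rw [integral_const_mul, Measure.integral_comp_mul_left
    (fun x : ℝ => min 1 (2 / |x|) * |x| ^ (α / 2 - 1)), ← ck2, smul_eq_mul, abs_of_pos (by positivity)]
  rw [show 2 - α/2 = (1 - α/2) + 1 by ring, Real.rpow_add_one ht.ne']
  field_simp

lemma ck2_nonneg (α : ℝ) : 0 ≤ ck2 α := integral_nonneg fun x => by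
  have nn : 0 ≤ min 1 (2 / |x|) := le_min (by norm_num) (by positivity)
  positivity
end part1

section part2
noncomputable def NN (α : ℝ) {S : Type*} [MeasurableSpace S] (μ : Measure S) (f g : S → ℝ) (u v : ℝ) : ℝ :=
  ∫ s, |u * f s + v * g s| ^ α ∂μ

noncomputable def PP (α : ℝ) {S : Type*} [MeasurableSpace S] (μ : Measure S) (f g : S → ℝ) (u v : ℝ) : ℝ :=
  ∫ s, sp α (u * f s + v * g s) * f s ∂μ

noncomputable def d1 (α : ℝ) {S : Type*} [MeasurableSpace S] (μ : Measure S) (f g : S → ℝ) : ℝ :=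
  ∫ s, |f s| ^ (α - 1) * |g s| ∂μ

noncomputable def d2 (α : ℝ) {S : Type*} [MeasurableSpace S] (μ : Measure S) (f g : S → ℝ) : ℝ :=
  ∫ s, |f s * g s| ^ (α / 2) ∂μ

structure SPair (α ε M : ℝ) {S : Type*} [MeasurableSpace S] (μ : Measure S) (f g : S → ℝ) : Prop where
  h1 : 1 < α
  h2 : α < 2
  he : 0 < ε
  mf : Measurable f
  mg : Measurable g
  intf : Integrable (fun s => |f s| ^ α) μ
  intg : Integrable (fun s => |g s| ^ α) μ
  Mf : ∫ s, |f s| ^ α ∂μ ≤ M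
  Mg : ∫ s, |g s| ^ α ∂μ ≤ M
  low : ∀ u v, ε * (|u| ^ α + |v| ^ α) ≤ NN α μ f g u v

variable {α ε M : ℝ} {S : Type*} [MeasurableSpace S] {μ : Measure S} {f g : S → ℝ}

lemma NN_swap (u v : ℝ) : NN α μ g f v u = NN α μ f g u v := by
  unfold NN; congr 1; funext s; rw [add_comm]

lemma SPair.swap (h : SPair α ε M μ f g) : SPair α ε M μ g f :=
  ⟨h.h1, h.h2, h.he, h.mg, h.mf, h.intg, h.intf, h.Mg, h.Mf, fun u v => by
    rw [NN_swap, add_comm]; exact h.low v u⟩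

lemma SPair.M_nonneg (h : SPair α ε M μ f g) : 0 ≤ M :=
  (integral_nonneg fun _ => by positivity).trans h.Mf

lemma SPair.dp (h : SPair α ε M μ f g) (s : S) :
    |f s| ^ (α - 1) * |g s| ≤ |f s| ^ α + |g s| ^ α := by
  have h1 := h.h1
  have e : ∀ x : ℝ, 0 ≤ x → x ^ (α - 1) * x = x ^ α := by
    intro x hx
    rcases hx.eq_or_lt with h0 | h0
    · rw [← h0, Real.zero_rpow (by linarith : α ≠ 0), mul_zero]
    · rw [← Real.rpow_add_one h0.ne']; congr 1; ring
  have nf : 0 ≤ |f s| ^ α := by positivity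
  have ng : 0 ≤ |g s| ^ α := by positivity
  rcases le_total (|f s|) (|g s|) with hh | hh
  · have : |f s| ^ (α - 1) ≤ |g s| ^ (α - 1) := Real.rpow_le_rpow (abs_nonneg _) hh (by linarith)
    calc _ ≤ |g s| ^ (α - 1) * |g s| := by gcongr
      _ = |g s| ^ α := e _ (abs_nonneg _)
      _ ≤ _ := by linarith
  · calc _ ≤ |f s| ^ (α - 1) * |f s| := by gcongr
      _ = |f s| ^ α := e _ (abs_nonneg _)
      _ ≤ _ := by linarith

lemma SPair.int_d1 (h : SPair α ε M μ f g) : Integrable (fun s => |f s| ^ (α - 1) * |g s|) μ := by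
  have := h.mf; have := h.mg
  refine (h.intf.add h.intg).mono' (Measurable.aestronglyMeasurable (by fun_prop)) (Eventually.of_forall fun s => ?_)
  rw [Real.norm_of_nonneg (by positivity)]; exact h.dp s

lemma d1_nonneg : 0 ≤ d1 α μ f g := integral_nonneg fun _ => by positivity
lemma d2_nonneg : 0 ≤ d2 α μ f g := integral_nonneg fun _ => by positivity

lemma SPair.d1_le (h : SPair α ε M μ f g) : d1 α μ f g ≤ 2 * M := by
  have : d1 α μ f g ≤ ∫ s, (|f s| ^ α + |g s| ^ α) ∂μ :=
    integral_mono h.int_d1 (h.intf.add h.intg) h.dp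
  rw [integral_add h.intf h.intg] at this
  linarith [h.Mf, h.Mg]

lemma SPair.int_d2 (h : SPair α ε M μ f g) : Integrable (fun s => |f s * g s| ^ (α / 2)) μ := by
  have := h.mf; have := h.mg
  have h1 := h.h1
  refine (h.intf.add h.intg).mono' (Measurable.aestronglyMeasurable (by fun_prop)) (Eventually.of_forall fun s => ?_)
  rw [Real.norm_of_nonneg (by positivity), abs_mul, Real.mul_rpow (abs_nonneg _) (abs_nonneg _)]
  have e : ∀ x : ℝ, 0 ≤ x → x ^ α = (x ^ (α / 2)) ^ 2 := by
    intro x hx; rw [← Real.rpow_natCast, ← Real.rpow_mul hx]; congr 1; push_cast; ring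
  simp only [Pi.add_apply]
  rw [e _ (abs_nonneg _), e _ (abs_nonneg _)]
  nlinarith [sq_nonneg (|f s| ^ (α/2) - |g s| ^ (α/2)), sq_nonneg (|f s| ^ (α/2)), sq_nonneg (|g s| ^ (α/2))]

lemma rpow_abs_add_le {α : ℝ} (h1 : 0 < α) (h2 : α < 2) (a b : ℝ) :
    |a + b| ^ α ≤ 4 * (|a| ^ α + |b| ^ α) := by
  have key : ∀ m : ℝ, 0 ≤ m → |a + b| ≤ 2 * m → |a + b| ^ α ≤ 4 * m ^ α := by
    intro m hm hab
    calc |a + b| ^ α ≤ (2 * m) ^ α := Real.rpow_le_rpow (abs_nonneg _) hab h1.le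
      _ = 2 ^ α * m ^ α := Real.mul_rpow (by norm_num) hm
      _ ≤ 4 * m ^ α := by
        gcongr
        calc (2:ℝ) ^ α ≤ 2 ^ (2:ℝ) := Real.rpow_le_rpow_of_exponent_le (by norm_num) h2.le
          _ = 4 := by norm_num
  have ha : 0 ≤ |a| ^ α := by positivity
  have hb : 0 ≤ |b| ^ α := by positivity
  have hab := abs_add_le a b
  rcases le_total |a| |b| with h | h
  · linarith [key |b| (abs_nonneg _) (by linarith)]
  · linarith [key |a| (abs_nonneg _) (by linarith)]

lemma SPair.lin_le (h : SPair α ε M μ f g) (u v : ℝ) (s : S) :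
    |u * f s + v * g s| ^ α ≤ 4 * (|u| ^ α * |f s| ^ α + |v| ^ α * |g s| ^ α) := by
  have := rpow_abs_add_le (by linarith [h.h1]) h.h2 (u * f s) (v * g s)
  rwa [abs_mul, abs_mul, Real.mul_rpow (abs_nonneg _) (abs_nonneg _),
    Real.mul_rpow (abs_nonneg _) (abs_nonneg _)] at this

lemma SPair.int_N (h : SPair α ε M μ f g) (u v : ℝ) :
    Integrable (fun s => |u * f s + v * g s| ^ α) μ := by
  have := h.mf; have := h.mg
  refine (((h.intf.const_mul (|u| ^ α)).add (h.intg.const_mul (|v| ^ α))).const_mul 4).mono'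
    (Measurable.aestronglyMeasurable (by fun_prop)) (Eventually.of_forall fun s => ?_)
  rw [Real.norm_of_nonneg (by positivity)]
  exact h.lin_le u v s

lemma SPair.ff (h : SPair α ε M μ f g) (s : S) : |f s| ^ (α - 1) * |f s| = |f s| ^ α := by
  have h1 := h.h1
  rcases (abs_nonneg (f s)).eq_or_lt with h0 | h0
  · rw [← h0, Real.zero_rpow (by linarith : α ≠ 0), mul_zero]
  · rw [← Real.rpow_add_one h0.ne']; congr 1; ring

lemma SPair.sp_le (h : SPair α ε M μ f g) (u v : ℝ) (s : S) :
    |sp α (u * f s + v * g s) * f s| ≤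
      |u| ^ (α - 1) * |f s| ^ α + |v| ^ (α - 1) * (|g s| ^ (α - 1) * |f s|) := by
  have h1 := h.h1; have h2 := h.h2
  rw [abs_mul, abs_sp h.h1]
  calc |u * f s + v * g s| ^ (α - 1) * |f s|
      ≤ (|u * f s| + |v * g s|) ^ (α - 1) * |f s| := by
        gcongr
        exact abs_add_le _ _
    _ ≤ (|u * f s| ^ (α - 1) + |v * g s| ^ (α - 1)) * |f s| := by
        gcongr
        exact Real.rpow_add_le_add_rpow (abs_nonneg _) (abs_nonneg _) (by linarith) (by linarith)
    _ = _ := by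
        rw [abs_mul, abs_mul, Real.mul_rpow (abs_nonneg _) (abs_nonneg _),
          Real.mul_rpow (abs_nonneg _) (abs_nonneg _), ← h.ff s]; ring

lemma SPair.int_P (h : SPair α ε M μ f g) (u v : ℝ) :
    Integrable (fun s => sp α (u * f s + v * g s) * f s) μ := by
  have := h.mf; have := h.mg; have := measurable_sp α
  refine ((h.intf.const_mul (|u| ^ (α-1))).add (h.swap.int_d1.const_mul (|v| ^ (α-1)))).mono'
    (Measurable.aestronglyMeasurable (by fun_prop)) (Eventually.of_forall fun s => h.sp_le u v s)

lemma SPair.P_le (h : SPair α ε M μ f g) (u v : ℝ) :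
    |PP α μ f g u v| ≤ 2 * M * (|u| ^ (α - 1) + |v| ^ (α - 1)) := by
  have i1 := h.intf.const_mul (|u| ^ (α-1))
  have i2 := h.swap.int_d1.const_mul (|v| ^ (α-1))
  have := norm_integral_le_of_norm_le (f := fun s => sp α (u * f s + v * g s) * f s)
    (i1.add i2) (Eventually.of_forall fun s => h.sp_le u v s)
  simp only [Pi.add_apply] at this
  rw [integral_add i1 i2, integral_const_mul, integral_const_mul] at this
  have a := h.Mf
  have b := h.swap.d1_le
  unfold d1 at b
  have hM := h.M_nonneg
  have pu : 0 ≤ |u| ^ (α - 1) := by positivity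
  have pv : 0 ≤ |v| ^ (α - 1) := by positivity
  refine this.trans ?_
  have := mul_le_mul_of_nonneg_left a pu
  have := mul_le_mul_of_nonneg_left b pv
  nlinarith

lemma SPair.P0_le (h : SPair α ε M μ f g) (u : ℝ) :
    |PP α μ f g u 0| ≤ 2 * M * |u| ^ (α - 1) := by
  have := h.P_le u 0
  rwa [abs_zero, Real.zero_rpow (by linarith [h.h1]), add_zero] at this

lemma SPair.P_sub (h : SPair α ε M μ f g) (u v : ℝ) :
    |PP α μ f g u v - PP α μ f g u 0| ≤ 2 * |v| ^ (α - 1) * d1 α μ g f := by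
  unfold PP d1
  rw [← integral_sub (h.int_P u v) (h.int_P u 0), ← integral_const_mul, ← Real.norm_eq_abs]
  refine norm_integral_le_of_norm_le (h.swap.int_d1.const_mul _) (Eventually.of_forall fun s => ?_)
  rw [← sub_mul, Real.norm_eq_abs, abs_mul]
  have := sp_holder h.h1 h.h2 (u * f s + v * g s) (u * f s + 0 * g s)
  rw [show u * f s + v * g s - (u * f s + 0 * g s) = v * g s by ring, abs_mul,
    Real.mul_rpow (abs_nonneg _) (abs_nonneg _)] at this
  calc _ ≤ 2 * (|v| ^ (α - 1) * |g s| ^ (α - 1)) * |f s| := by gcongr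
    _ = _ := by ring

lemma SPair.N_sub (h : SPair α ε M μ f g) (u v : ℝ) :
    |NN α μ f g u v - NN α μ f g u 0 - NN α μ f g 0 v| ≤
      4 * |u| ^ (α - 1) * |v| * d1 α μ f g := by
  have h1 := h.h1; have h2 := h.h2
  unfold NN d1
  have hi : Integrable (fun s => |u * f s + v * g s| ^ α - |u * f s + 0 * g s| ^ α) μ :=
    (h.int_N u v).sub (h.int_N u 0)
  rw [← integral_sub (h.int_N u v) (h.int_N u 0),
    ← integral_sub hi (h.int_N 0 v), ← integral_const_mul, ← Real.norm_eq_abs]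
  refine norm_integral_le_of_norm_le (h.int_d1.const_mul _) (Eventually.of_forall fun s => ?_)
  have := abs_rpow_add_sub h1 h2 (u * f s) (v * g s)
  simp only [zero_mul, add_zero, zero_add, Real.norm_eq_abs]
  refine this.trans ?_
  rw [abs_mul, abs_mul, Real.mul_rpow (abs_nonneg _) (abs_nonneg _)]
  have : 0 ≤ |u| ^ (α - 1) * |f s| ^ (α - 1) * (|v| * |g s|) := by positivity
  nlinarith

lemma SPair.hasDeriv_N (h : SPair α ε M μ f g) (u v : ℝ) :
    HasDerivAt (fun u => NN α μ f g u v) (α * PP α μ f g u v) u := by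
  have := h.mf; have := h.mg; have := measurable_sp α
  have h1 := h.h1; have h2 := h.h2
  have i1 := h.intf.const_mul (α * (|u| + 1) ^ (α-1))
  have i2 := h.swap.int_d1.const_mul (α * |v| ^ (α-1))
  have := hasDerivAt_integral_of_dominated_loc_of_deriv_le (μ := μ) (𝕜 := ℝ)
    (F := fun u s => |u * f s + v * g s| ^ α)
    (F' := fun u s => α * (sp α (u * f s + v * g s) * f s)) (x₀ := u) (s := Metric.ball u 1)
    (bound := fun s => α * (|u| + 1) ^ (α-1) * |f s| ^ α + α * |v| ^ (α - 1) * (|g s| ^ (α - 1) * |f s|))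
    (Metric.ball_mem_nhds _ one_pos)
    (Eventually.of_forall fun x => Measurable.aestronglyMeasurable (by fun_prop)) (h.int_N u v)
    (Measurable.aestronglyMeasurable (by fun_prop))
    (Eventually.of_forall fun s x hx => ?_) (i1.add i2) (Eventually.of_forall fun s x hx => ?_)
  · have h3 := this.2
    rw [integral_const_mul] at h3
    exact h3
  · rw [norm_mul, Real.norm_eq_abs, Real.norm_eq_abs, abs_of_pos (by linarith : 0 < α)]
    have hx' : |x| ≤ |u| + 1 := by
      rw [Metric.mem_ball, Real.dist_eq] at hx
      have := abs_sub_abs_le_abs_sub x u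
      linarith
    calc _ ≤ α * (|x| ^ (α - 1) * |f s| ^ α + |v| ^ (α - 1) * (|g s| ^ (α - 1) * |f s|)) := by
          gcongr; exact h.sp_le x v s
      _ ≤ α * ((|u| + 1) ^ (α - 1) * |f s| ^ α + |v| ^ (α - 1) * (|g s| ^ (α - 1) * |f s|)) := by
          gcongr
      _ = _ := by ring
  · have h3 := (hasDerivAt_absrpow h1 (x * f s + v * g s)).comp x
      (((hasDerivAt_id x).mul_const (f s)).add_const (v * g s))
    refine h3.congr_deriv ?_
    simp; ring

lemma SPair.hasDeriv_N2 (h : SPair α ε M μ f g) (u v : ℝ) :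
    HasDerivAt (fun v => NN α μ f g u v) (α * PP α μ g f v u) v := by
  have := h.swap.hasDeriv_N v u
  simpa only [NN_swap] using this

lemma SPair.meas_N [SFinite μ] (h : SPair α ε M μ f g) :
    Measurable (fun x : ℝ × ℝ => NN α μ f g x.1 x.2) := by
  have := h.mf; have := h.mg
  have hm : StronglyMeasurable (Function.uncurry
    (fun (x : ℝ × ℝ) (s : S) => |x.1 * f s + x.2 * g s| ^ α)) := by
    apply Measurable.stronglyMeasurable
    unfold Function.uncurry; fun_prop
  exact (hm.integral_prod_right (ν := μ)).measurable

lemma SPair.meas_P [SFinite μ] (h : SPair α ε M μ f g) :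
    Measurable (fun x : ℝ × ℝ => PP α μ f g x.1 x.2) := by
  have := h.mf; have := h.mg; have := measurable_sp α
  have hm : StronglyMeasurable (Function.uncurry
    (fun (x : ℝ × ℝ) (s : S) => sp α (x.1 * f s + x.2 * g s) * f s)) := by
    apply Measurable.stronglyMeasurable
    unfold Function.uncurry; fun_prop
  exact (hm.integral_prod_right (ν := μ)).measurable

/-- polynomial times stretched exponential weight -/
noncomputable def ww (α ε x : ℝ) : ℝ := (1 + |x| ^ (4:ℝ)) * rexp (-ε * |x| ^ α)

lemma ww_nonneg (α ε x : ℝ) : 0 ≤ ww α ε x := by unfold ww; positivity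

lemma rpow_le_W {q x : ℝ} (h0 : 0 ≤ q) (h4 : q ≤ 4) : |x| ^ q ≤ 1 + |x| ^ (4:ℝ) := by
  have p : 0 ≤ |x| ^ (4:ℝ) := by positivity
  rcases le_total |x| 1 with h | h
  · linarith [Real.rpow_le_one (abs_nonneg x) h h0]
  · linarith [Real.rpow_le_rpow_of_exponent_le h h4]

lemma SPair.exp_N (h : SPair α ε M μ f g) (u v : ℝ) :
    rexp (-NN α μ f g u v) ≤ rexp (-ε * |u| ^ α) * rexp (-ε * |v| ^ α) := by
  rw [← Real.exp_add]
  apply Real.exp_le_exp.2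
  linarith [h.low u v]

lemma SPair.exp_N0 (h : SPair α ε M μ f g) (u v : ℝ) :
    rexp (-NN α μ f g u 0 - NN α μ f g 0 v) ≤ rexp (-ε * |u| ^ α) * rexp (-ε * |v| ^ α) := by
  rw [← Real.exp_add]
  apply Real.exp_le_exp.2
  have a := h.low u 0
  have b := h.low 0 v
  rw [abs_zero, Real.zero_rpow (by linarith [h.h1])] at a b
  linarith

lemma exp_sub_abs_le {a b E : ℝ} (ha : rexp a ≤ E) (hb : rexp b ≤ E) :
    |rexp a - rexp b| ≤ |a - b| * E := by
  have key : ∀ x y : ℝ, x ≤ y → rexp y ≤ E → |rexp x - rexp y| ≤ |x - y| * E := by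
    intro x y hxy hy
    have h1 := Real.add_one_le_exp (x - y)
    have h2 : rexp x = rexp (x - y) * rexp y := by rw [← Real.exp_add]; congr 1; ring
    have h3 : rexp x ≤ rexp y := Real.exp_le_exp.2 hxy
    rw [abs_sub_comm, abs_of_nonneg (by linarith), abs_sub_comm x y, abs_of_nonneg (by linarith), h2]
    have := Real.exp_pos y
    nlinarith
  rcases le_total a b with h | h
  · exact key a b h hb
  · rw [abs_sub_comm, abs_sub_comm a b]; exact key b a h ha

/-- smooth part of the mixed derivative -/
noncomputable def GG (α : ℝ) {S : Type*} [MeasurableSpace S] (μ : Measure S) (f g : S → ℝ) (u v : ℝ) : ℝ :=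
  PP α μ f g u v * PP α μ g f v u * rexp (-NN α μ f g u v) -
    PP α μ f g u 0 * PP α μ g f v 0 * rexp (-NN α μ f g u 0 - NN α μ f g 0 v)

lemma GG_arith {P Q P0 Q0 e e0 d d' a b Wu Wv E M v : ℝ} (he' : 0 < e) (he : e ≤ E)
    (hP : |P - P0| ≤ 2 * b * d') (hQ1 : |Q| ≤ 2 * M * (b + a)) (hP0 : |P0| ≤ 2 * M * a)
    (hQ : |Q - Q0| ≤ 2 * a * d) (hQ0 : |Q0| ≤ 2 * M * b) (hee : |e - e0| ≤ 4 * a * v * d * E)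
    (hd : 0 ≤ d) (hd' : 0 ≤ d') (hM : 0 ≤ M) (ha0 : 0 ≤ a) (hb0 : 0 ≤ b) (hv : 0 ≤ v)
    (Wu1 : 1 ≤ Wu) (Wv1 : 1 ≤ Wv) (a1 : a ≤ Wu) (b1 : b ≤ Wv) (a2 : a * a ≤ Wu) (b2 : b * b ≤ Wv)
    (b3 : b * v ≤ Wv) :
    |(P - P0) * Q * e + P0 * (Q - Q0) * e + P0 * Q0 * (e - e0)| ≤
      (12 * M + 16 * M ^ 2) * (d + d') * (Wu * Wv * E) := by
  have hE0 : 0 < E := he'.trans_le he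
  have m1 : a * b ≤ Wu * Wv := by gcongr
  have m2 : b * b ≤ Wu * Wv := by nlinarith
  have m3 : a * a ≤ Wu * Wv := by nlinarith
  have m4 : (a * a) * (b * v) ≤ Wu * Wv := by gcongr
  have T1 : |(P - P0) * Q * e| ≤ 8 * M * d' * (Wu * Wv) * E := by
    rw [abs_mul, abs_mul, abs_of_pos he']
    calc |P - P0| * |Q| * e ≤ (2 * b * d') * (2 * M * (b + a)) * E := by gcongr
      _ = 4 * M * d' * (b * b + a * b) * E := by ring
      _ ≤ 4 * M * d' * (Wu * Wv + Wu * Wv) * E := by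
        apply mul_le_mul_of_nonneg_right _ hE0.le
        exact mul_le_mul_of_nonneg_left (by linarith) (by positivity)
      _ = _ := by ring
  have T2 : |P0 * (Q - Q0) * e| ≤ 4 * M * d * (Wu * Wv) * E := by
    rw [abs_mul, abs_mul, abs_of_pos he']
    calc |P0| * |Q - Q0| * e ≤ (2 * M * a) * (2 * a * d) * E := by gcongr
      _ = 4 * M * d * (a * a) * E := by ring
      _ ≤ 4 * M * d * (Wu * Wv) * E := by
        apply mul_le_mul_of_nonneg_right _ hE0.le
        exact mul_le_mul_of_nonneg_left (by linarith) (by positivity)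
  have T3 : |P0 * Q0 * (e - e0)| ≤ 16 * M ^ 2 * d * (Wu * Wv) * E := by
    rw [abs_mul, abs_mul]
    calc |P0| * |Q0| * |e - e0| ≤ (2 * M * a) * (2 * M * b) * (4 * a * v * d * E) := by gcongr
      _ = 16 * M ^ 2 * d * ((a * a) * (b * v)) * E := by ring
      _ ≤ 16 * M ^ 2 * d * (Wu * Wv) * E := by
        apply mul_le_mul_of_nonneg_right _ hE0.le
        exact mul_le_mul_of_nonneg_left (by linarith) (by positivity)
  have Z : 0 ≤ (Wu * Wv) * E := by positivity
  calc _ ≤ |(P - P0) * Q * e| + |P0 * (Q - Q0) * e| + |P0 * Q0 * (e - e0)| := abs_add_three _ _ _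
    _ ≤ 8 * M * d' * (Wu * Wv) * E + 4 * M * d * (Wu * Wv) * E + 16 * M ^ 2 * d * (Wu * Wv) * E := by
      linarith
    _ = (8 * M * d' + 4 * M * d + 16 * M ^ 2 * d) * ((Wu * Wv) * E) := by ring
    _ ≤ ((12 * M + 16 * M ^ 2) * (d + d')) * ((Wu * Wv) * E) := by
      apply mul_le_mul_of_nonneg_right _ Z
      nlinarith [mul_nonneg hM hd, mul_nonneg hM hd', mul_nonneg (sq_nonneg M) hd']
    _ = _ := by ring

lemma SPair.GG_le (h : SPair α ε M μ f g) (u v : ℝ) :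
    |GG α μ f g u v| ≤ (12 * M + 16 * M ^ 2) * (d1 α μ f g + d1 α μ g f) * (ww α ε u * ww α ε v) := by
  have h1 := h.h1; have h2 := h.h2
  set E := rexp (-ε * |u| ^ α) * rexp (-ε * |v| ^ α) with hE
  have hE0 : 0 < E := by positivity
  set P := PP α μ f g u v
  set Q := PP α μ g f v u
  set P0 := PP α μ f g u 0
  set Q0 := PP α μ g f v 0
  set e := rexp (-NN α μ f g u v)
  set e0 := rexp (-NN α μ f g u 0 - NN α μ f g 0 v)
  have he : e ≤ E := h.exp_N u v
  have he' : 0 < e := Real.exp_pos _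
  have he0 : e0 ≤ E := h.exp_N0 u v
  have hee : |e - e0| ≤ 4 * |u| ^ (α - 1) * |v| * d1 α μ f g * E := by
    refine (exp_sub_abs_le he he0).trans ?_
    gcongr
    have := h.N_sub u v
    rw [← abs_neg] at this
    convert this using 1; congr 1; ring
  have hP : |P - P0| ≤ 2 * |v| ^ (α - 1) * d1 α μ g f := h.P_sub u v
  have hQ : |Q - Q0| ≤ 2 * |u| ^ (α - 1) * d1 α μ f g := h.swap.P_sub v u
  have hQ1 : |Q| ≤ 2 * M * (|v| ^ (α - 1) + |u| ^ (α - 1)) := h.swap.P_le v u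
  have hP0 : |P0| ≤ 2 * M * |u| ^ (α - 1) := h.P0_le u
  have hQ0 : |Q0| ≤ 2 * M * |v| ^ (α - 1) := h.swap.P0_le v
  set d := d1 α μ f g
  set d' := d1 α μ g f
  have hd : 0 ≤ d := d1_nonneg
  have hd' : 0 ≤ d' := d1_nonneg
  have hM := h.M_nonneg
  set a := |u| ^ (α - 1) with ha
  set b := |v| ^ (α - 1) with hb
  have ha0 : 0 ≤ a := by positivity
  have hb0 : 0 ≤ b := by positivity
  set Wu := 1 + |u| ^ (4:ℝ)
  set Wv := 1 + |v| ^ (4:ℝ)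
  have Wu1 : 1 ≤ Wu := by have : 0 ≤ |u| ^ (4:ℝ) := by positivity
                          simp only [Wu]; linarith
  have Wv1 : 1 ≤ Wv := by have : 0 ≤ |v| ^ (4:ℝ) := by positivity
                          simp only [Wv]; linarith
  have a1 : a ≤ Wu := rpow_le_W (by linarith) (by linarith)
  have b1 : b ≤ Wv := rpow_le_W (by linarith) (by linarith)
  have sq : ∀ x : ℝ, |x| ^ (α - 1) * |x| ^ (α - 1) = |x| ^ (2 * (α - 1)) := by
    intro x; rw [← Real.rpow_add_of_nonneg (abs_nonneg _) (by linarith) (by linarith)]; congr 1; ring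
  have a2 : a * a ≤ Wu := by rw [ha, sq]; exact rpow_le_W (by linarith) (by linarith)
  have b2 : b * b ≤ Wv := by rw [hb, sq]; exact rpow_le_W (by linarith) (by linarith)
  have b3 : b * |v| ≤ Wv := by
    have : b * |v| = |v| ^ α := by
      rw [hb]
      conv_lhs => rw [← Real.rpow_one |v|, ← Real.rpow_mul (abs_nonneg _), one_mul]
      rw [← Real.rpow_add_of_nonneg (abs_nonneg _) (by linarith) (by linarith)]; congr 1; ring
    rw [this]; exact rpow_le_W (by linarith) (by linarith)
  have split : GG α μ f g u v = (P - P0) * Q * e + P0 * (Q - Q0) * e + P0 * Q0 * (e - e0) := by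
    simp only [GG]; ring
  have hWW : ww α ε u * ww α ε v = Wu * Wv * E := by simp only [ww, hE, Wu, Wv]; ring
  rw [split, hWW]
  clear_value P Q P0 Q0 e e0 d d' a b Wu Wv E
  exact GG_arith he' he hP hQ1 hP0 hQ hQ0 hee hd hd' hM ha0 hb0 (abs_nonneg v) Wu1 Wv1 a1 b1 a2 b2 b3
end part2

section part3
structure TF (t : ℝ) (A A' : ℝ → ℂ) : Prop where
  ht : 0 < t
  der : ∀ u, HasDerivAt A (A' u) u
  int : Integrable A
  int' : Integrable A'
  le : ∀ u, ‖A u‖ ≤ t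
  le' : ∀ u, u ≠ 0 → ‖A u‖ ≤ 2 / |u|

lemma TF.cont {t : ℝ} {A A' : ℝ → ℂ} (h : TF t A A') : Continuous A :=
  continuous_iff_continuousAt.2 fun v => (h.der v).continuousAt

lemma TF.le_min {t : ℝ} {A A' : ℝ → ℂ} (h : TF t A A') {u : ℝ} (hu : u ≠ 0) :
    ‖A u‖ ≤ min t (2 / |u|) := _root_.le_min (h.le u) (h.le' u hu)

lemma TF.le_pow {α : ℝ} (h1 : 1 < α) (h2 : α < 2) {t : ℝ} {A A' : ℝ → ℂ} (h : TF t A A') {u : ℝ}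
    (hu : u ≠ 0) : ‖A u‖ ≤ 2 * t ^ (1 - α / 2) * |u| ^ (-(α / 2)) :=
  (h.le_min hu).trans (min_kernel_bound h1 h2 h.ht hu)

lemma ae_ne_zero : ∀ᵐ u : ℝ, u ≠ 0 := by
  have := Measure.ae_ne (volume : Measure ℝ) (0:ℝ)
  exact this

lemma measurable_ww (α ε : ℝ) : Measurable (ww α ε) := by
  unfold ww; fun_prop

lemma ww_bdd {α ε : ℝ} (h1 : 1 < α) (he : 0 < ε) : ∃ K, 0 < K ∧ ∀ x, ww α ε x ≤ K := by
  refine ⟨2 + 24 / ε ^ 4, by positivity, fun x => ?_⟩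
  unfold ww
  have hE1 : rexp (-ε * |x| ^ α) ≤ 1 := by
    apply Real.exp_le_one_iff.2
    have : 0 ≤ ε * |x| ^ α := by positivity
    linarith
  have hE0 := Real.exp_pos (-ε * |x| ^ α)
  have h4 : |x| ^ (4:ℝ) = |x| ^ 4 := by
    rw [show (4:ℝ) = ((4:ℕ):ℝ) by norm_num, Real.rpow_natCast]
  rw [h4]
  rcases le_total |x| 1 with h | h
  · have : |x| ^ 4 ≤ 1 := pow_le_one₀ (abs_nonneg _) h
    have p : 0 ≤ |x| ^ 4 := by positivity
    have : 0 < 24 / ε ^ 4 := by positivity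
    nlinarith
  · have h5 : |x| ≤ |x| ^ α := by
      conv_lhs => rw [← Real.rpow_one |x|]
      exact Real.rpow_le_rpow_of_exponent_le h h1.le
    set z := ε * |x| ^ α with hz
    have hz0 : 0 ≤ z := by positivity
    have h6 : z ^ 4 / 24 ≤ rexp z := by
      have := Real.pow_div_factorial_le_exp z hz0 4
      simpa [Nat.factorial] using this
    have h7 : ε ^ 4 * |x| ^ 4 ≤ z ^ 4 := by
      rw [← mul_pow, hz]; gcongr
    have h8 : rexp (-ε * |x| ^ α) = (rexp z)⁻¹ := by rw [← Real.exp_neg]; congr 1; rw [hz]; ring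
    have h9 : |x| ^ 4 ≤ 24 / ε ^ 4 * rexp z := by
      rw [div_mul_eq_mul_div, le_div_iff₀ (by positivity)]; linarith
    have h10 : |x| ^ 4 * (rexp z)⁻¹ ≤ 24 / ε ^ 4 := by
      rw [← div_eq_mul_inv, div_le_iff₀ (Real.exp_pos _)]; exact h9
    rw [h8] at hE1 ⊢
    linarith

lemma integrable_Iw {α ε : ℝ} (h1 : 1 < α) (h2 : α < 2) (he : 0 < ε) :
    Integrable (fun x => |x| ^ (-(α / 2)) * ww α ε x) := by
  have i1 := integrable_abs_rpow_exp (s := -(α/2)) (p := α) (b := ε) (by linarith) (by linarith) he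
  have i2 := integrable_abs_rpow_exp (s := -(α/2) + 4) (p := α) (b := ε) (by linarith) (by linarith) he
  refine (i1.add i2).congr ?_
  filter_upwards [ae_ne_zero] with x hx
  simp only [Pi.add_apply, ww]
  rw [Real.rpow_add (abs_pos.2 hx)]
  ring

noncomputable def Iw (α ε : ℝ) : ℝ := ∫ x, |x| ^ (-(α / 2)) * ww α ε x

lemma Iw_nonneg (α ε : ℝ) : 0 ≤ Iw α ε := integral_nonneg fun x => by
  have := ww_nonneg α ε x
  positivity

lemma int_mul_bdd {F : ℝ → ℂ} (hF : Integrable F) {r : ℝ → ℝ} (hr : Measurable r) {C : ℝ}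
    (hb : ∀ v, |r v| ≤ C) : Integrable (fun v => F v * (r v : ℂ)) := by
  refine (hF.norm.mul_const C).mono' ?_ (Eventually.of_forall fun v => ?_)
  · exact hF.1.mul (Complex.measurable_ofReal.comp hr).aestronglyMeasurable
  · rw [norm_mul, Complex.norm_real, Real.norm_eq_abs]
    exact mul_le_mul_of_nonneg_left (hb v) (norm_nonneg _)

variable {α ε M : ℝ} {S : Type*} [MeasurableSpace S] {μ : Measure S} {f g : S → ℝ}

noncomputable def UU (α : ℝ) {S : Type*} [MeasurableSpace S] (μ : Measure S) (f g : S → ℝ) (u v : ℝ) : ℝ :=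
  rexp (-NN α μ f g u v) - rexp (-NN α μ f g u 0 - NN α μ f g 0 v)

noncomputable def DD (α : ℝ) {S : Type*} [MeasurableSpace S] (μ : Measure S) (f g : S → ℝ) (u v : ℝ) : ℝ :=
  -α * (PP α μ f g u v * rexp (-NN α μ f g u v)) +
    α * (PP α μ f g u 0 * rexp (-NN α μ f g u 0 - NN α μ f g 0 v))

lemma SPair.hasDeriv_U (h : SPair α ε M μ f g) (u v : ℝ) :
    HasDerivAt (fun u => UU α μ f g u v) (DD α μ f g u v) u := by
  have a := (h.hasDeriv_N u v).neg.exp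
  have b := ((h.hasDeriv_N u 0).neg.sub_const (NN α μ f g 0 v)).exp
  refine (a.sub b).congr_deriv ?_
  simp only [DD, Pi.neg_apply]; ring

lemma W_ge_one (x : ℝ) : 1 ≤ 1 + |x| ^ (4:ℝ) := by
  have : 0 ≤ |x| ^ (4:ℝ) := by positivity
  linarith

/-- bounds: everything times the exponential is controlled by the weight -/
lemma SPair.e_le (h : SPair α ε M μ f g) (u v : ℝ) {X : ℝ}
    (hX : |X| ≤ (1 + |u| ^ (4:ℝ)) * (1 + |v| ^ (4:ℝ))) :
    |X * rexp (-NN α μ f g u v)| ≤ ww α ε u * ww α ε v := by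
  rw [abs_mul, Real.abs_exp]
  calc _ ≤ ((1 + |u| ^ (4:ℝ)) * (1 + |v| ^ (4:ℝ))) *
      (rexp (-ε * |u| ^ α) * rexp (-ε * |v| ^ α)) := by
        gcongr; exact h.exp_N u v
    _ = _ := by unfold ww; ring

lemma SPair.e0_le (h : SPair α ε M μ f g) (u v : ℝ) {X : ℝ}
    (hX : |X| ≤ (1 + |u| ^ (4:ℝ)) * (1 + |v| ^ (4:ℝ))) :
    |X * rexp (-NN α μ f g u 0 - NN α μ f g 0 v)| ≤ ww α ε u * ww α ε v := by
  rw [abs_mul, Real.abs_exp]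
  calc _ ≤ ((1 + |u| ^ (4:ℝ)) * (1 + |v| ^ (4:ℝ))) *
      (rexp (-ε * |u| ^ α) * rexp (-ε * |v| ^ α)) := by
        gcongr; exact h.exp_N0 u v
    _ = _ := by unfold ww; ring

lemma absorb {C X W E K : ℝ} (hC : 0 < C) (hE : ∀ Y, |Y| ≤ W → |Y * E| ≤ K) (hX : |X| ≤ C * W) :
    |X * E| ≤ C * K := by
  have := hE (X / C) (by rw [abs_div, abs_of_pos hC, div_le_iff₀ hC]; linarith)
  rw [div_mul_eq_mul_div, abs_div, abs_of_pos hC, div_le_iff₀ hC] at this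
  linarith

lemma SPair.P_le_W (h : SPair α ε M μ f g) (u v : ℝ) :
    |PP α μ f g u v| ≤ (4 * M + 1) * ((1 + |u| ^ (4:ℝ)) * (1 + |v| ^ (4:ℝ))) := by
  have h1 := h.h1; have h2 := h.h2; have hM := h.M_nonneg
  have hu := W_ge_one u; have hv := W_ge_one v
  have a : |u| ^ (α - 1) ≤ 1 + |u| ^ (4:ℝ) := rpow_le_W (by linarith) (by linarith)
  have b : |v| ^ (α - 1) ≤ 1 + |v| ^ (4:ℝ) := rpow_le_W (by linarith) (by linarith)
  have := h.P_le u v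
  set x := 1 + |u| ^ (4:ℝ)
  set y := 1 + |v| ^ (4:ℝ)
  have hxy : x + y ≤ 2 * (x * y) := by nlinarith
  have : 2 * M * (|u| ^ (α - 1) + |v| ^ (α - 1)) ≤ 2 * M * (2 * (x * y)) := by gcongr; linarith
  nlinarith

lemma sq_W {α x : ℝ} (h1 : 1 < α) (h2 : α < 2) :
    |x| ^ (α - 1) * |x| ^ (α - 1) ≤ 1 + |x| ^ (4:ℝ) := by
  rw [← Real.rpow_add_of_nonneg (abs_nonneg _) (by linarith) (by linarith)]
  exact rpow_le_W (by linarith) (by linarith)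

lemma SPair.PQ_le_W (h : SPair α ε M μ f g) (u v : ℝ) :
    |PP α μ f g u v * PP α μ g f v u| ≤
      (16 * M ^ 2 + 1) * ((1 + |u| ^ (4:ℝ)) * (1 + |v| ^ (4:ℝ))) := by
  have h1 := h.h1; have h2 := h.h2; have hM := h.M_nonneg
  have hu := W_ge_one u; have hv := W_ge_one v
  have a := sq_W (x := u) h1 h2
  have b := sq_W (x := v) h1 h2
  have hP := h.P_le u v
  have hQ := h.swap.P_le v u
  rw [abs_mul]
  set x := 1 + |u| ^ (4:ℝ)
  set y := 1 + |v| ^ (4:ℝ)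
  set p := |u| ^ (α - 1)
  set q := |v| ^ (α - 1)
  have hp : 0 ≤ p := by positivity
  have hq : 0 ≤ q := by positivity
  have hxy : x + y ≤ 2 * (x * y) := by nlinarith
  have hpq : (p + q) * (q + p) ≤ 4 * (x * y) := by nlinarith [sq_nonneg (p - q)]
  calc _ ≤ (2 * M * (p + q)) * (2 * M * (q + p)) := by gcongr
    _ = 4 * M ^ 2 * ((p + q) * (q + p)) := by ring
    _ ≤ 4 * M ^ 2 * (4 * (x * y)) := by gcongr
    _ ≤ _ := by nlinarith

lemma SPair.P0Q0_le_W (h : SPair α ε M μ f g) (u v : ℝ) :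
    |PP α μ f g u 0 * PP α μ g f v 0| ≤
      (16 * M ^ 2 + 1) * ((1 + |u| ^ (4:ℝ)) * (1 + |v| ^ (4:ℝ))) := by
  have h1 := h.h1; have h2 := h.h2; have hM := h.M_nonneg
  have hu := W_ge_one u; have hv := W_ge_one v
  have a : |u| ^ (α - 1) ≤ 1 + |u| ^ (4:ℝ) := rpow_le_W (by linarith) (by linarith)
  have b : |v| ^ (α - 1) ≤ 1 + |v| ^ (4:ℝ) := rpow_le_W (by linarith) (by linarith)
  have hP := h.P0_le u
  have hQ := h.swap.P0_le v
  rw [abs_mul]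
  set x := 1 + |u| ^ (4:ℝ)
  set y := 1 + |v| ^ (4:ℝ)
  calc _ ≤ (2 * M * x) * (2 * M * y) := by
        gcongr
        · exact hP.trans (by gcongr)
        · exact hQ.trans (by gcongr)
    _ = 4 * M ^ 2 * (x * y) := by ring
    _ ≤ _ := by nlinarith [mul_nonneg (sq_nonneg M) (by positivity : 0 ≤ x * y)]

lemma SPair.P0_le_W (h : SPair α ε M μ f g) (u v : ℝ) :
    |PP α μ f g u 0| ≤ (4 * M + 1) * ((1 + |u| ^ (4:ℝ)) * (1 + |v| ^ (4:ℝ))) := by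
  have h1 := h.h1; have h2 := h.h2; have hM := h.M_nonneg
  have hu := W_ge_one u; have hv := W_ge_one v
  have a : |u| ^ (α - 1) ≤ 1 + |u| ^ (4:ℝ) := rpow_le_W (by linarith) (by linarith)
  have hP := h.P0_le u
  set x := 1 + |u| ^ (4:ℝ)
  set y := 1 + |v| ^ (4:ℝ)
  have : x ≤ x * y := by nlinarith
  calc _ ≤ 2 * M * x := hP.trans (by gcongr)
    _ ≤ 2 * M * (x * y) := by gcongr
    _ ≤ _ := by nlinarith [mul_nonneg hM (by positivity : 0 ≤ x * y)]

lemma SPair.Qv_le_W (h : SPair α ε M μ f g) (u v : ℝ) :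
    |PP α μ g f v u * |v| ^ (α - 1)| ≤ (4 * M + 1) * ((1 + |u| ^ (4:ℝ)) * (1 + |v| ^ (4:ℝ))) := by
  have h1 := h.h1; have h2 := h.h2; have hM := h.M_nonneg
  have hu := W_ge_one u; have hv := W_ge_one v
  have a : |u| ^ (α - 1) ≤ 1 + |u| ^ (4:ℝ) := rpow_le_W (by linarith) (by linarith)
  have b' : |v| ^ (α - 1) ≤ 1 + |v| ^ (4:ℝ) := rpow_le_W (by linarith) (by linarith)
  have b := sq_W (x := v) h1 h2
  have hQ := h.swap.P_le v u
  rw [abs_mul, abs_of_nonneg (by positivity : 0 ≤ |v| ^ (α - 1))]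
  set x := 1 + |u| ^ (4:ℝ)
  set y := 1 + |v| ^ (4:ℝ)
  set p := |u| ^ (α - 1)
  set q := |v| ^ (α - 1)
  have hp : 0 ≤ p := by positivity
  have hq : 0 ≤ q := by positivity
  have e1 : q * q ≤ x * y := by nlinarith
  have e2 : p * q ≤ x * y := by gcongr
  calc _ ≤ 2 * M * (q + p) * q := by gcongr
    _ = 2 * M * (q * q + p * q) := by ring
    _ ≤ 2 * M * (x * y + x * y) := by gcongr
    _ ≤ _ := by nlinarith [mul_nonneg hM (by positivity : 0 ≤ x * y), (by positivity : 0 ≤ x * y)]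
end part3

section part4
variable {α ε M : ℝ} {S : Type*} [MeasurableSpace S] {μ : Measure S} {f g : S → ℝ}

lemma SPair.bdd_e (h : SPair α ε M μ f g) {c : ℝ} (hc : 0 < c) {X : ℝ → ℝ → ℝ}
    (hX : ∀ u v, |X u v| ≤ c * ((1 + |u| ^ (4:ℝ)) * (1 + |v| ^ (4:ℝ)))) :
    ∃ C, 0 < C ∧ ∀ u v, |X u v * rexp (-NN α μ f g u v)| ≤ C := by
  obtain ⟨K, hK, hw⟩ := ww_bdd (α := α) (ε := ε) h.h1 h.he
  refine ⟨c * (K * K), by positivity, fun u v => ?_⟩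
  refine (absorb hc (fun Y hY => h.e_le u v hY) (hX u v)).trans ?_
  have := ww_nonneg α ε u
  have := ww_nonneg α ε v
  gcongr <;> apply hw

lemma SPair.bdd_e0 (h : SPair α ε M μ f g) {c : ℝ} (hc : 0 < c) {X : ℝ → ℝ → ℝ}
    (hX : ∀ u v, |X u v| ≤ c * ((1 + |u| ^ (4:ℝ)) * (1 + |v| ^ (4:ℝ)))) :
    ∃ C, 0 < C ∧ ∀ u v, |X u v * rexp (-NN α μ f g u 0 - NN α μ f g 0 v)| ≤ C := by
  obtain ⟨K, hK, hw⟩ := ww_bdd (α := α) (ε := ε) h.h1 h.he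
  refine ⟨c * (K * K), by positivity, fun u v => ?_⟩
  refine (absorb hc (fun Y hY => h.e0_le u v hY) (hX u v)).trans ?_
  have := ww_nonneg α ε u
  have := ww_nonneg α ε v
  gcongr <;> apply hw

lemma NN_nonneg (u v : ℝ) : 0 ≤ NN α μ f g u v := integral_nonneg fun _ => by positivity

lemma exp_NN_le (u v : ℝ) : rexp (-NN α μ f g u v) ≤ 1 :=
  Real.exp_le_one_iff.2 (by linarith [NN_nonneg (α := α) (μ := μ) (f := f) (g := g) u v])

lemma exp_NN0_le (u v : ℝ) : rexp (-NN α μ f g u 0 - NN α μ f g 0 v) ≤ 1 :=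
  Real.exp_le_one_iff.2 (by
    have a := NN_nonneg (α := α) (μ := μ) (f := f) (g := g) u 0
    have b := NN_nonneg (α := α) (μ := μ) (f := f) (g := g) 0 v
    linarith)

lemma UU_le (u v : ℝ) : |UU α μ f g u v| ≤ 2 := by
  unfold UU
  have a := exp_NN_le (α := α) (μ := μ) (f := f) (g := g) u v
  have b := exp_NN0_le (α := α) (μ := μ) (f := f) (g := g) u v
  have a' := Real.exp_pos (-NN α μ f g u v)
  have b' := Real.exp_pos (-NN α μ f g u 0 - NN α μ f g 0 v)
  rw [abs_le]; constructor <;> linarith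

lemma SPair.DD_le (h : SPair α ε M μ f g) : ∃ C, 0 < C ∧ ∀ u v, |DD α μ f g u v| ≤ C := by
  have hM := h.M_nonneg
  have h1 := h.h1
  obtain ⟨C1, h1', H1⟩ := h.bdd_e (by positivity) h.P_le_W
  obtain ⟨C2, h2', H2⟩ := h.bdd_e0 (X := fun u v => PP α μ f g u 0) (by positivity) h.P0_le_W
  refine ⟨α * C1 + α * C2, by positivity, fun u v => ?_⟩
  unfold DD
  refine (abs_add_le _ _).trans ?_
  rw [abs_mul (-α), abs_mul α, abs_neg, abs_of_pos (by linarith : 0 < α)]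
  gcongr
  · exact H1 u v
  · exact H2 u v

lemma SPair.mN [SFinite μ] (h : SPair α ε M μ f g) {E : Type*} [MeasurableSpace E] {a b : E → ℝ}
    (ha : Measurable a) (hb : Measurable b) : Measurable (fun x => NN α μ f g (a x) (b x)) :=
  h.meas_N.comp (ha.prodMk hb)

lemma SPair.mP [SFinite μ] (h : SPair α ε M μ f g) {E : Type*} [MeasurableSpace E] {a b : E → ℝ}
    (ha : Measurable a) (hb : Measurable b) : Measurable (fun x => PP α μ f g (a x) (b x)) :=
  h.meas_P.comp (ha.prodMk hb)

lemma SPair.meas_DD [SFinite μ] (h : SPair α ε M μ f g) {E : Type*} [MeasurableSpace E] {a b : E → ℝ}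
    (ha : Measurable a) (hb : Measurable b) : Measurable (fun x => DD α μ f g (a x) (b x)) := by
  have h1 := h.mN ha hb
  have h2 := h.mN ha (measurable_const (a := (0:ℝ)))
  have h3 := h.mN (measurable_const (a := (0:ℝ))) hb
  have h4 := h.mP ha hb
  have h5 := h.mP ha (measurable_const (a := (0:ℝ)))
  unfold DD; fun_prop

lemma SPair.meas_UU [SFinite μ] (h : SPair α ε M μ f g) {E : Type*} [MeasurableSpace E] {a b : E → ℝ}
    (ha : Measurable a) (hb : Measurable b) : Measurable (fun x => UU α μ f g (a x) (b x)) := by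
  have h1 := h.mN ha hb
  have h2 := h.mN ha (measurable_const (a := (0:ℝ)))
  have h3 := h.mN (measurable_const (a := (0:ℝ))) hb
  unfold UU; fun_prop

lemma SPair.meas_GG [SFinite μ] (h : SPair α ε M μ f g) {E : Type*} [MeasurableSpace E] {a b : E → ℝ}
    (ha : Measurable a) (hb : Measurable b) : Measurable (fun x => GG α μ f g (a x) (b x)) := by
  have h1 := h.mN ha hb
  have h2 := h.mN ha (measurable_const (a := (0:ℝ)))
  have h3 := h.mN (measurable_const (a := (0:ℝ))) hb
  have h4 := h.mP ha hb
  have h5 := h.mP ha (measurable_const (a := (0:ℝ)))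
  have h6 := h.swap.mP hb ha
  have h7 := h.swap.mP hb (measurable_const (a := (0:ℝ)))
  unfold GG; fun_prop

lemma SPair.step1 [SFinite μ] (h : SPair α ε M μ f g) {t : ℝ} {A A' : ℝ → ℂ} (hA : TF t A A') (v : ℝ) :
    ∫ u, A' u * (UU α μ f g u v : ℂ) = - ∫ u, A u * (DD α μ f g u v : ℂ) := by
  obtain ⟨C, hC, hD⟩ := h.DD_le
  have mD : Measurable (fun u => DD α μ f g u v) := h.meas_DD measurable_id measurable_const
  have mU : Measurable (fun u => UU α μ f g u v) := h.meas_UU measurable_id measurable_const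
  have := integral_mul_deriv_eq_deriv_mul_of_integrable (u := A) (u' := A')
    (v := fun u => (UU α μ f g u v : ℂ)) (v' := fun u => (DD α μ f g u v : ℂ))
    (fun x _ => hA.der x) (fun x _ => (h.hasDeriv_U x v).ofReal_comp)
    (int_mul_bdd hA.int mD (fun u => hD u v))
    (int_mul_bdd hA.int' mU (fun u => UU_le u v))
    (int_mul_bdd hA.int mU (fun u => UU_le u v))
  rw [this, neg_neg]

/-- the fibrewise bound -/
lemma SPair.fibre (h : SPair α ε M μ f g) {t u : ℝ} (ht : 0 < t) (hu : u ≠ 0) {H H' : ℝ → ℂ}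
    (hd : ∀ v, HasDerivAt H (H' v) v) (iH : Integrable H) (iH' : Integrable H')
    (iHv : Integrable (fun v => ‖H v‖ * |v| ^ (α - 1)))
    (iHv' : Integrable (fun v => ‖H' v‖ * |v| ^ (α - 1)))
    (hH : ∀ v, v ≠ 0 → ‖H v‖ ≤ 2 * t ^ (1 - α / 2) * |v| ^ (-(α / 2))) (s : S) :
    ‖∫ v, H' v * ((sp α (u * f s + v * g s) * f s : ℝ) : ℂ)‖ ≤
      ((α - 1) * (2 * t ^ (1 - α / 2)) * ck1 α * |u| ^ (α / 2 - 1)) * |f s * g s| ^ (α / 2) := by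
  have h1 := h.h1; have h2 := h.h2
  have hck := ck1_nonneg α
  have hα1 : 0 < α - 1 := by linarith
  have hR : 0 ≤ ((α - 1) * (2 * t ^ (1 - α / 2)) * ck1 α * |u| ^ (α / 2 - 1)) * |f s * g s| ^ (α / 2) := by
    positivity
  by_cases hf : f s = 0
  · simp only [hf, mul_zero, Complex.ofReal_zero, integral_zero, norm_zero]
    rw [hf] at hR; simpa using hR
  by_cases hg : g s = 0
  · simp only [hg, mul_zero, add_zero]
    rw [integral_mul_const, integral_eq_zero_of_hasDerivAt_of_integrable hd iH' iH]
    rw [hg] at hR; simpa using hR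
  have hc : u * f s ≠ 0 := mul_ne_zero hu hf
  have hspb : ∀ v, |sp α (u * f s + v * g s)| ≤ |u * f s| ^ (α - 1) + |v| ^ (α - 1) * |g s| ^ (α - 1) := by
    intro v
    rw [abs_sp h1, ← Real.mul_rpow (abs_nonneg _) (abs_nonneg _), ← abs_mul]
    calc _ ≤ (|u * f s| + |v * g s|) ^ (α - 1) := by gcongr; exact abs_add_le _ _
      _ ≤ _ := Real.rpow_add_le_add_rpow (abs_nonneg _) (abs_nonneg _) (by linarith) (by linarith)
  have msp := measurable_sp α
  have gen : ∀ F : ℝ → ℂ, Integrable F → Integrable (fun v => ‖F v‖ * |v| ^ (α - 1)) →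
      Integrable (fun v => F v * (sp α (u * f s + v * g s) : ℂ)) := by
    intro F i1 i2
    refine ((i1.norm.mul_const (|u * f s| ^ (α - 1))).add (i2.mul_const (|g s| ^ (α - 1)))).mono' ?_
      (Eventually.of_forall fun v => ?_)
    · refine i1.1.mul (Measurable.aestronglyMeasurable ?_)
      fun_prop
    · rw [norm_mul, Complex.norm_real, Real.norm_eq_abs]
      simp only [Pi.add_apply]
      have := mul_le_mul_of_nonneg_left (hspb v) (norm_nonneg (F v))
      linarith
  have ik := (integrable_kernel h1 h2 hc hg).const_mul (2 * t ^ (1 - α / 2))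
  have hbd : ∀ᵐ v : ℝ, ‖H v * ((|u * f s + v * g s| ^ (α - 2) : ℝ) : ℂ)‖ ≤
      (2 * t ^ (1 - α / 2)) * (|v| ^ (-(α / 2)) * |u * f s + v * g s| ^ (α - 2)) := by
    filter_upwards [ae_ne_zero] with v hv
    rw [norm_mul, Complex.norm_real, Real.norm_of_nonneg (by positivity), ← mul_assoc]
    gcongr
    exact hH v hv
  have i2 : Integrable (fun v => H v * ((|u * f s + v * g s| ^ (α - 2) : ℝ) : ℂ)) := by
    refine ik.mono' (iH.1.mul (Measurable.aestronglyMeasurable ?_)) hbd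
    fun_prop
  have key := ibp_sp h1 (u * f s) (g s) hg hd (gen H' iH' iHv') i2 (gen H iH iHv)
  have e : ∀ v, H' v * ((sp α (u * f s + v * g s) * f s : ℝ) : ℂ) =
      H' v * (sp α (u * f s + v * g s) : ℂ) * (f s : ℂ) := by
    intro v; push_cast; ring
  simp_rw [e]
  rw [integral_mul_const, key, norm_mul, norm_mul, norm_neg, Complex.norm_real, Complex.norm_real,
    Real.norm_eq_abs, Real.norm_eq_abs, abs_mul, abs_of_pos hα1]
  have nb := norm_integral_le_of_norm_le ik hbd
  rw [integral_const_mul, integral_kernel hc hg] at nb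
  have fp : 0 < |f s| := abs_pos.2 hf
  have gp : 0 < |g s| := abs_pos.2 hg
  calc _ ≤ (α - 1) * |g s| * (2 * t ^ (1 - α / 2) *
        (ck1 α * (|u * f s| ^ (α / 2 - 1) * |g s| ^ (α / 2 - 1)))) * |f s| := by gcongr
    _ = (α - 1) * (2 * t ^ (1 - α / 2)) * ck1 α * |u| ^ (α / 2 - 1) *
        ((|f s| ^ (α / 2 - 1) * |f s|) * (|g s| ^ (α / 2 - 1) * |g s|)) := by
      rw [abs_mul, Real.mul_rpow (abs_nonneg _) (abs_nonneg _)]; ring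
    _ = _ := by
      rw [← Real.rpow_add_one fp.ne', ← Real.rpow_add_one gp.ne', sub_add_cancel, abs_mul,
        Real.mul_rpow (abs_nonneg _) (abs_nonneg _)]

lemma SPair.fibre_int [SFinite μ] (h : SPair α ε M μ f g) {t u : ℝ} (ht : 0 < t) (hu : u ≠ 0) {H H' : ℝ → ℂ}
    (hd : ∀ v, HasDerivAt H (H' v) v) (iH : Integrable H) (iH' : Integrable H')
    (iHv : Integrable (fun v => ‖H v‖ * |v| ^ (α - 1)))
    (iHv' : Integrable (fun v => ‖H' v‖ * |v| ^ (α - 1)))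
    (hH : ∀ v, v ≠ 0 → ‖H v‖ ≤ 2 * t ^ (1 - α / 2) * |v| ^ (-(α / 2))) :
    ‖∫ v, H' v * (PP α μ f g u v : ℂ)‖ ≤
      ((α - 1) * (2 * t ^ (1 - α / 2)) * ck1 α * |u| ^ (α / 2 - 1)) * d2 α μ f g := by
  have mf := h.mf; have mg := h.mg; have msp := measurable_sp α
  have e : ∀ v, H' v * (PP α μ f g u v : ℂ) =
      ∫ s, H' v * ((sp α (u * f s + v * g s) * f s : ℝ) : ℂ) ∂μ := by
    intro v
    rw [integral_const_mul]; congr 1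
    unfold PP; rw [← integral_complex_ofReal]
  simp_rw [e]
  have hjoint : Integrable (Function.uncurry fun (v : ℝ) (s : S) =>
      H' v * ((sp α (u * f s + v * g s) * f s : ℝ) : ℂ)) (volume.prod μ) := by
    have a1 := (iH'.norm.mul_const (|u| ^ (α - 1))).mul_prod h.intf
    have a2 := iHv'.mul_prod h.swap.int_d1
    refine (a1.add a2).mono' ?_ (Eventually.of_forall fun z => ?_)
    · refine (iH'.1.comp_fst (ν := μ)).mul (Measurable.aestronglyMeasurable ?_)
      fun_prop
    · simp only [Function.uncurry, Pi.add_apply]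
      rw [norm_mul, Complex.norm_real, Real.norm_eq_abs]
      have := mul_le_mul_of_nonneg_left (h.sp_le u z.1 z.2) (norm_nonneg (H' z.1))
      linarith
  rw [integral_integral_swap hjoint]
  have := norm_integral_le_of_norm_le (h.int_d2.const_mul
    ((α - 1) * (2 * t ^ (1 - α / 2)) * ck1 α * |u| ^ (α / 2 - 1)))
    (Eventually.of_forall fun s => h.fibre ht hu hd iH iH' iHv iHv' hH s)
  rwa [integral_const_mul] at this
end part4

section part5
variable {α ε M : ℝ} {S : Type*} [MeasurableSpace S] {μ : Measure S} {f g : S → ℝ}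

/-- the coefficient of the smooth part -/
noncomputable def cM (α M : ℝ) : ℝ := α ^ 2 * (12 * M + 16 * M ^ 2)

lemma SPair.GG_bdd (h : SPair α ε M μ f g) : ∃ C, ∀ u v, |GG α μ f g u v| ≤ C := by
  obtain ⟨K, hK, hw⟩ := ww_bdd (α := α) (ε := ε) h.h1 h.he
  have hM := h.M_nonneg
  have hd := d1_nonneg (α := α) (μ := μ) (f := f) (g := g)
  have hd' := d1_nonneg (α := α) (μ := μ) (f := g) (g := f)
  refine ⟨(12 * M + 16 * M ^ 2) * (d1 α μ f g + d1 α μ g f) * (K * K), fun u v => ?_⟩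
  refine (h.GG_le u v).trans ?_
  have := ww_nonneg α ε u
  have := ww_nonneg α ε v
  gcongr <;> apply hw

lemma int_norm_mul_bdd {F : ℝ → ℂ} (hF : Integrable F) {r : ℝ → ℝ} (hr : Measurable r) {C : ℝ}
    (hb : ∀ v, |r v| ≤ C) : Integrable (fun v => ‖F v‖ * r v) := by
  refine (hF.norm.mul_const C).mono' ?_ (Eventually.of_forall fun v => ?_)
  · exact hF.1.norm.mul hr.aestronglyMeasurable
  · rw [norm_mul, norm_norm, Real.norm_eq_abs]
    exact mul_le_mul_of_nonneg_left (hb v) (norm_nonneg _)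

lemma TF.int_ww {t : ℝ} {A A' : ℝ → ℂ} (hA : TF t A A') (h1 : 1 < α) (h2 : α < 2) (he : 0 < ε) :
    Integrable (fun u => ‖A u‖ * ww α ε u) ∧
    ∫ u, ‖A u‖ * ww α ε u ≤ 2 * t ^ (1 - α / 2) * Iw α ε := by
  obtain ⟨K, hK, hw⟩ := ww_bdd (α := α) (ε := ε) h1 he
  have i1 : Integrable (fun u => ‖A u‖ * ww α ε u) :=
    int_norm_mul_bdd hA.int (measurable_ww α ε) (C := K) (fun v => by
      rw [abs_of_nonneg (ww_nonneg _ _ _)]; exact hw v)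
  refine ⟨i1, ?_⟩
  unfold Iw
  rw [← integral_const_mul]
  refine integral_mono_ae i1 ((integrable_Iw h1 h2 he).const_mul _) ?_
  filter_upwards [ae_ne_zero] with u hu
  rw [← mul_assoc]
  exact mul_le_mul_of_nonneg_right (hA.le_pow h1 h2 hu) (ww_nonneg _ _ _)

lemma TF.int_pow {t : ℝ} {A A' : ℝ → ℂ} (hA : TF t A A') (h1 : 1 < α) (h2 : α < 2) :
    Integrable (fun u => ‖A u‖ * |u| ^ (α / 2 - 1)) ∧
    ∫ u, ‖A u‖ * |u| ^ (α / 2 - 1) ≤ ck2 α * t ^ (1 - α / 2) := by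
  have hb : ∀ᵐ u : ℝ, ‖A u‖ * |u| ^ (α / 2 - 1) ≤ min t (2 / |u|) * |u| ^ (α / 2 - 1) := by
    filter_upwards [ae_ne_zero] with u hu
    gcongr
    exact hA.le_min hu
  have i0 := integrable_ck2' h1 h2 hA.ht
  have i1 : Integrable (fun u => ‖A u‖ * |u| ^ (α / 2 - 1)) := by
    refine i0.mono' (hA.int.1.norm.mul (Measurable.aestronglyMeasurable (by fun_prop))) ?_
    filter_upwards [hb] with u hu
    rwa [Real.norm_of_nonneg (by positivity)]
  refine ⟨i1, ?_⟩
  rw [← integral_ck2 hA.ht]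
  exact integral_mono_ae i1 i0 hb

lemma SPair.J_le [SFinite μ] (h : SPair α ε M μ f g) {t : ℝ} {B B' : ℝ → ℂ} (hB : TF t B B')
    {u : ℝ} (hu : u ≠ 0) :
    ‖∫ v, B' v * (DD α μ f g u v : ℂ)‖ ≤
      2 * t ^ (1 - α / 2) * (α * (α - 1) * ck1 α * d2 α μ f g * |u| ^ (α / 2 - 1) +
        cM α M * (d1 α μ f g + d1 α μ g f) * Iw α ε * ww α ε u) := by
  have h1 := h.h1; have h2 := h.h2; have hM := h.M_nonneg
  set P : ℝ → ℝ := fun v => PP α μ f g u v with hP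
  set Q : ℝ → ℝ := fun v => PP α μ g f v u with hQ
  set Q0 : ℝ → ℝ := fun v => PP α μ g f v 0 with hQ0
  set P0 : ℝ := PP α μ f g u 0 with hP0
  set e : ℝ → ℝ := fun v => rexp (-NN α μ f g u v) with he
  set e0 : ℝ → ℝ := fun v => rexp (-NN α μ f g u 0 - NN α μ f g 0 v) with he0
  have mP : Measurable P := h.mP measurable_const measurable_id
  have mQ : Measurable Q := h.swap.mP measurable_id measurable_const
  have mQ0 : Measurable Q0 := h.swap.mP measurable_id measurable_const
  have me : Measurable e := (h.mN measurable_const measurable_id).neg.exp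
  have me0 : Measurable e0 := ((h.mN measurable_const measurable_id).const_sub (-NN α μ f g u 0)).exp
  have mG : Measurable (fun v => GG α μ f g u v) := h.meas_GG measurable_const measurable_id
  -- bounds
  obtain ⟨c1, -, b1⟩ := h.bdd_e (by positivity) h.P_le_W
  obtain ⟨c2, -, b2⟩ := h.bdd_e (by positivity) h.PQ_le_W
  obtain ⟨c3, -, b3⟩ := h.bdd_e (c := 4 * M + 1) (X := fun u v => PP α μ g f v u) (by positivity)
    (fun u v => by have := h.swap.P_le_W v u; rwa [mul_comm (1 + |v| ^ (4:ℝ))] at this)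
  obtain ⟨c4, -, b4⟩ := h.bdd_e (by positivity) h.Qv_le_W
  obtain ⟨c5, -, b5⟩ := h.bdd_e (X := fun u v => |v| ^ (α - 1)) one_pos (fun u v => by
    have a : |v| ^ (α - 1) ≤ 1 + |v| ^ (4:ℝ) := rpow_le_W (by linarith) (by linarith)
    have := W_ge_one u
    rw [abs_of_nonneg (by positivity)]; nlinarith [W_ge_one v])
  obtain ⟨c6, -, b6⟩ := h.bdd_e0 (c := 4 * M + 1) (X := fun u v => PP α μ g f v 0) (by positivity)
    (fun u v => by have := h.swap.P0_le_W v u; rwa [mul_comm (1 + |v| ^ (4:ℝ))] at this)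
  obtain ⟨c7, b7⟩ := h.GG_bdd
  have be : ∀ v, |e v| ≤ 1 := fun v => by
    rw [abs_of_pos (Real.exp_pos _)]; exact exp_NN_le u v
  have be0 : ∀ v, |e0 v| ≤ 1 := fun v => by
    rw [abs_of_pos (Real.exp_pos _)]; exact exp_NN0_le u v
  -- derivatives
  have de : ∀ v, HasDerivAt e (-α * (Q v * e v)) v := fun v => by
    refine (h.hasDeriv_N2 u v).neg.exp.congr_deriv ?_
    simp only [hQ, he, Pi.neg_apply]; ring
  have de0 : ∀ v, HasDerivAt e0 (-α * (Q0 v * e0 v)) v := fun v => by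
    refine ((h.hasDeriv_N2 0 v).const_sub (-NN α μ f g u 0)).exp.congr_deriv ?_
    simp only [hQ0, he0]; ring
  set H : ℝ → ℂ := fun v => B v * (e v : ℂ) with hH
  set H' : ℝ → ℂ := fun v => B' v * (e v : ℂ) - α * (B v * ((Q v * e v : ℝ) : ℂ)) with hH'
  have dH : ∀ v, HasDerivAt H (H' v) v := fun v => by
    refine ((hB.der v).mul (de v).ofReal_comp).congr_deriv ?_
    simp only [hH']; push_cast; ring
  have iB'e : Integrable (fun v => B' v * (e v : ℂ)) := int_mul_bdd hB.int' me be
  have iBQe : Integrable (fun v => B v * ((Q v * e v : ℝ) : ℂ)) :=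
    int_mul_bdd hB.int (mQ.mul me) (fun v => b3 u v)
  have iH : Integrable H := int_mul_bdd hB.int me be
  have iH' : Integrable H' := iB'e.sub (iBQe.const_mul _)
  have iHv : Integrable (fun v => ‖H v‖ * |v| ^ (α - 1)) := by
    have := (int_norm_mul_bdd hB.int (r := fun v => |v| ^ (α - 1) * e v) (by fun_prop) (fun v => b5 u v))
    refine this.congr (Eventually.of_forall fun v => ?_)
    simp only [hH]
    rw [norm_mul, Complex.norm_real, Real.norm_of_nonneg (Real.exp_pos _).le]; ring
  have iHv' : Integrable (fun v => ‖H' v‖ * |v| ^ (α - 1)) := by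
    have i1 := int_mul_bdd hB.int' (r := fun v => |v| ^ (α - 1) * e v) (by fun_prop) (fun v => b5 u v)
    have i2 := int_mul_bdd hB.int (r := fun v => Q v * |v| ^ (α - 1) * e v) (by fun_prop) (fun v => b4 u v)
    refine (i1.sub (i2.const_mul (α : ℂ))).norm.congr (Eventually.of_forall fun v => ?_)
    simp only [hH', Pi.sub_apply]
    have n : (0:ℝ) ≤ |v| ^ (α - 1) := by positivity
    rw [show ‖B' v * (e v : ℂ) - α * (B v * ((Q v * e v : ℝ) : ℂ))‖ * |v| ^ (α - 1) =
      ‖(B' v * (e v : ℂ) - α * (B v * ((Q v * e v : ℝ) : ℂ))) * ((|v| ^ (α - 1) : ℝ) : ℂ)‖ by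
        rw [norm_mul _ ((|v| ^ (α - 1) : ℝ) : ℂ), Complex.norm_real, Real.norm_of_nonneg n]]
    congr 1; push_cast; ring
  have bH : ∀ v, v ≠ 0 → ‖H v‖ ≤ 2 * t ^ (1 - α / 2) * |v| ^ (-(α / 2)) := fun v hv => by
    simp only [hH]
    rw [norm_mul, Complex.norm_real, Real.norm_eq_abs]
    calc ‖B v‖ * |e v| ≤ ‖B v‖ * 1 := by gcongr; exact be v
      _ ≤ _ := by rw [mul_one]; exact hB.le_pow h1 h2 hv
  have key := h.fibre_int hB.ht hu dH iH iH' iHv iHv' bH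
  -- algebra
  have iB'Pe : Integrable (fun v => B' v * ((P v * e v : ℝ) : ℂ)) :=
    int_mul_bdd hB.int' (mP.mul me) (fun v => b1 u v)
  have iBPQe : Integrable (fun v => B v * ((P v * Q v * e v : ℝ) : ℂ)) :=
    int_mul_bdd hB.int ((mP.mul mQ).mul me) (fun v => b2 u v)
  have iB'e0 : Integrable (fun v => B' v * (e0 v : ℂ)) := int_mul_bdd hB.int' me0 be0
  have iBe0 : Integrable (fun v => B v * (e0 v : ℂ)) := int_mul_bdd hB.int me0 be0
  have iBQ0e0 : Integrable (fun v => B v * ((Q0 v * e0 v : ℝ) : ℂ)) :=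
    int_mul_bdd hB.int (mQ0.mul me0) (fun v => b6 u v)
  have iH'P : Integrable (fun v => H' v * (P v : ℂ)) := by
    refine (iB'Pe.sub (iBPQe.const_mul (α:ℂ))).congr (Eventually.of_forall fun v => ?_)
    simp only [hH', Pi.sub_apply]; push_cast; ring
  have iBG : Integrable (fun v => B v * (GG α μ f g u v : ℂ)) := int_mul_bdd hB.int mG (fun v => b7 u v)
  have z0 : ∫ v, (B' v * (e0 v : ℂ) - α * (B v * ((Q0 v * e0 v : ℝ) : ℂ))) = 0 := by
    refine integral_eq_zero_of_hasDerivAt_of_integrable (f := fun v => B v * (e0 v : ℂ)) (fun v => ?_)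
      (iB'e0.sub (iBQ0e0.const_mul _)) iBe0
    refine ((hB.der v).mul (de0 v).ofReal_comp).congr_deriv ?_
    push_cast; ring
  have eq : ∫ v, B' v * (DD α μ f g u v : ℂ) =
      -α * (∫ v, H' v * (P v : ℂ)) - α ^ 2 * (∫ v, B v * (GG α μ f g u v : ℂ)) := by
    have : ∫ v, B' v * (DD α μ f g u v : ℂ) = (∫ v, B' v * (DD α μ f g u v : ℂ)) -
      α * P0 * ∫ v, (B' v * (e0 v : ℂ) - α * (B v * ((Q0 v * e0 v : ℝ) : ℂ))) := by rw [z0]; ring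
    rw [this, ← integral_const_mul, ← integral_const_mul, ← integral_const_mul, ← integral_sub,
      ← integral_sub]
    · congr 1; funext v
      simp only [hH', GG, DD, ← hP0]
      change B' v * ((-α * (P v * e v) + α * (P0 * e0 v) : ℝ) : ℂ) - _ = _ - _ * (B v * ((P v * Q v * e v - P0 * Q0 v * e0 v : ℝ) : ℂ))
      push_cast; ring
    · exact iH'P.const_mul _
    · exact iBG.const_mul _
    · obtain ⟨c8, -, b8⟩ := h.DD_le
      exact int_mul_bdd hB.int' (h.meas_DD measurable_const measurable_id) (fun v => b8 u v)
    · exact (iB'e0.sub (iBQ0e0.const_mul _)).const_mul _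
  rw [eq]
  have G : ‖∫ v, B v * (GG α μ f g u v : ℂ)‖ ≤ (12 * M + 16 * M ^ 2) * (d1 α μ f g + d1 α μ g f) *
      ww α ε u * (2 * t ^ (1 - α / 2) * Iw α ε) := by
    obtain ⟨i1, i2⟩ := hB.int_ww h1 h2 h.he
    have hd := d1_nonneg (α := α) (μ := μ) (f := f) (g := g)
    have hd' := d1_nonneg (α := α) (μ := μ) (f := g) (g := f)
    have := norm_integral_le_of_norm_le (f := fun v => B v * (GG α μ f g u v : ℂ))
      (i1.const_mul ((12 * M + 16 * M ^ 2) * (d1 α μ f g + d1 α μ g f) * ww α ε u))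
      (Eventually.of_forall fun v => by
        rw [norm_mul, Complex.norm_real, Real.norm_eq_abs]
        have := mul_le_mul_of_nonneg_left (h.GG_le u v) (norm_nonneg (B v))
        linarith)
    rw [integral_const_mul] at this
    refine this.trans ?_
    have := ww_nonneg α ε u
    gcongr
  refine (norm_sub_le _ _).trans ?_
  rw [norm_mul, norm_mul, norm_neg, norm_pow, Complex.norm_real, Real.norm_of_nonneg (by linarith : 0 ≤ α)]
  have k2 := mul_le_mul_of_nonneg_left key (by linarith : 0 ≤ α)
  have k3 := mul_le_mul_of_nonneg_left G (by positivity : 0 ≤ α ^ 2)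
  unfold cM
  linarith

/-- constant of the analytic inequality -/
noncomputable def cA (α ε M : ℝ) : ℝ :=
  2 * (α * (α - 1) * ck1 α * ck2 α + cM α M * Iw α ε * (2 * Iw α ε))

lemma cA_nonneg (h1 : 1 < α) (hM : 0 ≤ M) : 0 ≤ cA α ε M := by
  have := ck1_nonneg α; have := ck2_nonneg α; have := Iw_nonneg α ε
  have : 0 ≤ α - 1 := by linarith
  have : 0 ≤ cM α M := by unfold cM; positivity
  unfold cA; positivity

lemma SPair.main [SFinite μ] (h : SPair α ε M μ f g) {t t' : ℝ} {A A' B B' : ℝ → ℂ}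
    (hA : TF t A A') (hB : TF t' B B') :
    ‖∫ v, ∫ u, A' u * B' v * (UU α μ f g u v : ℂ)‖ ≤
      cA α ε M * (t ^ (1 - α / 2) * t' ^ (1 - α / 2)) * (d1 α μ f g + d1 α μ g f + d2 α μ f g) := by
  have h1 := h.h1; have h2 := h.h2; have hM := h.M_nonneg
  have q1 := ck1_nonneg α; have q2 := ck2_nonneg α; have q3 := Iw_nonneg α ε
  have q4 : 0 ≤ α - 1 := by linarith
  have q5 : 0 ≤ cM α M := by unfold cM; positivity
  have q6 := d1_nonneg (α := α) (μ := μ) (f := f) (g := g)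
  have q7 := d1_nonneg (α := α) (μ := μ) (f := g) (g := f)
  have q8 := d2_nonneg (α := α) (μ := μ) (f := f) (g := g)
  have q9 := hA.ht
  have q10 := hB.ht
  obtain ⟨c, hc, b⟩ := h.DD_le
  have e1 : ∀ v, ∫ u, A' u * B' v * (UU α μ f g u v : ℂ) =
      -∫ u, A u * (B' v * (DD α μ f g u v : ℂ)) := by
    intro v
    have := congrArg (fun z => B' v * z) (h.step1 hA v)
    simp only [mul_neg, ← integral_const_mul] at this
    rw [show (fun u => A' u * B' v * (UU α μ f g u v : ℂ)) =
      fun u => B' v * (A' u * (UU α μ f g u v : ℂ)) by funext u; ring, this]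
    congr 2; funext u; ring
  simp_rw [e1]
  rw [integral_neg, norm_neg]
  have hjoint : Integrable (Function.uncurry fun (v u : ℝ) =>
      A u * (B' v * (DD α μ f g u v : ℂ))) (volume.prod volume) := by
    have a1 := (hB.int'.norm.mul_prod hA.int.norm).mul_const c
    refine a1.mono' ?_ (Eventually.of_forall fun z => ?_)
    · refine (hA.int.1.comp_snd).mul ((hB.int'.1.comp_fst).mul (Measurable.aestronglyMeasurable ?_))
      exact Complex.measurable_ofReal.comp (h.meas_DD measurable_snd measurable_fst)
    · simp only [Function.uncurry]
      rw [norm_mul, norm_mul, Complex.norm_real, Real.norm_eq_abs]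
      have := mul_le_mul_of_nonneg_left (b z.2 z.1)
        (mul_nonneg (norm_nonneg (B' z.1)) (norm_nonneg (A z.2)))
      linarith
  rw [integral_integral_swap hjoint]
  simp_rw [integral_const_mul]
  obtain ⟨i1, j1⟩ := hA.int_pow h1 h2
  obtain ⟨i2, j2⟩ := hA.int_ww h1 h2 h.he
  have k1 := i1.const_mul (2 * t' ^ (1 - α / 2) * (α * (α - 1) * ck1 α * d2 α μ f g))
  have k2 := i2.const_mul (2 * t' ^ (1 - α / 2) * (cM α M * (d1 α μ f g + d1 α μ g f) * Iw α ε))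
  have := norm_integral_le_of_norm_le (f := fun u => A u * ∫ v, B' v * (DD α μ f g u v : ℂ))
      (k1.add k2) (by
    filter_upwards [ae_ne_zero] with u hu
    rw [norm_mul]
    have := mul_le_mul_of_nonneg_left (h.J_le hB hu) (norm_nonneg (A u))
    simp only [Pi.add_apply]
    linarith)
  refine this.trans ?_
  simp only [Pi.add_apply]
  rw [integral_add k1 k2, integral_const_mul, integral_const_mul]
  set T := t ^ (1 - α / 2)
  set T' := t' ^ (1 - α / 2)
  have hT : 0 ≤ T := by positivity
  have hT' : 0 ≤ T' := by positivity
  calc _ ≤ 2 * T' * (α * (α - 1) * ck1 α * d2 α μ f g) * (ck2 α * T) +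
      2 * T' * (cM α M * (d1 α μ f g + d1 α μ g f) * Iw α ε) * (2 * T * Iw α ε) := by gcongr
    _ = 2 * (α * (α - 1) * ck1 α * ck2 α) * (T * T') * d2 α μ f g +
      2 * (cM α M * Iw α ε * (2 * Iw α ε)) * (T * T') * (d1 α μ f g + d1 α μ g f) := by ring
    _ ≤ _ := by
      unfold cA
      have r1 : 0 ≤ 2 * (α * (α - 1) * ck1 α * ck2 α) * (T * T') * (d1 α μ f g + d1 α μ g f) := by positivity
      have r2 : 0 ≤ 2 * (cM α M * Iw α ε * (2 * Iw α ε)) * (T * T') * d2 α μ f g := by positivity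
      linarith
end part5

section part6

noncomputable def cc (t u : ℝ) : ℂ := ∫ y in Ioc 0 t, Complex.exp (-(Complex.I * u * y))
noncomputable def cc' (t u : ℝ) : ℂ := ∫ y in Ioc 0 t, -(Complex.I * y) * Complex.exp (-(Complex.I * u * y))

lemma norm_expI (u y : ℝ) : ‖Complex.exp (-(Complex.I * u * y))‖ = 1 := by
  rw [show -(Complex.I * u * y) = Complex.I * ((-(u * y) : ℝ) : ℂ) by push_cast; ring,
    Complex.norm_exp_I_mul_ofReal]

lemma hasDeriv_cc (t u : ℝ) : HasDerivAt (cc t) (cc' t u) u := by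
  refine (hasDerivAt_integral_of_dominated_loc_of_deriv_le (μ := volume.restrict (Ioc 0 t)) (𝕜 := ℝ)
    (F := fun u y => Complex.exp (-(Complex.I * u * y)))
    (F' := fun u y => -(Complex.I * y) * Complex.exp (-(Complex.I * u * y)))
    (bound := fun y => t) (s := univ) univ_mem ?_ ?_ ?_ ?_ ?_ ?_).2
  · exact Eventually.of_forall fun x => (by fun_prop : Continuous _).aestronglyMeasurable
  · refine Integrable.mono' (g := fun _ => (1:ℝ)) (integrable_const _)
      (by fun_prop : Continuous _).aestronglyMeasurable (Eventually.of_forall fun y => ?_)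
    rw [norm_expI]
  · exact (by fun_prop : Continuous _).aestronglyMeasurable
  · filter_upwards [ae_restrict_mem measurableSet_Ioc] with y hy x _
    rw [norm_mul, norm_expI, norm_neg, norm_mul, Complex.norm_I, Complex.norm_real,
      Real.norm_of_nonneg hy.1.le]
    linarith [hy.2]
  · exact integrable_const _
  · refine Eventually.of_forall fun y x _ => ?_
    have h1 : HasDerivAt (fun x : ℝ => -(Complex.I * (x:ℂ) * y)) (-(Complex.I * y)) x := by
      have := ((Complex.ofRealCLM.hasDerivAt (x := x)).const_mul Complex.I).mul_const (y:ℂ)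
      refine this.neg.congr_deriv ?_
      simp
    refine h1.cexp.congr_deriv ?_
    ring

lemma cc_le {t : ℝ} (ht : 0 < t) (u : ℝ) : ‖cc t u‖ ≤ t := by
  unfold cc
  have := norm_setIntegral_le_of_norm_le_const (μ := volume) (s := Ioc 0 t) (C := 1)
    (f := fun y : ℝ => Complex.exp (-(Complex.I * u * y))) (by simp)
    (fun y _ => (norm_expI u y).le)
  simpa [ht.le] using this

lemma cc'_le {t : ℝ} (ht : 0 < t) (u : ℝ) : ‖cc' t u‖ ≤ t * t := by
  unfold cc'
  have := norm_setIntegral_le_of_norm_le_const (μ := volume) (s := Ioc 0 t) (C := t)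
    (f := fun y : ℝ => -(Complex.I * y) * Complex.exp (-(Complex.I * u * y))) (by simp)
    (fun y hy => by
      rw [norm_mul, norm_expI, norm_neg, norm_mul, Complex.norm_I, Complex.norm_real,
        Real.norm_of_nonneg hy.1.le]
      linarith [hy.2])
  simpa [ht.le] using this

lemma cc_le2 {t : ℝ} (ht : 0 < t) {u : ℝ} (hu : u ≠ 0) : ‖cc t u‖ ≤ 2 / |u| := by
  have hc : -(Complex.I * u) ≠ 0 := neg_ne_zero.2 (mul_ne_zero Complex.I_ne_zero (by exact_mod_cast hu))
  have := integral_exp_mul_complex (a := 0) (b := t) hc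
  rw [intervalIntegral.integral_of_le ht.le] at this
  have e : cc t u = (Complex.exp (-(Complex.I * u) * t) - Complex.exp (-(Complex.I * u) * (0:ℝ))) / (-(Complex.I * u)) := by
    rw [← this]; unfold cc; congr 1; funext y; congr 1; ring
  rw [e, norm_div, norm_neg, norm_mul, Complex.norm_I, Complex.norm_real, one_mul, Real.norm_eq_abs]
  gcongr
  refine (norm_sub_le _ _).trans ?_
  have a := norm_expI u t
  have b := norm_expI u 0
  rw [show -(Complex.I * u) * (t:ℂ) = -(Complex.I * u * t) by ring, a,
    show -(Complex.I * u) * ((0:ℝ):ℂ) = -(Complex.I * u * (0:ℝ)) by ring, b]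
  norm_num

noncomputable def AA (s t u : ℝ) : ℂ := (((2 * π)⁻¹ : ℝ) : ℂ) * (cc t u * ((rexp (-(s^2/4) * u ^ 2) : ℝ) : ℂ))
noncomputable def AA' (s t u : ℝ) : ℂ := (((2 * π)⁻¹ : ℝ) : ℂ) * (cc' t u * ((rexp (-(s^2/4) * u ^ 2) : ℝ) : ℂ) +
  cc t u * ((rexp (-(s^2/4) * u ^ 2) * (-(s^2/4) * (2 * u)) : ℝ) : ℂ))

lemma cont_cc (t : ℝ) : Continuous (cc t) :=
  continuous_iff_continuousAt.2 fun v => (hasDeriv_cc t v).continuousAt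

lemma meas_cc' (t : ℝ) : AEStronglyMeasurable (cc' t) volume := by
  have : cc' t = deriv (cc t) := by funext u; exact (hasDeriv_cc t u).deriv.symm
  rw [this]; exact (measurable_deriv _).aestronglyMeasurable

lemma two_pi_inv_le : (2 * π)⁻¹ ≤ 1 := by
  apply inv_le_one_of_one_le₀; linarith [Real.pi_gt_three]

lemma TF_AA {s t : ℝ} (hs : 0 < s) (ht : 0 < t) : TF t (AA s t) (AA' s t) := by
  have hb : 0 < s ^ 2 / 4 := by positivity
  have g1 := integrable_exp_neg_mul_sq hb
  have g2 := integrable_mul_exp_neg_mul_sq hb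
  have n0 : ‖(((2 * π)⁻¹ : ℝ) : ℂ)‖ ≤ 1 := by
    rw [Complex.norm_real, Real.norm_of_nonneg (by positivity)]; exact two_pi_inv_le
  have nA : ∀ u, ‖AA s t u‖ ≤ ‖cc t u‖ := by
    intro u
    unfold AA
    rw [norm_mul, norm_mul, Complex.norm_real (rexp _), Real.norm_of_nonneg (Real.exp_pos _).le]
    have e1 : rexp (-(s^2/4) * u ^ 2) ≤ 1 := Real.exp_le_one_iff.2 (by nlinarith [sq_nonneg u])
    calc _ ≤ 1 * (‖cc t u‖ * 1) := by gcongr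
      _ = _ := by ring
  refine ⟨ht, fun u => ?_, ?_, ?_, fun u => (nA u).trans (cc_le ht u),
    fun u hu => (nA u).trans (cc_le2 ht hu)⟩
  · unfold AA AA'
    have d : HasDerivAt (fun u : ℝ => rexp (-(s^2/4) * u ^ 2))
        (rexp (-(s^2/4) * u ^ 2) * (-(s^2/4) * (2 * u))) u := by
      have := ((hasDerivAt_pow 2 u).const_mul (-(s^2/4))).exp
      simpa using this
    exact ((hasDeriv_cc t u).mul d.ofReal_comp).const_mul _
  · unfold AA
    refine Integrable.const_mul ?_ _
    refine (g1.const_mul t).mono' ?_ (Eventually.of_forall fun u => ?_)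
    · exact ((cont_cc t).mul (by fun_prop)).aestronglyMeasurable
    · rw [norm_mul, Complex.norm_real, Real.norm_of_nonneg (Real.exp_pos _).le]
      gcongr; exact cc_le ht u
  · unfold AA'
    refine Integrable.const_mul (Integrable.add ?_ ?_) _
    · refine (g1.const_mul (t * t)).mono' ?_ (Eventually.of_forall fun u => ?_)
      · exact (meas_cc' t).mul (Continuous.aestronglyMeasurable (by fun_prop))
      · rw [norm_mul, Complex.norm_real, Real.norm_of_nonneg (Real.exp_pos _).le]
        gcongr; exact cc'_le ht u
    · refine ((g2.norm.const_mul (s^2/4*2)).const_mul t).mono' ?_ (Eventually.of_forall fun u => ?_)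
      · exact ((cont_cc t).mul (by fun_prop)).aestronglyMeasurable
      · rw [norm_mul, Complex.norm_real]
        refine mul_le_mul (cc_le ht u) ?_ (norm_nonneg _) ht.le
        rw [norm_mul, norm_mul u, norm_mul (-(s^2/4)), norm_neg, norm_mul 2, Real.norm_of_nonneg hb.le]
        simp only [Real.norm_ofNat]
        linarith

noncomputable def kk (s t x : ℝ) : ℝ :=
  (√π)⁻¹ * ∫ w, (Ioc 0 t).indicator (fun _ => (1:ℝ)) (x - s * w) * rexp (-1 * w ^ 2)

lemma kk_eq {s t : ℝ} (hs : 0 < s) (x : ℝ) :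
    kk s t x = (√π)⁻¹ * (s⁻¹ * ∫ y in Ioc 0 t, rexp (-(x - y) ^ 2 / s ^ 2)) := by
  unfold kk
  congr 1
  have h1 := Measure.integral_comp_mul_left
    (fun z => (Ioc 0 t).indicator (fun _ => (1:ℝ)) (x - z) * rexp (-1 * (z / s) ^ 2)) s
  simp only [mul_div_cancel_left₀ _ hs.ne'] at h1
  rw [h1, smul_eq_mul, abs_of_pos (by positivity)]
  congr 1
  rw [← integral_indicator measurableSet_Ioc,
    ← integral_sub_left_eq_self (fun y => (Ioc 0 t).indicator (fun y => rexp (-(x - y) ^ 2 / s ^ 2)) y) volume x]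
  congr 1; funext z
  simp only [indicator]
  split_ifs
  · rw [one_mul]; congr 1; rw [sub_sub_cancel]; field_simp
  · rw [zero_mul]

lemma kk_four {s t : ℝ} (hs : 0 < s) (x : ℝ) :
    ∫ u, AA s t u * Complex.exp (Complex.I * u * x) = (kk s t x : ℂ) := by
  have hb : 0 < s ^ 2 / 4 := by positivity
  unfold AA cc
  have e : ∀ u : ℝ, (((2 * π)⁻¹ : ℝ) : ℂ) * ((∫ y in Ioc 0 t, Complex.exp (-(Complex.I * u * y))) *
      ((rexp (-(s^2/4) * u ^ 2) : ℝ) : ℂ)) * Complex.exp (Complex.I * u * x) =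
      (((2 * π)⁻¹ : ℝ) : ℂ) * ∫ y in Ioc 0 t, (Complex.exp (Complex.I * ((x - y : ℝ):ℂ) * u) *
        Complex.exp (-((s^2/4 : ℝ) : ℂ) * (u:ℂ) ^ 2)) := by
    intro u
    rw [mul_assoc, mul_assoc, ← integral_mul_const]
    congr 2; funext y
    push_cast
    rw [← Complex.exp_add, ← Complex.exp_add, ← Complex.exp_add]
    congr 1; ring
  simp_rw [e]
  rw [integral_const_mul, integral_integral_swap]
  · have h2 : ∀ y : ℝ, ∫ u : ℝ, (Complex.exp (Complex.I * ((x - y : ℝ):ℂ) * u) *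
        Complex.exp (-((s^2/4 : ℝ) : ℂ) * (u:ℂ) ^ 2)) =
        ((2 * √π * s⁻¹ * rexp (-(x - y) ^ 2 / s ^ 2) : ℝ) : ℂ) := by
      intro y
      rw [fourierIntegral_gaussian (by rw [Complex.ofReal_re]; exact hb)]
      have : ((π:ℂ) / ((s^2/4 : ℝ) : ℂ)) ^ (1/2 : ℂ) = ((2 * √π * s⁻¹ : ℝ) : ℂ) := by
        rw [← Complex.ofReal_div, show (1/2 : ℂ) = (((1/2 : ℝ)) : ℂ) by push_cast; rfl,
          ← Complex.ofReal_cpow (by positivity), ← Real.sqrt_eq_rpow]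
        congr 1
        rw [Real.sqrt_eq_iff_mul_self_eq (by positivity) (by positivity)]
        have := Real.mul_self_sqrt Real.pi_pos.le
        field_simp
        nlinarith
      rw [this]
      rw [Complex.ofReal_mul (2 * √π * s⁻¹), Complex.ofReal_exp]
      congr 2
      push_cast; field_simp
    simp_rw [h2]
    rw [integral_complex_ofReal, ← Complex.ofReal_mul, kk_eq hs]
    congr 1
    rw [integral_const_mul]
    have := Real.mul_self_sqrt Real.pi_pos.le
    have : 0 < √π := by positivity
    have key : (2 * π)⁻¹ * (2 * √π * s⁻¹) = (√π)⁻¹ * s⁻¹ := by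
      field_simp
      nlinarith
    rw [← mul_assoc, key, mul_assoc]
  · have g1 := integrable_exp_neg_mul_sq hb
    have i1 : Integrable (fun _ : ℝ => (1:ℝ)) (volume.restrict (Ioc 0 t)) := integrable_const _
    refine (g1.mul_prod i1).mono' (Continuous.aestronglyMeasurable ?_) (Eventually.of_forall fun z => ?_)
    · unfold Function.uncurry; fun_prop
    · simp only [Function.uncurry]
      rw [norm_mul, show Complex.I * ((x - z.2 : ℝ):ℂ) * z.1 = -(Complex.I * ((x - z.2 : ℝ):ℂ) * ((-z.1 : ℝ) : ℂ)) by push_cast; ring,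
        norm_expI]
      rw [show -((s^2/4 : ℝ) : ℂ) * (z.1:ℂ) ^ 2 = ((-(s^2/4) * z.1 ^ 2 : ℝ) : ℂ) by push_cast; ring,
        ← Complex.ofReal_exp, Complex.norm_real, Real.norm_of_nonneg (Real.exp_pos _).le]
      linarith

lemma kk_four' {s t : ℝ} (hs : 0 < s) (ht : 0 < t) (x : ℝ) :
    Complex.I * ∫ u, AA' s t u * Complex.exp (Complex.I * u * x) = ((x * kk s t x : ℝ) : ℂ) := by
  have hT := TF_AA hs ht
  have nE : ∀ u : ℝ, ‖Complex.exp (Complex.I * u * x)‖ = 1 := fun u => by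
    rw [show Complex.I * u * x = Complex.I * ((u * x : ℝ) : ℂ) by push_cast; ring,
      Complex.norm_exp_I_mul_ofReal]
  have mE : AEStronglyMeasurable (fun u : ℝ => Complex.exp (Complex.I * u * x)) volume :=
    (by fun_prop : Continuous _).aestronglyMeasurable
  have gi : ∀ F : ℝ → ℂ, Integrable F → Integrable (fun u => F u * Complex.exp (Complex.I * u * x)) := by
    intro F hF
    exact hF.mul_bdd (c := 1) mE (Eventually.of_forall fun u => (nE u).le)
  have hd : ∀ u : ℝ, HasDerivAt (fun u : ℝ => Complex.exp (Complex.I * u * x))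
      (Complex.I * x * Complex.exp (Complex.I * u * x)) u := by
    intro u
    have := ((Complex.ofRealCLM.hasDerivAt (x := u)).const_mul Complex.I).mul_const (x:ℂ)
    refine this.cexp.congr_deriv ?_
    simp; ring
  have i1 := gi _ hT.int
  have i2 := gi _ hT.int'
  have := integral_mul_deriv_eq_deriv_mul_of_integrable (u := AA s t) (u' := AA' s t)
    (fun u _ => hT.der u) (fun u _ => hd u)
    (by refine (i1.const_mul (Complex.I * x)).congr (Eventually.of_forall fun u => ?_)
        simp only [Pi.mul_apply]; ring) i2 i1
  have e : ∀ u : ℝ, AA s t u * (Complex.I * x * Complex.exp (Complex.I * u * x)) =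
    Complex.I * x * (AA s t u * Complex.exp (Complex.I * u * x)) := fun u => by ring
  simp_rw [e] at this
  rw [integral_const_mul, kk_four hs] at this
  rw [neg_eq_iff_eq_neg.1 this.symm]
  push_cast
  linear_combination (-(x:ℂ) * kk s t x) * Complex.I_mul_I
end part6

section part7
variable {α ε M : ℝ} {S : Type*} [MeasurableSpace S] {μ : Measure S} {f g : S → ℝ}
variable {Ω : Type*} [MeasurableSpace Ω] {P : Measure Ω} [IsProbabilityMeasure P] {ξ η : Ω → ℝ}

structure JS (α : ℝ) {S : Type*} [MeasurableSpace S] (μ : Measure S) (f g : S → ℝ)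
    {Ω : Type*} [MeasurableSpace Ω] (P : Measure Ω) (ξ η : Ω → ℝ) : Prop where
  m1 : Measurable ξ
  m2 : Measurable η
  ch : ∀ u v : ℝ, (∫ ω, Complex.exp (Complex.I * ((u * ξ ω + v * η ω : ℝ) : ℂ)) ∂P)
    = Complex.exp (-((NN α μ f g u v : ℝ) : ℂ))

lemma JS.swap (h : JS α μ f g P ξ η) : JS α μ g f P η ξ :=
  ⟨h.m2, h.m1, fun u v => by
    rw [NN_swap, ← h.ch v u]; congr 1; funext ω; rw [add_comm]⟩

lemma norm_E (u x : ℝ) : ‖Complex.exp (Complex.I * u * x)‖ = 1 := by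
  rw [show Complex.I * u * x = Complex.I * ((u * x : ℝ) : ℂ) by push_cast; ring,
    Complex.norm_exp_I_mul_ofReal]

lemma swap_int {F : ℝ → ℂ} (hF : Integrable F) {ψ : Ω → ℂ} (hψ : AEStronglyMeasurable ψ P) {C : ℝ}
    (hC : ∀ ω, ‖ψ ω‖ ≤ C) (hξ : Measurable ξ) :
    Integrable (Function.uncurry fun (ω : Ω) (u : ℝ) => ψ ω * (F u * Complex.exp (Complex.I * u * ξ ω)))
      (P.prod volume) := by
  have i1 : Integrable ψ P := Integrable.mono' (integrable_const C) hψ (Eventually.of_forall hC)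
  refine (i1.norm.mul_prod hF.norm).mono' ?_ (Eventually.of_forall fun z => ?_)
  · refine (hψ.comp_fst).mul ((hF.1.comp_snd).mul (Measurable.aestronglyMeasurable ?_))
    fun_prop
  · simp only [Function.uncurry]
    rw [norm_mul, norm_mul, norm_E, mul_one]

lemma swap_bdd {F : ℝ → ℂ} (hF : Integrable F) {ψ : Ω → ℂ} (hψ : AEStronglyMeasurable ψ P) {C : ℝ}
    (hC : ∀ ω, ‖ψ ω‖ ≤ C) (hξ : Measurable ξ) :
    ∫ ω, ψ ω * (∫ u, F u * Complex.exp (Complex.I * u * ξ ω)) ∂P =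
      ∫ u, F u * (∫ ω, ψ ω * Complex.exp (Complex.I * u * ξ ω) ∂P) := by
  simp_rw [← integral_const_mul]
  rw [integral_integral_swap (swap_int hF hψ hC hξ)]
  congr 1; funext u; congr 1; funext ω; ring

lemma meas_four {F : ℝ → ℂ} (hF : Integrable F) (hξ : Measurable ξ) :
    AEStronglyMeasurable (fun ω => ∫ u, F u * Complex.exp (Complex.I * u * ξ ω)) P := by
  have := (swap_int (P := P) (C := 1) hF (ψ := fun _ => 1) aestronglyMeasurable_const
    (fun ω => by simp) hξ).integral_prod_left.1
  simpa [Function.uncurry] using this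

lemma norm_four_le (F : ℝ → ℂ) (x : ℝ) :
    ‖∫ u, F u * Complex.exp (Complex.I * u * x)‖ ≤ ∫ u, ‖F u‖ := by
  refine (norm_integral_le_integral_norm _).trans (le_of_eq ?_)
  congr 1; funext u; rw [norm_mul, norm_E, mul_one]

lemma JS.four1 (h : JS α μ f g P ξ η) {F : ℝ → ℂ} (hF : Integrable F) :
    ∫ ω, (∫ u, F u * Complex.exp (Complex.I * u * ξ ω)) ∂P =
      ∫ u, F u * ((rexp (-NN α μ f g u 0) : ℝ) : ℂ) := by
  have := swap_bdd (P := P) (C := 1) hF (ψ := fun _ => 1) aestronglyMeasurable_const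
    (fun ω => by simp) h.m1
  simp only [one_mul] at this
  rw [this]; congr 1; funext u; congr 1
  have := h.ch u 0
  rw [Complex.ofReal_exp]; push_cast at this ⊢; rw [← this]
  congr 1; funext ω; congr 1; push_cast; ring

lemma JS.four2 (h : JS α μ f g P ξ η) {F G : ℝ → ℂ} (hF : Integrable F) (hG : Integrable G) :
    ∫ ω, (∫ u, F u * Complex.exp (Complex.I * u * ξ ω)) *
        (∫ v, G v * Complex.exp (Complex.I * v * η ω)) ∂P =
      ∫ v, ∫ u, F u * G v * ((rexp (-NN α μ f g u v) : ℝ) : ℂ) := by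
  rw [swap_bdd hG (meas_four hF h.m1) (fun ω => norm_four_le F _) h.m2]
  congr 1; funext v
  have e : ∀ ω, (∫ u, F u * Complex.exp (Complex.I * u * ξ ω)) * Complex.exp (Complex.I * v * η ω) =
      Complex.exp (Complex.I * v * η ω) * (∫ u, F u * Complex.exp (Complex.I * u * ξ ω)) := fun ω => mul_comm _ _
  have hm := h.m2
  simp_rw [e]
  rw [swap_bdd hF (ψ := fun ω => Complex.exp (Complex.I * v * η ω)) (C := 1)
    (Measurable.aestronglyMeasurable (by fun_prop)) (fun ω => (norm_E _ _).le) h.m1,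
    ← integral_const_mul]
  congr 1; funext u
  have : ∫ ω, Complex.exp (Complex.I * v * η ω) * Complex.exp (Complex.I * u * ξ ω) ∂P =
      ((rexp (-NN α μ f g u v) : ℝ) : ℂ) := by
    rw [Complex.ofReal_exp, Complex.ofReal_neg, ← h.ch u v]
    congr 1; funext ω; rw [← Complex.exp_add]; congr 1; push_cast; ring
  rw [this]; ring

lemma JS.noatom [SFinite μ] (h : JS α μ f g P ξ η) (hS : SPair α ε M μ f g) (a : ℝ) : ∀ᵐ ω ∂P, ξ ω ≠ a := by
  have hm := h.m1
  have h1 := hS.h1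
  set I : ℝ := ∫ u, rexp (-ε * |u| ^ α) with hI
  have iI : Integrable (fun u : ℝ => rexp (-ε * |u| ^ α)) := by
    have := integrable_abs_rpow_exp (s := 0) (p := α) (b := ε) (by norm_num) (by linarith) hS.he
    simpa using this
  have key : ∀ b : ℝ, 0 < b → P.real {ω | ξ ω = a} ≤ √(b / π) * I := by
    intro b hb
    -- the Gaussian function as a Fourier integral
    set F : ℝ → ℂ := fun u => Complex.exp (Complex.I * ((-a : ℝ) : ℂ) * u) * ((rexp (-b * u ^ 2) : ℝ) : ℂ) with hF
    have nF : ∀ u, ‖F u‖ = rexp (-b * u ^ 2) := fun u => by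
      simp only [hF]; rw [norm_mul, norm_E, Complex.norm_real, Real.norm_of_nonneg (Real.exp_pos _).le, one_mul]
    have iF : Integrable F :=
      (integrable_exp_neg_mul_sq hb).mono' (by fun_prop : Continuous F).aestronglyMeasurable
        (Eventually.of_forall fun u => (nF u).le)
    have eF : ∀ x : ℝ, ∫ u, F u * Complex.exp (Complex.I * u * x) =
        ((√(π / b) * rexp (-(x - a) ^ 2 / (4 * b)) : ℝ) : ℂ) := by
      intro x
      have := fourierIntegral_gaussian (b := (b:ℂ)) (by rwa [Complex.ofReal_re]) ((x - a : ℝ) : ℂ)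
      rw [Complex.ofReal_mul, Complex.ofReal_exp, Real.sqrt_eq_rpow, Complex.ofReal_cpow (by positivity)]
      push_cast at this ⊢
      rw [← this]
      congr 1; funext u
      simp only [hF]; push_cast
      rw [← Complex.exp_add, ← Complex.exp_add, ← Complex.exp_add]; congr 1; ring
    have e1 := h.four1 iF
    simp_rw [eF] at e1
    rw [integral_complex_ofReal] at e1
    have e2 := congrArg norm e1
    rw [Complex.norm_real, integral_const_mul] at e2
    have b1 : ‖∫ u, F u * ((rexp (-NN α μ f g u 0) : ℝ) : ℂ)‖ ≤ I := by
      refine norm_integral_le_of_norm_le iI (Eventually.of_forall fun u => ?_)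
      rw [norm_mul, nF, Complex.norm_real, Real.norm_of_nonneg (Real.exp_pos _).le]
      have q1 : rexp (-b * u ^ 2) ≤ 1 := Real.exp_le_one_iff.2 (by nlinarith [sq_nonneg u])
      have q2 := hS.exp_N u 0
      have q3 : rexp (-ε * |(0:ℝ)| ^ α) = 1 := by
        rw [abs_zero, Real.zero_rpow (by linarith), mul_zero, Real.exp_zero]
      rw [q3, mul_one] at q2
      calc _ ≤ 1 * rexp (-ε * |u| ^ α) := by gcongr
        _ = _ := one_mul _
    have i2 : Integrable (fun ω => rexp (-(ξ ω - a) ^ 2 / (4 * b))) P := by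
      refine Integrable.mono' (integrable_const 1) (Measurable.aestronglyMeasurable (by fun_prop))
        (Eventually.of_forall fun ω => ?_)
      rw [Real.norm_of_nonneg (Real.exp_pos _).le]
      exact Real.exp_le_one_iff.2 (div_nonpos_of_nonpos_of_nonneg (by nlinarith [sq_nonneg (ξ ω - a)]) (by positivity))
    have hms : MeasurableSet {ω | ξ ω = a} := hm (measurableSet_singleton a)
    have b2 : P.real {ω | ξ ω = a} ≤ ∫ ω, rexp (-(ξ ω - a) ^ 2 / (4 * b)) ∂P := by
      rw [← integral_indicator_one hms]
      refine integral_mono ((integrable_const (1:ℝ)).indicator hms) i2 fun ω => ?_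
      simp only [indicator, Set.mem_ofPred_eq]
      split_ifs with hω
      · rw [hω]; simp
      · exact (Real.exp_pos _).le
    have nn : 0 ≤ ∫ ω, rexp (-(ξ ω - a) ^ 2 / (4 * b)) ∂P := integral_nonneg fun _ => (Real.exp_pos _).le
    rw [Real.norm_of_nonneg (by positivity)] at e2
    rw [← e2] at b1
    refine b2.trans ?_
    have b3 := mul_le_mul_of_nonneg_left b1 (Real.sqrt_nonneg (b / π))
    rw [← mul_assoc, ← Real.sqrt_mul (by positivity), show b / π * (π / b) = 1 by
      have := Real.pi_pos; field_simp, Real.sqrt_one, one_mul] at b3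
    exact b3
  have lim : Tendsto (fun b : ℝ => √(b / π) * I) (𝓝[>] 0) (𝓝 (√(0 / π) * I)) := by
    refine Tendsto.mono_left (Continuous.tendsto (by fun_prop) 0) nhdsWithin_le_nhds
  simp only [zero_div, Real.sqrt_zero, zero_mul] at lim
  have z : P.real {ω | ξ ω = a} ≤ 0 := ge_of_tendsto lim (by
    filter_upwards [self_mem_nhdsWithin] with b hb using key b hb)
  have z' : P.real {ω | ξ ω = a} = 0 := le_antisymm z measureReal_nonneg
  rw [measureReal_eq_zero_iff] at z'
  rw [ae_iff]
  simpa using z'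

lemma measurable_kk (s t : ℝ) : Measurable (kk s t) := by
  have hm : StronglyMeasurable (Function.uncurry
    (fun (x w : ℝ) => (Ioc 0 t).indicator (fun _ => (1:ℝ)) (x - s * w) * rexp (-1 * w ^ 2))) := by
    apply Measurable.stronglyMeasurable
    unfold Function.uncurry
    have : Measurable ((Ioc 0 t).indicator (fun _ => (1:ℝ))) := measurable_const.indicator measurableSet_Ioc
    fun_prop
  exact (hm.integral_prod_right (ν := volume)).measurable.const_mul _

noncomputable def kb (t : ℝ) : ℝ := (√π)⁻¹ * ∫ w, (t * rexp (-1 * w ^ 2) + ‖w * rexp (-1 * w ^ 2)‖)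

lemma kk_bdd {s t : ℝ} (hs : 0 < s) (hs1 : s ≤ 1) (ht : 0 < t) (x : ℝ) : |x * kk s t x| ≤ kb t := by
  have g1 := integrable_exp_neg_mul_sq one_pos
  have g2 := integrable_mul_exp_neg_mul_sq one_pos
  unfold kk kb
  rw [mul_left_comm, abs_mul, abs_of_nonneg (by positivity : 0 ≤ (√π)⁻¹), ← integral_const_mul]
  gcongr
  rw [← Real.norm_eq_abs]
  refine norm_integral_le_of_norm_le ((g1.const_mul t).add g2.norm) (Eventually.of_forall fun w => ?_)
  simp only [indicator]
  have p := Real.exp_pos (-1 * w ^ 2)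
  split_ifs with hw
  · rw [one_mul, norm_mul, norm_mul, Real.norm_of_nonneg p.le, Real.norm_eq_abs, Real.norm_eq_abs]
    have : |x| ≤ t + |w| := by
      have a : |s * w| ≤ |w| := by
        rw [abs_mul, abs_of_pos hs]; nlinarith [abs_nonneg w]
      have b : |x - s * w| ≤ t := by rw [abs_of_pos hw.1]; exact hw.2
      calc |x| = |(x - s * w) + s * w| := by congr 1; ring
        _ ≤ _ := (abs_add_le _ _).trans (add_le_add b a)
    nlinarith
  · simp only [zero_mul, mul_zero, norm_zero]; positivity

lemma kk_lim {t x : ℝ} (h0 : x ≠ 0) (ht : x ≠ t) :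
    Tendsto (fun n : ℕ => kk (1 / ((n:ℝ) + 1)) t x) atTop (𝓝 ((Ioc 0 t).indicator (fun _ => (1:ℝ)) x)) := by
  have g1 := integrable_exp_neg_mul_sq one_pos
  set c := (Ioc 0 t).indicator (fun _ => (1:ℝ)) x with hc
  have ec : (√π)⁻¹ * ∫ w, c * rexp (-1 * w ^ 2) = c := by
    rw [integral_const_mul, integral_gaussian, div_one]
    have : 0 < √π := by have := Real.pi_pos; positivity
    field_simp
  rw [← ec]
  unfold kk
  refine Tendsto.const_mul _ ?_
  have mI : Measurable ((Ioc 0 t).indicator (fun _ => (1:ℝ))) := measurable_const.indicator measurableSet_Ioc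
  have cont : ContinuousAt ((Ioc 0 t).indicator (fun _ => (1:ℝ))) x := by
    rcases lt_or_gt_of_ne h0 with h | h
    · refine (continuousAt_const (y := (0:ℝ))).congr ?_
      filter_upwards [Iio_mem_nhds h] with y hy
      rw [indicator_of_notMem]; intro h'; exact absurd h'.1 (not_lt.2 (le_of_lt hy))
    · rcases lt_or_gt_of_ne ht with h2 | h2
      · refine (continuousAt_const (y := (1:ℝ))).congr ?_
        filter_upwards [Ioo_mem_nhds h h2] with y hy
        rw [indicator_of_mem]; exact ⟨hy.1, hy.2.le⟩
      · refine (continuousAt_const (y := (0:ℝ))).congr ?_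
        filter_upwards [Ioi_mem_nhds h2] with y hy
        rw [indicator_of_notMem]; intro h'; exact absurd h'.2 (not_le.2 hy)
  refine tendsto_integral_of_dominated_convergence (fun w => rexp (-1 * w ^ 2)) ?_ g1 ?_ ?_
  · intro n; exact Measurable.aestronglyMeasurable (by fun_prop)
  · intro n; refine Eventually.of_forall fun w => ?_
    rw [norm_mul, Real.norm_of_nonneg (Real.exp_pos (-1 * w ^ 2)).le]
    have p := Real.exp_pos (-1 * w ^ 2)
    simp only [indicator]; split_ifs
    · simp
    · simp only [norm_zero, zero_mul]; exact p.le
  · refine Eventually.of_forall fun w => ?_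
    refine Tendsto.mul_const _ ?_
    refine cont.tendsto.comp ?_
    have := (tendsto_one_div_add_atTop_nhds_zero_nat (𝕜 := ℝ)).mul_const w
    have := this.const_sub x
    simpa using this

/-- covariance of the truncated linear functions -/
noncomputable def XX (t x : ℝ) : ℝ := x * (Ioc 0 t).indicator (fun _ => (1:ℝ)) x

lemma measurable_XX (t : ℝ) : Measurable (XX t) :=
  measurable_id.mul (measurable_const.indicator measurableSet_Ioc)

lemma JS.cov_kk [SFinite μ] (h : JS α μ f g P ξ η) (hS : SPair α ε M μ f g) {s t t' : ℝ} (hs : 0 < s)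
    (ht : 0 < t) (ht' : 0 < t') :
    |(∫ ω, (ξ ω * kk s t (ξ ω)) * (η ω * kk s t' (η ω)) ∂P) -
      (∫ ω, ξ ω * kk s t (ξ ω) ∂P) * (∫ ω, η ω * kk s t' (η ω) ∂P)| ≤
      cA α ε M * (t ^ (1 - α / 2) * t' ^ (1 - α / 2)) * (d1 α μ f g + d1 α μ g f + d2 α μ f g) := by
  have hA := TF_AA hs ht
  have hB := TF_AA hs ht'
  have key := hS.main hA hB
  have e1 : ((∫ ω, (ξ ω * kk s t (ξ ω)) * (η ω * kk s t' (η ω)) ∂P : ℝ) : ℂ) =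
      - ∫ v, ∫ u, AA' s t u * AA' s t' v * ((rexp (-NN α μ f g u v) : ℝ) : ℂ) := by
    rw [← h.four2 hA.int' hB.int', ← integral_neg, ← integral_complex_ofReal]
    congr 1; funext ω
    rw [Complex.ofReal_mul, ← kk_four' hs ht, ← kk_four' hs ht']
    linear_combination ((∫ u, AA' s t u * Complex.exp (Complex.I * u * ξ ω)) *
        (∫ v, AA' s t' v * Complex.exp (Complex.I * v * η ω))) * Complex.I_mul_I
  have e2 : ((∫ ω, ξ ω * kk s t (ξ ω) ∂P : ℝ) : ℂ) =
      Complex.I * ∫ u, AA' s t u * ((rexp (-NN α μ f g u 0) : ℝ) : ℂ) := by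
    rw [← h.four1 hA.int', ← integral_const_mul, ← integral_complex_ofReal]
    congr 1; funext ω; rw [← kk_four' hs ht]
  have e3 : ((∫ ω, η ω * kk s t' (η ω) ∂P : ℝ) : ℂ) =
      Complex.I * ∫ v, AA' s t' v * ((rexp (-NN α μ f g 0 v) : ℝ) : ℂ) := by
    have := h.swap.four1 hB.int'
    simp_rw [NN_swap] at this
    rw [← this, ← integral_const_mul, ← integral_complex_ofReal]
    congr 1; funext ω; rw [← kk_four' hs ht']
  have mN : Measurable (fun z : ℝ × ℝ => rexp (-NN α μ f g z.2 z.1)) :=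
    (hS.mN measurable_snd measurable_fst).neg.exp
  have mN1 : Measurable (fun u : ℝ => rexp (-NN α μ f g u 0)) :=
    (hS.mN measurable_id measurable_const).neg.exp
  have mN2 : Measurable (fun v : ℝ => rexp (-NN α μ f g 0 v)) :=
    (hS.mN measurable_const measurable_id).neg.exp
  have i1 : Integrable (Function.uncurry fun v u : ℝ => AA' s t u * AA' s t' v * ((rexp (-NN α μ f g u v) : ℝ) : ℂ))
      (volume.prod volume) := by
    refine (hB.int'.norm.mul_prod hA.int'.norm).mono' ?_ (Eventually.of_forall fun z => ?_)
    · exact ((hA.int'.1.comp_snd).mul (hB.int'.1.comp_fst)).mul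
        (Complex.measurable_ofReal.comp mN).aestronglyMeasurable
    · simp only [Function.uncurry]
      rw [norm_mul, norm_mul, Complex.norm_real, Real.norm_of_nonneg (Real.exp_pos _).le]
      have := mul_le_mul_of_nonneg_left (exp_NN_le (α := α) (μ := μ) (f := f) (g := g) z.2 z.1)
        (mul_nonneg (norm_nonneg (AA' s t z.2)) (norm_nonneg (AA' s t' z.1)))
      linarith
  have j1 : Integrable (fun u => AA' s t u * ((rexp (-NN α μ f g u 0) : ℝ) : ℂ)) :=
    int_mul_bdd hA.int' mN1 (C := 1) (fun u => by rw [Real.abs_exp]; exact exp_NN_le u 0)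
  have j2 : Integrable (fun v => AA' s t' v * ((rexp (-NN α μ f g 0 v) : ℝ) : ℂ)) :=
    int_mul_bdd hB.int' mN2 (C := 1) (fun u => by rw [Real.abs_exp]; exact exp_NN_le 0 u)
  have j3 := j2.mul_prod j1
  have e4 : ∫ v, ∫ u, AA' s t u * AA' s t' v * (UU α μ f g u v : ℂ) =
      (∫ v, ∫ u, AA' s t u * AA' s t' v * ((rexp (-NN α μ f g u v) : ℝ) : ℂ)) -
      (∫ v, AA' s t' v * ((rexp (-NN α μ f g 0 v) : ℝ) : ℂ)) *
        ∫ u, AA' s t u * ((rexp (-NN α μ f g u 0) : ℝ) : ℂ) := by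
    have i1' : Integrable (fun z : ℝ × ℝ => AA' s t z.2 * AA' s t' z.1 * ((rexp (-NN α μ f g z.2 z.1) : ℝ) : ℂ))
      (volume.prod volume) := i1
    rw [← integral_prod_mul, integral_integral i1, ← integral_sub i1' j3, integral_integral]
    · congr 1; funext z
      simp only [UU, Function.uncurry]
      rw [sub_eq_add_neg (-NN α μ f g z.2 0), Real.exp_add]
      push_cast; ring
    · refine (i1.sub j3).congr (Eventually.of_forall fun z => ?_)
      simp only [UU, Function.uncurry, Pi.sub_apply]
      rw [sub_eq_add_neg (-NN α μ f g z.2 0), Real.exp_add]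
      push_cast; ring
  refine le_trans (le_of_eq ?_) key
  rw [← Real.norm_eq_abs, ← Complex.norm_real, Complex.ofReal_sub, Complex.ofReal_mul, e1, e2, e3, e4,
    ← norm_neg]
  congr 1
  linear_combination (-(∫ u, AA' s t u * ((rexp (-NN α μ f g u 0) : ℝ) : ℂ)) *
    (∫ v, AA' s t' v * ((rexp (-NN α μ f g 0 v) : ℝ) : ℂ))) * (-1 : ℂ) * Complex.I_mul_I

lemma JS.cov_XX [SFinite μ] (h : JS α μ f g P ξ η) (hS : SPair α ε M μ f g) {t t' : ℝ}
    (ht : 0 < t) (ht' : 0 < t') :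
    |(∫ ω, XX t (ξ ω) * XX t' (η ω) ∂P) - (∫ ω, XX t (ξ ω) ∂P) * (∫ ω, XX t' (η ω) ∂P)| ≤
      cA α ε M * (t ^ (1 - α / 2) * t' ^ (1 - α / 2)) * (d1 α μ f g + d1 α μ g f + d2 α μ f g) := by
  have hm1 := h.m1; have hm2 := h.m2
  set s : ℕ → ℝ := fun n => 1 / ((n:ℝ) + 1) with hs
  have s0 : ∀ n, 0 < s n := fun n => by simp only [hs]; positivity
  have s1 : ∀ n, s n ≤ 1 := fun n => by
    simp only [hs]; rw [div_le_one (by positivity)]; linarith [n.cast_nonneg (α := ℝ)]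
  have lim1 : ∀ᵐ ω ∂P, Tendsto (fun n => ξ ω * kk (s n) t (ξ ω)) atTop (𝓝 (XX t (ξ ω))) := by
    filter_upwards [h.noatom hS 0, h.noatom hS t] with ω h0 h1
    exact (kk_lim h0 h1).const_mul _
  have lim2 : ∀ᵐ ω ∂P, Tendsto (fun n => η ω * kk (s n) t' (η ω)) atTop (𝓝 (XX t' (η ω))) := by
    filter_upwards [h.swap.noatom hS.swap 0, h.swap.noatom hS.swap t'] with ω h0 h1
    exact (kk_lim h0 h1).const_mul _
  have mk := measurable_kk
  have T1 := tendsto_integral_of_dominated_convergence (fun _ => kb t)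
    (fun n => Measurable.aestronglyMeasurable (μ := P) (f := fun ω => ξ ω * kk (s n) t (ξ ω)) (by
      have := mk (s n) t; fun_prop)) (integrable_const _)
    (fun n => Eventually.of_forall fun ω => kk_bdd (s0 n) (s1 n) ht (ξ ω)) lim1
  have T2 := tendsto_integral_of_dominated_convergence (fun _ => kb t')
    (fun n => Measurable.aestronglyMeasurable (μ := P) (f := fun ω => η ω * kk (s n) t' (η ω)) (by
      have := mk (s n) t'; fun_prop)) (integrable_const _)
    (fun n => Eventually.of_forall fun ω => kk_bdd (s0 n) (s1 n) ht' (η ω)) lim2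
  have T3 := tendsto_integral_of_dominated_convergence (fun _ => kb t * kb t')
    (fun n => Measurable.aestronglyMeasurable (μ := P)
      (f := fun ω => (ξ ω * kk (s n) t (ξ ω)) * (η ω * kk (s n) t' (η ω))) (by
      have := mk (s n) t'; have := mk (s n) t; fun_prop)) (integrable_const _)
    (fun n => Eventually.of_forall fun ω => by
      rw [norm_mul]
      have a := kk_bdd (s0 n) (s1 n) ht (ξ ω)
      exact mul_le_mul a (kk_bdd (s0 n) (s1 n) ht' (η ω)) (norm_nonneg _)
        ((abs_nonneg _).trans a))
    (lim1.and lim2 |>.mono fun ω hω => hω.1.mul hω.2)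
  exact le_of_tendsto ((T3.sub (T1.mul T2)).abs) (Eventually.of_forall fun n => h.cov_kk hS (s0 n) ht ht')
end part7

section part8
variable {α ε M : ℝ} {S : Type*} [MeasurableSpace S] {μ : Measure S} {f g : S → ℝ}
variable {Ω : Type*} [MeasurableSpace Ω] {P : Measure Ω} [IsProbabilityMeasure P] {ξ η : Ω → ℝ}

open ProbabilityTheory

noncomputable def YY (b t x : ℝ) : ℝ := x * (Ioc b t).indicator (fun _ => (1:ℝ)) x

lemma YY_eq {b t : ℝ} (hb : 0 < b) (h : b ≤ t) (x : ℝ) : YY b t x = XX t x - XX b x := by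
  unfold YY XX
  rw [← mul_sub]; congr 1
  simp only [indicator, mem_Ioc]
  split_ifs <;> grind

lemma XX_bdd {t : ℝ} (ht : 0 < t) (x : ℝ) : ‖XX t x‖ ≤ t := by
  unfold XX; simp only [indicator]
  split_ifs with h
  · rw [mul_one, Real.norm_of_nonneg h.1.le]; exact h.2
  · simpa using ht.le

lemma XX_mem {t : ℝ} (ht : 0 < t) (hξ : Measurable ξ) : MemLp (fun ω => XX t (ξ ω)) 2 P :=
  MemLp.of_bound ((measurable_XX t).comp hξ).aestronglyMeasurable t
    (Eventually.of_forall fun ω => XX_bdd ht _)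

lemma JS.cov_YY [SFinite μ] (h : JS α μ f g P ξ η) (hS : SPair α ε M μ f g) {b t t' : ℝ}
    (hb : 0 < b) (ht : b ≤ t) (ht' : b ≤ t') :
    |cov[fun ω => YY b t (ξ ω), fun ω => YY b t' (η ω); P]| ≤
      4 * cA α ε M * (t ^ (1 - α / 2) * t' ^ (1 - α / 2)) * (d1 α μ f g + d1 α μ g f + d2 α μ f g) := by
  have h0 := hb.trans_le ht
  have h0' := hb.trans_le ht'
  set D := d1 α μ f g + d1 α μ g f + d2 α μ f g with hD
  have D0 : 0 ≤ D := add_nonneg (add_nonneg d1_nonneg d1_nonneg) d2_nonneg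
  have c0 : 0 ≤ cA α ε M := cA_nonneg hS.h1 hS.M_nonneg
  have p0 : 0 ≤ 1 - α / 2 := by linarith [hS.h2]
  have key : ∀ r r' : ℝ, 0 < r → r ≤ t → 0 < r' → r' ≤ t' →
      |cov[fun ω => XX r (ξ ω), fun ω => XX r' (η ω); P]| ≤
        cA α ε M * (t ^ (1 - α / 2) * t' ^ (1 - α / 2)) * D := by
    intro r r' hr hrt hr' hrt'
    rw [covariance_eq_sub (XX_mem hr h.m1) (XX_mem hr' h.m2)]
    refine (h.cov_XX hS hr hr').trans ?_
    gcongr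
  simp_rw [YY_eq hb ht, YY_eq hb ht']
  rw [covariance_fun_sub_fun_sub (XX_mem h0 h.m1) (XX_mem hb h.m1) (XX_mem h0' h.m2) (XX_mem hb h.m2)]
  have k1 := abs_le.1 (key t t' h0 le_rfl h0' le_rfl)
  have k2 := abs_le.1 (key t b h0 le_rfl hb ht')
  have k3 := abs_le.1 (key b t' hb ht h0' le_rfl)
  have k4 := abs_le.1 (key b b hb ht hb ht')
  rw [abs_le]; constructor <;> linarith [k1.1, k1.2, k2.1, k2.2, k3.1, k3.2, k4.1, k4.2]

lemma cov_eq_right {X Y : Ω → ℝ} (hX : MemLp X 2 P) (hY : MemLp Y 2 P) :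
    cov[X, Y; P] = ∫ ω, X ω * (Y ω - ∫ a, Y a ∂P) ∂P := by
  rw [covariance_eq_sub hX hY]
  simp_rw [mul_sub]
  have i : Integrable (fun ω => X ω * Y ω) P := hX.integrable_mul hY
  rw [integral_sub i ((hX.integrable (by norm_num)).mul_const _), integral_mul_const]
  rfl

lemma layer {R H V : Ω → ℝ} (mR : Measurable R) (mH : Measurable H)
    (H0 : ∀ ω, 0 ≤ H ω) (mV : AEStronglyMeasurable V P)
    (hi : Integrable (fun ω => R ω * H ω * V ω) P) {w : ℝ → ℝ} (hw : IntegrableOn w (Ioi 0))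
    (hb : ∀ l, 0 < l → |∫ ω, R ω * (if l < H ω then 1 else 0) * V ω ∂P| ≤ w l) :
    |∫ ω, R ω * H ω * V ω ∂P| ≤ ∫ l in Ioi 0, w l := by
  have e : ∀ ω, ∀ c : ℝ, ∫ l in Ioi (0:ℝ), c * (if l < H ω then (1:ℝ) else 0) = c * H ω := by
    intro ω c
    rw [integral_const_mul]; congr 1
    have : (fun l : ℝ => if l < H ω then (1:ℝ) else 0) = (Iio (H ω)).indicator (fun _ => 1) := by
      funext l; simp [indicator]
    rw [this, setIntegral_indicator measurableSet_Iio]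
    simp [Ioi_inter_Iio, H0 ω]
  have hjoint : Integrable (Function.uncurry fun (ω : Ω) (l : ℝ) => R ω * V ω * (if l < H ω then (1:ℝ) else 0))
      (P.prod (volume.restrict (Ioi 0))) := by
    have hms : MeasurableSet {z : Ω × ℝ | z.2 < H z.1} :=
      measurableSet_lt measurable_snd (mH.comp measurable_fst)
    have sm : AEStronglyMeasurable (Function.uncurry fun (ω : Ω) (l : ℝ) => R ω * V ω * (if l < H ω then (1:ℝ) else 0))
      (P.prod (volume.restrict (Ioi 0))) := by
      refine ((mR.aestronglyMeasurable.mul mV).comp_fst).mul (Measurable.aestronglyMeasurable ?_)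
      exact Measurable.ite hms measurable_const measurable_const
    rw [integrable_prod_iff sm]
    refine ⟨Eventually.of_forall fun ω => ?_, ?_⟩
    · simp only [Function.uncurry]
      refine Integrable.const_mul ?_ _
      have : (fun l : ℝ => if l < H ω then (1:ℝ) else 0) = (Iio (H ω)).indicator (fun _ => 1) := by
        funext l; simp [indicator]
      rw [this, integrable_indicator_iff measurableSet_Iio, IntegrableOn, Measure.restrict_restrict measurableSet_Iio,
        Iio_inter_Ioi]
      exact integrable_const _
    · refine hi.norm.congr (Eventually.of_forall fun ω => ?_)
      simp only [Function.uncurry]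
      have : ∀ l : ℝ, ‖R ω * V ω * (if l < H ω then (1:ℝ) else 0)‖ = |R ω * V ω| * (if l < H ω then (1:ℝ) else 0) := by
        intro l; rw [norm_mul, Real.norm_eq_abs]; congr 1; split_ifs <;> simp
      simp_rw [this, e]
      rw [norm_mul, norm_mul, abs_mul, Real.norm_eq_abs, Real.norm_eq_abs, Real.norm_eq_abs, abs_of_nonneg (H0 ω)]
      ring
  have e2 : ∫ ω, R ω * H ω * V ω ∂P = ∫ l in Ioi (0:ℝ), ∫ ω, R ω * (if l < H ω then 1 else 0) * V ω ∂P := by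
    calc _ = ∫ ω, (∫ l in Ioi (0:ℝ), R ω * V ω * (if l < H ω then (1:ℝ) else 0)) ∂P := by
          congr 1; funext ω; rw [e]; ring
      _ = _ := by
          rw [integral_integral_swap hjoint]
          congr 1; funext l; congr 1; funext ω; ring
  rw [e2, ← Real.norm_eq_abs]
  refine norm_integral_le_of_norm_le hw ?_
  filter_upwards [ae_restrict_mem measurableSet_Ioi] with l hl using hb l hl

lemma mem_level {R H : Ω → ℝ} (mR : Measurable R) (mH : Measurable H)
    (H0 : ∀ ω, 0 ≤ H ω) (hm : MemLp (fun ω => R ω * H ω) 2 P) {l : ℝ} (hl : 0 < l) :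
    MemLp (fun ω => R ω * (if l < H ω then 1 else 0)) 2 P := by
  refine (hm.const_mul l⁻¹).mono (Measurable.aestronglyMeasurable ?_) (Eventually.of_forall fun ω => ?_)
  · exact mR.mul (Measurable.ite (measurableSet_lt measurable_const mH) measurable_const measurable_const)
  · have hl' : 0 < l⁻¹ := inv_pos.2 hl
    rw [norm_mul, norm_mul, norm_mul, Real.norm_of_nonneg hl'.le, Real.norm_of_nonneg (H0 ω)]
    split_ifs with h
    · rw [norm_one, mul_one, mul_left_comm]
      have : 1 ≤ l⁻¹ * H ω := by rw [inv_mul_eq_div, one_le_div hl]; exact h.le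
      nlinarith [norm_nonneg (R ω)]
    · rw [norm_zero, mul_zero]
      have := H0 ω; positivity

lemma cov_layer {R H Y : Ω → ℝ} (mR : Measurable R) (mH : Measurable H)
    (H0 : ∀ ω, 0 ≤ H ω) (hm : MemLp (fun ω => R ω * H ω) 2 P) (hY : MemLp Y 2 P)
    {w : ℝ → ℝ} (hw : IntegrableOn w (Ioi 0))
    (hb : ∀ l, 0 < l → |cov[fun ω => R ω * (if l < H ω then 1 else 0), Y; P]| ≤ w l) :
    |cov[fun ω => R ω * H ω, Y; P]| ≤ ∫ l in Ioi 0, w l := by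
  have hV : MemLp (fun ω => Y ω - ∫ a, Y a ∂P) 2 P := hY.sub (memLp_const _)
  rw [cov_eq_right hm hY]
  refine layer mR mH H0 hV.1 (hm.integrable_mul hV) hw fun l hl => ?_
  rw [← cov_eq_right (mem_level mR mH H0 hm hl) hY]
  exact hb l hl

lemma cov_layer2 {R H R' H' : Ω → ℝ} (mR : Measurable R) (mH : Measurable H)
    (H0 : ∀ ω, 0 ≤ H ω) (hm : MemLp (fun ω => R ω * H ω) 2 P)
    (mR' : Measurable R') (mH' : Measurable H')
    (H0' : ∀ ω, 0 ≤ H' ω) (hm' : MemLp (fun ω => R' ω * H' ω) 2 P)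
    {w : ℝ → ℝ} (hw : IntegrableOn w (Ioi 0)) (B : ℝ)
    (hb : ∀ l l', 0 < l → 0 < l' → |cov[fun ω => R ω * (if l < H ω then 1 else 0),
      fun ω => R' ω * (if l' < H' ω then 1 else 0); P]| ≤ B * (w l * w l')) :
    |cov[fun ω => R ω * H ω, fun ω => R' ω * H' ω; P]| ≤ B * (∫ l in Ioi 0, w l) ^ 2 := by
  refine (cov_layer mR mH H0 hm hm' (w := fun l => (B * w l) * ∫ l in Ioi 0, w l)
    ((hw.const_mul B).mul_const _) fun l hl => ?_).trans (le_of_eq ?_)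
  · rw [covariance_comm]
    refine (cov_layer mR' mH' H0' hm' (mem_level mR mH H0 hm hl) (w := fun l' => (B * w l) * w l')
      (hw.const_mul _) fun l' hl' => ?_).trans (le_of_eq ?_)
    · rw [covariance_comm]
      exact (hb l l' hl hl').trans (le_of_eq (by ring))
    · rw [integral_const_mul]
  · rw [integral_mul_const, integral_const_mul]; ring

/-- tail bound -/
lemma JS.tail (h : JS α μ f g P ξ η) (hS : SPair α ε M μ f g) {r : ℝ} (hr : 0 < r) :
    P {ω | r < |ξ ω|} ≤ ENNReal.ofReal (2 * (M * 2 ^ α) * r ^ (-α)) := by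
  have hm := h.m1
  have h1 := hS.h1
  have : IsProbabilityMeasure (P.map ξ) := Measure.isProbabilityMeasure_map hm.aemeasurable
  have key := measureReal_abs_gt_le_integral_charFun (μ := P.map ξ) hr
  rw [map_measureReal_apply hm (measurableSet_lt measurable_const (by fun_prop))] at key
  have cf : ∀ t, charFun (P.map ξ) t = ((rexp (-NN α μ f g t 0) : ℝ) : ℂ) := by
    intro t
    rw [charFun_apply_real, integral_map hm.aemeasurable (Measurable.aestronglyMeasurable (by fun_prop)),
      Complex.ofReal_exp, Complex.ofReal_neg, ← h.ch t 0]
    congr 1; funext ω; congr 1; push_cast; ring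
  have Nt : ∀ t, NN α μ f g t 0 = |t| ^ α * ∫ s, |f s| ^ α ∂μ := by
    intro t; unfold NN; rw [← integral_const_mul]; congr 1; funext s
    rw [zero_mul, add_zero, abs_mul, Real.mul_rpow (abs_nonneg _) (abs_nonneg _)]
  have bd : ‖∫ t in (-2 * r⁻¹)..(2 * r⁻¹), 1 - charFun (P.map ξ) t‖ ≤
      (M * (2 * r⁻¹) ^ α) * |2 * r⁻¹ - (-2 * r⁻¹)| := by
    refine intervalIntegral.norm_integral_le_of_norm_le_const fun t ht => ?_
    have hr' : 0 < r⁻¹ := inv_pos.2 hr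
    rw [uIoc_of_le (by linarith)] at ht
    rw [cf, ← Complex.ofReal_one, ← Complex.ofReal_sub, Complex.norm_real]
    have n0 : 0 ≤ NN α μ f g t 0 := NN_nonneg t 0
    have : |t| ≤ 2 * r⁻¹ := abs_le.2 ⟨by linarith [ht.1], ht.2⟩
    have q := Real.add_one_le_exp (-NN α μ f g t 0)
    have q2 : rexp (-NN α μ f g t 0) ≤ 1 := Real.exp_le_one_iff.2 (by linarith)
    rw [Real.norm_of_nonneg (by linarith)]
    calc _ ≤ NN α μ f g t 0 := by linarith
      _ = |t| ^ α * ∫ s, |f s| ^ α ∂μ := Nt t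
      _ ≤ (2 * r⁻¹) ^ α * M := by
        have := hS.Mf
        have := hS.M_nonneg
        gcongr
      _ = _ := mul_comm _ _
  rw [← ofReal_measureReal]
  refine ENNReal.ofReal_le_ofReal ?_
  refine key.trans ?_
  calc _ ≤ 2⁻¹ * r * ((M * (2 * r⁻¹) ^ α) * |2 * r⁻¹ - (-2 * r⁻¹)|) := by gcongr
    _ = _ := by
      rw [abs_of_pos (by have := inv_pos.2 hr; linarith), Real.mul_rpow (by norm_num) (by positivity),
        Real.inv_rpow hr.le, Real.rpow_neg hr.le]
      field_simp; ring

lemma JS.moment (h : JS α μ f g P ξ η) (hS : SPair α ε M μ f g) {q : ℝ} (hq : 0 < q) (hq2 : q < α) :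
    Integrable (fun ω => |ξ ω| ^ q) P := by
  have hm := h.m1
  refine ⟨Measurable.aestronglyMeasurable (by fun_prop), ?_⟩
  rw [hasFiniteIntegral_iff_ofReal (Eventually.of_forall fun ω => by positivity),
    lintegral_rpow_eq_lintegral_meas_lt_mul P (Eventually.of_forall fun ω => abs_nonneg _)
      (by fun_prop) hq]
  refine ENNReal.mul_lt_top ENNReal.ofReal_lt_top ?_
  rw [← Ioc_union_Ioi_eq_Ioi (zero_le_one (α := ℝ))]
  refine (lintegral_union_le _ _ _).trans_lt (ENNReal.add_lt_top.2 ⟨?_, ?_⟩)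
  · have i : IntegrableOn (fun t : ℝ => t ^ (q - 1)) (Ioc 0 1) :=
      (intervalIntegral.intervalIntegrable_rpow' (by linarith)).1
    refine lt_of_le_of_lt ?_ i.lintegral_lt_top
    refine lintegral_mono fun t => ?_
    calc _ ≤ 1 * ENNReal.ofReal (t ^ (q - 1)) := by gcongr; exact prob_le_one
      _ = _ := one_mul _
  · have i : IntegrableOn (fun t : ℝ => (2 * (M * 2 ^ α)) * t ^ (q - α - 1)) (Ioi 1) :=
      (integrableOn_Ioi_rpow_of_lt (by linarith) one_pos).const_mul _
    refine lt_of_le_of_lt ?_ i.lintegral_lt_top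
    refine setLIntegral_mono' measurableSet_Ioi fun t ht => ?_
    have t0 : (0:ℝ) < t := one_pos.trans ht
    have M0 := hS.M_nonneg
    calc _ ≤ ENNReal.ofReal (2 * (M * 2 ^ α) * t ^ (-α)) * ENNReal.ofReal (t ^ (q - 1)) := by
          gcongr; exact h.tail hS t0
      _ = _ := by
        rw [← ENNReal.ofReal_mul (by positivity), mul_assoc, ← Real.rpow_add t0]
        congr 3; ring
end part8

section part9
variable {α ε M : ℝ} {S : Type*} [MeasurableSpace S] {μ : Measure S} {f g : S → ℝ}
variable {Ω : Type*} [MeasurableSpace Ω] {P : Measure Ω} [IsProbabilityMeasure P] {ξ η : Ω → ℝ}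

open ProbabilityTheory

structure KF (b β c : ℝ) (k : ℝ → ℝ) : Prop where
  k0 : ∀ x, 0 ≤ k x
  kz : ∀ x, x ≤ b → k x = 0
  ka : AntitoneOn k (Ioi b)
  kb : ∀ x, b < x → k x ≤ c * x ^ (β - 1)

variable {b β c : ℝ} {k k' : ℝ → ℝ}

lemma KF.meas (h : KF b β c k) : Measurable k := by
  refine measurable_of_Ioi fun l => ?_
  rcases lt_or_ge l 0 with hl | hl
  · convert! MeasurableSet.univ (α := ℝ)
    ext x; simp; exact hl.trans_le (h.k0 x)
  · refine OrdConnected.measurableSet ⟨fun x hx y hy z hz => ?_⟩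
    simp only [mem_preimage, mem_Ioi] at hx hy ⊢
    have gt : ∀ x, l < k x → b < x := fun x hx => by
      by_contra hc; rw [h.kz x (not_lt.1 hc)] at hx; linarith
    exact hy.trans_le (h.ka ((gt x hx).trans_le hz.1) (gt y hy) hz.2)

lemma KF.bd (h : KF b β c k) (hb : 0 < b) (hc : 0 ≤ c) (x : ℝ) : ‖|x| * k x‖ ≤ c * |x| ^ β := by
  rw [norm_mul, Real.norm_of_nonneg (h.k0 x), norm_eq_abs, abs_abs]
  rcases le_or_gt x b with hx | hx
  · rw [h.kz x hx, mul_zero]; positivity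
  · have x0 := hb.trans hx
    rw [abs_of_pos x0]
    calc _ ≤ x * (c * x ^ (β - 1)) := by gcongr; exact h.kb x hx
      _ = c * (x * x ^ (β - 1)) := by ring
      _ = _ := by rw [Real.rpow_sub_one x0.ne']; field_simp

lemma KF.mem (h : KF b β c k) (hb : 0 < b) (hc : 0 ≤ c) (hJ : JS α μ f g P ξ η) (hS : SPair α ε M μ f g)
    (hβ0 : 0 < β) (hβ : β < α / 2) : MemLp (fun ω => |ξ ω| * k (ξ ω)) 2 P := by
  have hm := hJ.m1
  have hk := h.meas
  have sm : AEStronglyMeasurable (fun ω => |ξ ω| * k (ξ ω)) P := Measurable.aestronglyMeasurable (by fun_prop)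
  rw [memLp_two_iff_integrable_sq sm]
  refine ((hJ.moment hS (q := 2 * β) (by linarith) (by linarith)).const_mul (c ^ 2)).mono' (sm.pow 2)
    (Eventually.of_forall fun ω => ?_)
  rw [norm_pow]
  calc _ ≤ (c * |ξ ω| ^ β) ^ 2 := by gcongr; exact h.bd hb hc _
    _ = _ := by
      rw [mul_pow]; congr 1
      rw [mul_comm 2 β, Real.rpow_mul (abs_nonneg _), Real.rpow_two]

lemma KF.level0 (h : KF b β c k) (hb : 0 < b) (hc : 0 ≤ c) (hβ : β < 1) {l : ℝ} (hl : 0 < l)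
    (hl2 : c * b ^ (β - 1) ≤ l) (x : ℝ) : ¬ l < k x := by
  rw [not_lt]
  rcases le_or_gt x b with hx | hx
  · rw [h.kz x hx]; exact hl.le
  · refine (h.kb x hx).trans (le_trans ?_ hl2)
    gcongr 1
    exact Real.rpow_le_rpow_of_nonpos hb hx.le (by linarith)

lemma KF.level (h : KF b β c k) (hb : 0 < b) (hc : 0 < c) (hβ : β < 1) {l : ℝ} (hl : 0 < l)
    (hl2 : l < c * b ^ (β - 1)) : ∃ t, b ≤ t ∧ t ≤ (c / l) ^ (1 / (1 - β)) ∧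
      ∀ x, x ≠ t → |x| * (if l < k x then 1 else 0) = YY b t x := by
  set T := (c / l) ^ (1 / (1 - β)) with hT
  have β1 : 0 < 1 - β := by linarith
  have leT : ∀ x, 0 < x → l ≤ c * x ^ (β - 1) → x ≤ T := by
    intro x x0 hx
    have : x ^ (1 - β) ≤ c / l := by
      rw [le_div_iff₀ hl]
      calc x ^ (1 - β) * l ≤ x ^ (1 - β) * (c * x ^ (β - 1)) := by gcongr
        _ = c * (x ^ (1 - β) * x ^ (β - 1)) := by ring
        _ = c := by rw [← Real.rpow_add x0]; simp
    calc x = (x ^ (1 - β)) ^ (1 / (1 - β)) := by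
          rw [← Real.rpow_mul x0.le, mul_one_div_cancel β1.ne', Real.rpow_one]
      _ ≤ T := by rw [hT]; gcongr
  have gt : ∀ x, l < k x → b < x := fun x hx => by
    by_contra hc; rw [h.kz x (not_lt.1 hc)] at hx; linarith
  set A : Set ℝ := {x | l < k x} with hA
  have bT : b ≤ T := leT b hb hl2.le
  have AT : ∀ x ∈ A, x ≤ T := fun x hx => leT x (hb.trans (gt x hx)) (hx.le.trans (h.kb x (gt x hx)))
  rcases A.eq_empty_or_nonempty with he | hne
  · refine ⟨b, le_rfl, bT, fun x _ => ?_⟩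
    have : ¬ l < k x := fun hx => by
      have : x ∈ A := hx
      rw [he] at this; exact this
    simp [YY, this]
  · have bA : BddAbove A := ⟨T, AT⟩
    refine ⟨sSup A, ?_, csSup_le hne AT, fun x hx => ?_⟩
    · obtain ⟨y, hy⟩ := hne
      exact (gt y hy).le.trans (le_csSup bA hy)
    · unfold YY
      simp only [indicator, mem_Ioc]
      by_cases hk : l < k x
      · have := gt x hk
        have h2 : x ≤ sSup A := le_csSup bA hk
        simp [hk, this, h2, (hb.trans this).le]
      · have : ¬ (b < x ∧ x ≤ sSup A) := by
          rintro ⟨h1, h2⟩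
          obtain ⟨y, hy, hxy⟩ := exists_lt_of_lt_csSup hne (lt_of_le_of_ne h2 hx)
          exact hk (lt_of_lt_of_le hy (h.ka h1 (gt y hy) hxy.le))
        simp [hk, this]

noncomputable def w0 (b β c q : ℝ) : ℝ → ℝ := (Iio (c * b ^ (β - 1))).indicator (fun l => (c / l) ^ q)

lemma w0_int (hb : 0 < b) (hc : 0 < c) {q : ℝ} (hq : q < 1) :
    IntegrableOn (w0 b β c q) (Ioi 0) ∧
      ∫ l in Ioi 0, w0 b β c q l = c * b ^ ((β - 1) * (1 - q)) / (1 - q) := by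
  have M0 : 0 < c * b ^ (β - 1) := by positivity
  have e : ∀ l ∈ Ioc 0 (c * b ^ (β - 1)), (c / l) ^ q = c ^ q * l ^ (-q) := fun l hl => by
    rw [Real.div_rpow hc.le hl.1.le, Real.rpow_neg hl.1.le]; rfl
  have i0 : IntegrableOn (fun l : ℝ => c ^ q * l ^ (-q)) (Ioc 0 (c * b ^ (β - 1))) :=
    (intervalIntegral.intervalIntegrable_rpow' (by linarith)).1.const_mul _
  have i1 : IntegrableOn (fun l : ℝ => (c / l) ^ q) (Ioc 0 (c * b ^ (β - 1))) :=
    i0.congr_fun (fun l hl => (e l hl).symm) measurableSet_Ioc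
  constructor
  · unfold w0
    rw [IntegrableOn, integrable_indicator_iff measurableSet_Iio, IntegrableOn,
      Measure.restrict_restrict measurableSet_Iio, Iio_inter_Ioi]
    exact i1.mono_set Ioo_subset_Ioc_self
  · unfold w0
    rw [setIntegral_indicator measurableSet_Iio, Ioi_inter_Iio, ← integral_Ioc_eq_integral_Ioo,
      setIntegral_congr_fun measurableSet_Ioc e, integral_const_mul, ← intervalIntegral.integral_of_le M0.le,
      integral_rpow (Or.inl (by linarith)), Real.zero_rpow (by linarith), sub_zero,
      Real.mul_rpow hc.le (by positivity), ← Real.rpow_mul hb.le, mul_div_assoc', ← mul_assoc,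
      ← Real.rpow_add hc]
    rw [show q + (-q + 1) = 1 by ring, Real.rpow_one, show -q + 1 = 1 - q by ring]

lemma cov_congr {X X' Y Y' : Ω → ℝ} (h1 : X =ᵐ[P] X') (h2 : Y =ᵐ[P] Y') :
    cov[X, Y; P] = cov[X', Y'; P] := by
  unfold covariance
  rw [integral_congr_ae h1, integral_congr_ae h2]
  refine integral_congr_ae ?_
  filter_upwards [h1, h2] with ω a b
  rw [a, b]

lemma JS.quad [SFinite μ] (h : JS α μ f g P ξ η) (hS : SPair α ε M μ f g) (hb : 0 < b) (hc : 0 < c)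
    (hβ0 : 0 < β) (hβ : β < α / 2) (hk : KF b β c k) (hk' : KF b β c k') :
    |cov[fun ω => |ξ ω| * k (ξ ω), fun ω => |η ω| * k' (η ω); P]| ≤
      4 * cA α ε M * (d1 α μ f g + d1 α μ g f + d2 α μ f g) * (c / (1 - (1 - α / 2) / (1 - β))) ^ 2 * b ^ (2 * β - α) := by
  have hm1 := h.m1
  have hm2 := h.m2
  have h2 := hS.h2
  have β1 : β < 1 := by linarith
  set q := (1 - α / 2) / (1 - β) with hq
  have q1 : q < 1 := by rw [hq, div_lt_one (by linarith)]; linarith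
  obtain ⟨wi, wI⟩ := w0_int (β := β) hb hc q1
  set D := d1 α μ f g + d1 α μ g f + d2 α μ f g with hD
  have D0 : 0 ≤ D := add_nonneg (add_nonneg d1_nonneg d1_nonneg) d2_nonneg
  have c0 : 0 ≤ cA α ε M := cA_nonneg hS.h1 hS.M_nonneg
  refine (cov_layer2 (R := fun ω => |ξ ω|) (H := fun ω => k (ξ ω)) (R' := fun ω => |η ω|)
    (H' := fun ω => k' (η ω)) (by fun_prop) (hk.meas.comp hm1) (fun ω => hk.k0 _)
    (hk.mem hb hc.le h hS hβ0 hβ) (by fun_prop) (hk'.meas.comp hm2) (fun ω => hk'.k0 _)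
    (hk'.mem hb hc.le h.swap hS.swap hβ0 hβ) wi (4 * cA α ε M * D) fun l l' hl hl' => ?_).trans (le_of_eq ?_)
  · rcases le_or_gt (c * b ^ (β - 1)) l with hM | hM
    · have : w0 b β c q l = 0 := by unfold w0; rw [indicator_of_notMem]; exact not_lt.2 hM
      simp only [hk.level0 hb hc.le β1 hl hM, if_false, mul_zero, this, zero_mul]
      rw [covariance_const_left]; simp
    rcases le_or_gt (c * b ^ (β - 1)) l' with hM' | hM'
    · have : w0 b β c q l' = 0 := by unfold w0; rw [indicator_of_notMem]; exact not_lt.2 hM'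
      simp only [hk'.level0 hb hc.le β1 hl' hM', if_false, mul_zero, this]
      rw [covariance_const_right]; simp
    obtain ⟨t, bt, tT, ht⟩ := hk.level hb hc β1 hl hM
    obtain ⟨t', bt', tT', ht'⟩ := hk'.level hb hc β1 hl' hM'
    have e1 : (fun ω => |ξ ω| * (if l < k (ξ ω) then 1 else 0)) =ᵐ[P] fun ω => YY b t (ξ ω) := by
      filter_upwards [h.noatom hS t] with ω hω using ht _ hω
    have e2 : (fun ω => |η ω| * (if l' < k' (η ω) then 1 else 0)) =ᵐ[P] fun ω => YY b t' (η ω) := by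
      filter_upwards [h.swap.noatom hS.swap t'] with ω hω using ht' _ hω
    rw [cov_congr e1 e2]
    refine (h.cov_YY hS hb bt bt').trans ?_
    have wb : ∀ t l : ℝ, 0 < l → l < c * b ^ (β - 1) → b ≤ t → t ≤ (c / l) ^ (1 / (1 - β)) →
        t ^ (1 - α / 2) ≤ w0 b β c q l := by
      intro t l hl hM bt tT
      unfold w0; rw [indicator_of_mem (by exact hM)]
      have t0 := hb.trans_le bt
      calc t ^ (1 - α / 2) ≤ ((c / l) ^ (1 / (1 - β))) ^ (1 - α / 2) := by
            have : 0 ≤ 1 - α / 2 := by linarith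
            gcongr
        _ = _ := by rw [← Real.rpow_mul (by positivity)]; congr 1; rw [hq]; ring
    have a1 := wb t l hl hM bt tT
    have a2 := wb t' l' hl' hM' bt' tT'
    have t0 := hb.trans_le bt
    have t0' := hb.trans_le bt'
    have p1 : 0 ≤ t ^ (1 - α / 2) := by positivity
    have p2 : 0 ≤ t' ^ (1 - α / 2) := by positivity
    calc _ = 4 * cA α ε M * D * (t ^ (1 - α / 2) * t' ^ (1 - α / 2)) := by ring
      _ ≤ _ := by
        have p3 := p1.trans a1
        gcongr
  · rw [wI]
    have : b ^ (2 * β - α) = (b ^ ((β - 1) * (1 - q))) ^ 2 := by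
      rw [← Real.rpow_two, ← Real.rpow_mul hb.le]; congr 1
      have : 1 - β ≠ 0 := by linarith
      rw [hq]; field_simp; ring
    rw [this]; ring

lemma JS.neg1 (h : JS α μ f g P ξ η) : JS α μ (fun s => -f s) g P (fun ω => -ξ ω) η :=
  ⟨h.m1.neg, h.m2, fun u v => by
    have e : NN α μ (fun s => -f s) g u v = NN α μ f g (-u) v := by
      unfold NN; congr 1; funext s; congr 2; ring
    rw [e, ← h.ch (-u) v]; congr 1; funext ω; congr 3; ring⟩

lemma SPair.neg1 (h : SPair α ε M μ f g) : SPair α ε M μ (fun s => -f s) g :=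
  ⟨h.h1, h.h2, h.he, h.mf.neg, h.mg, by simpa using h.intf, h.intg, by simpa using h.Mf, h.Mg, fun u v => by
    have e : NN α μ (fun s => -f s) g u v = NN α μ f g (-u) v := by
      unfold NN; congr 1; funext s; congr 2; ring
    rw [e, ← abs_neg u]; exact h.low (-u) v⟩

noncomputable def DT (α : ℝ) {S : Type*} [MeasurableSpace S] (μ : Measure S) (f g : S → ℝ) : ℝ :=
  d1 α μ f g + d1 α μ g f + d2 α μ f g

lemma DT_neg1 : DT α μ (fun s => -f s) g = DT α μ f g := by
  unfold DT d1 d2; simp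

lemma DT_swap : DT α μ g f = DT α μ f g := by
  unfold DT d2
  rw [add_comm (d1 α μ g f)]
  simp_rw [mul_comm]

lemma JS.neg2 (h : JS α μ f g P ξ η) : JS α μ f (fun s => -g s) P ξ (fun ω => -η ω) := h.swap.neg1.swap
lemma SPair.neg2 (h : SPair α ε M μ f g) : SPair α ε M μ f (fun s => -g s) := h.swap.neg1.swap
lemma DT_neg2 : DT α μ f (fun s => -g s) = DT α μ f g := by rw [DT_swap, DT_neg1, DT_swap]

/-- the K functions -/
structure KK (b β c : ℝ) (K : ℝ → ℝ) : Prop where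
  bd : ∀ x, b < |x| → |K x| ≤ c * |x| ^ β
  an : AntitoneOn (fun x => K x / x) (Ioi b)
  mo : MonotoneOn (fun x => K x / x) (Iio (-b))

noncomputable def kp (b : ℝ) (K : ℝ → ℝ) (x : ℝ) : ℝ := if b < x then K x / x else 0

lemma KK.kf (hb : 0 < b) (hβ : β < 1) {K : ℝ → ℝ} (h : KK b β c K) : KF b β c (kp b K) := by
  have ub : ∀ x, b < x → |K x / x| ≤ c * x ^ (β - 1) := by
    intro x hx
    have x0 := hb.trans hx
    have := h.bd x (by rwa [abs_of_pos x0])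
    rw [abs_of_pos x0] at this
    rw [abs_div, abs_of_pos x0, div_le_iff₀ x0, Real.rpow_sub_one x0.ne']
    calc _ ≤ _ := this
      _ = _ := by field_simp
  refine ⟨fun x => ?_, fun x hx => ?_, fun x hx y hy hxy => ?_, fun x hx => ?_⟩
  · unfold kp; split_ifs with hx
    · have lim : Tendsto (fun y : ℝ => -(c * y ^ (β - 1))) atTop (𝓝 (-(c * 0))) := by
        have := tendsto_rpow_neg_atTop (y := 1 - β) (by linarith)
        rw [show -(1 - β) = β - 1 by ring] at this
        exact (this.const_mul c).neg
      rw [mul_zero, neg_zero] at lim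
      refine le_of_tendsto lim ?_
      filter_upwards [eventually_ge_atTop x] with y hy
      have hby : b < y := lt_of_lt_of_le hx hy
      have a1 : K y / y ≤ K x / x := h.an hx hby hy
      have a2 := (abs_le.1 (ub y hby)).1
      linarith
    · exact le_rfl
  · simp [kp, not_lt.2 hx]
  · simp only [kp, if_pos (show b < x from hx), if_pos (show b < y from hy)]
    exact h.an hx hy hxy
  · simp only [kp, if_pos hx]; exact (le_abs_self _).trans (ub x hx)

lemma KK.refl' {K : ℝ → ℝ} (h : KK b β c K) : KK b β c (fun x => -K (-x)) := by
  refine ⟨fun x hx => ?_, fun x hx y hy hxy => ?_, fun x hx y hy hxy => ?_⟩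
  · have := h.bd (-x) (by rwa [abs_neg]); rw [abs_neg] at this; rwa [abs_neg]
  · have := h.mo (show -y ∈ Iio (-b) by simpa using hy) (show -x ∈ Iio (-b) by simpa using hx) (by linarith)
    simp only [div_neg] at this
    simpa [neg_div] using this
  · have := h.an (show -y ∈ Ioi b by simp at hy ⊢; linarith) (show -x ∈ Ioi b by simp at hx ⊢; linarith) (by linarith)
    simp only [div_neg] at this
    simpa [neg_div] using this

lemma kp_split (hb : 0 < b) (K : ℝ → ℝ) (x : ℝ) : (if b < |x| then K x else 0) =
    |x| * kp b K x - |-x| * kp b (fun x => -K (-x)) (-x) := by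
  unfold kp
  rcases lt_trichotomy x 0 with h | h | h
  · rw [abs_neg, abs_of_neg h, if_neg (show ¬ b < x by linarith)]
    split_ifs
    · have : x ≠ 0 := h.ne
      simp; field_simp
    · simp
  · subst h; simp [not_lt.2 hb.le]
  · rw [abs_neg, abs_of_pos h, if_neg (show ¬ b < -x by linarith)]
    split_ifs
    · have : x ≠ 0 := h.ne'
      field_simp; simp
    · simp

lemma JS.full [SFinite μ] (h : JS α μ f g P ξ η) (hS : SPair α ε M μ f g) (hb : 0 < b) (hc : 0 < c)
    (hβ0 : 0 < β) (hβ : β < α / 2) {K L : ℝ → ℝ} (hK : KK b β c K) (hL : KK b β c L) :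
    MemLp (fun ω => if b < |ξ ω| then K (ξ ω) else 0) 2 P ∧
    MemLp (fun ω => if b < |η ω| then L (η ω) else 0) 2 P ∧
    |cov[fun ω => if b < |ξ ω| then K (ξ ω) else 0, fun ω => if b < |η ω| then L (η ω) else 0; P]| ≤
      4 * (4 * cA α ε M * DT α μ f g * (c / (1 - (1 - α / 2) / (1 - β))) ^ 2 * b ^ (2 * β - α)) := by
  have h2 := hS.h2
  have β1 : β < 1 := by linarith
  have k1 := hK.kf hb β1
  have k2 := hK.refl'.kf hb β1
  have l1 := hL.kf hb β1
  have l2 := hL.refl'.kf hb β1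
  have m1 := k1.mem hb hc.le h hS hβ0 hβ
  have m2 := k2.mem hb hc.le h.neg1 hS.neg1 hβ0 hβ
  have n1 := l1.mem hb hc.le h.swap hS.swap hβ0 hβ
  have n2 := l2.mem hb hc.le h.swap.neg1 hS.swap.neg1 hβ0 hβ
  simp_rw [kp_split hb]
  refine ⟨m1.sub m2, n1.sub n2, ?_⟩
  rw [covariance_fun_sub_fun_sub m1 m2 n1 n2]
  have q1 := h.quad hS hb hc hβ0 hβ k1 l1
  have q2 := h.neg2.quad hS.neg2 hb hc hβ0 hβ k1 l2
  have q3 := h.neg1.quad hS.neg1 hb hc hβ0 hβ k2 l1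
  have q4 := h.neg1.neg2.quad hS.neg1.neg2 hb hc hβ0 hβ k2 l2
  change _ ≤ 4 * cA α ε M * DT α μ _ _ * _ * _ at q1 q2 q3 q4
  rw [DT_neg2] at q2 q4
  rw [DT_neg1] at q3 q4
  rw [abs_le] at q1 q2 q3 q4 ⊢
  constructor <;> linarith [q1.1, q1.2, q2.1, q2.2, q3.1, q3.2, q4.1, q4.2]
end part9

lemma nrm_pow {α : ℝ} (h : 1 < α) {S : Type*} [MeasurableSpace S] (μ : Measure S) (f : S → ℝ) :
    nrm α μ f ^ α = ∫ s, |f s| ^ α ∂μ := by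
  unfold nrm
  rw [← Real.rpow_mul (integral_nonneg fun s => by positivity), one_div_mul_cancel (by linarith), Real.rpow_one]

/-- Paper's Theorem 2.2. -/
theorem stmt3 (α β ε₁ ε₂ nf ng cK : ℝ) (hα1 : 1 < α) (hα2 : α < 2)
    (hβ0 : 0 < β) (hβ : β < α / 2) (hε₁ : 0 < ε₁) (hε₂ : 0 < ε₂)
    (hnf : 0 < nf) (hng : 0 < ng) :
    ∃ C > (0:ℝ), ∀ (S : Type) [MeasurableSpace S] (μ : Measure S) [SigmaFinite μ]
      (f g : S → ℝ), MemLalpha α μ f → MemLalpha α μ g →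
      nrm α μ f = nf → nrm α μ g = ng → A1 α ε₁ μ f g → A2 α ε₂ μ f g →
      ∀ (Ω : Type) [MeasurableSpace Ω] (P : Measure Ω) [IsProbabilityMeasure P]
        (ξ η : Ω → ℝ), Measurable ξ → Measurable η → JointSAS α μ f g P ξ η →
        ∀ b : ℝ, 1 ≤ b →
        ∀ K L : ℝ → ℝ,
          (∀ x : ℝ, b < |x| → |K x| ≤ cK * |x| ^ β) →
          (∀ x : ℝ, b < |x| → |L x| ≤ cK * |x| ^ β) →
          AntitoneOn (fun x => K x / x) (Set.Ioi b) →
          MonotoneOn (fun x => K x / x) (Set.Iio (-b)) →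
          AntitoneOn (fun x => L x / x) (Set.Ioi b) →
          MonotoneOn (fun x => L x / x) (Set.Iio (-b)) →
          Integrable (fun ω => (if b < |ξ ω| then K (ξ ω) else 0) ^ 2) P ∧
          Integrable (fun ω => (if b < |η ω| then L (η ω) else 0) ^ 2) P ∧
          |(∫ ω, (if b < |ξ ω| then K (ξ ω) else 0) *
                (if b < |η ω| then L (η ω) else 0) ∂P) -
              (∫ ω, (if b < |ξ ω| then K (ξ ω) else 0) ∂P) *
                (∫ ω, (if b < |η ω| then L (η ω) else 0) ∂P)|
            ≤ C * b ^ (2 * β - α) * (dep1 α μ f g + dep2 α μ f g) := by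
  set c := max cK 1 with hc
  set ε := ε₂ * min (nf ^ α) (ng ^ α) with hε
  set M := max (nf ^ α) (ng ^ α) with hM
  have c0 : 0 < c := lt_of_lt_of_le one_pos (le_max_right _ _)
  have M0 : 0 ≤ M := le_trans (by positivity) (le_max_left _ _)
  have ε0 : 0 < ε := mul_pos hε₂ (lt_min (by positivity) (by positivity))
  have cA0 : 0 ≤ cA α ε M := cA_nonneg hα1 M0
  refine ⟨16 * cA α ε M * (c / (1 - (1 - α / 2) / (1 - β))) ^ 2 + 1, by positivity, ?_⟩
  intro S _ μ _ f g hf hg nf_eq ng_eq _ hA2 Ω _ P _ ξ η mξ mη hJ b hb K L hK hL aK oK aL oL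
  have b0 : 0 < b := by linarith
  set f' := hf.1.mk f with hf'
  set g' := hg.1.mk g with hg'
  have ef : f =ᵐ[μ] f' := hf.1.ae_eq_mk
  have eg : g =ᵐ[μ] g' := hg.1.ae_eq_mk
  have eN : ∀ u v, NN α μ f' g' u v = nrm α μ (fun s => u * f s + v * g s) ^ α := by
    intro u v
    rw [nrm_pow hα1]; unfold NN
    refine integral_congr_ae ?_
    filter_upwards [ef, eg] with s h1 h2
    rw [h1, h2]
  have iF : (fun s => |f s| ^ α) =ᵐ[μ] fun s => |f' s| ^ α := by
    filter_upwards [ef] with s h1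
    rw [h1]
  have iG : (fun s => |g s| ^ α) =ᵐ[μ] fun s => |g' s| ^ α := by
    filter_upwards [eg] with s h1
    rw [h1]
  have hS : SPair α ε M μ f' g' := by
    refine ⟨hα1, hα2, ε0, hf.1.stronglyMeasurable_mk.measurable, hg.1.stronglyMeasurable_mk.measurable,
      hf.2.congr iF, hg.2.congr iG, ?_, ?_, fun u v => ?_⟩
    · rw [← integral_congr_ae iF, ← nrm_pow hα1, nf_eq]; exact le_max_left _ _
    · rw [← integral_congr_ae iG, ← nrm_pow hα1, ng_eq]; exact le_max_right _ _
    · rw [eN]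
      refine le_trans ?_ (hA2 u v)
      rw [nf_eq, ng_eq, hε, mul_assoc]
      refine mul_le_mul_of_nonneg_left ?_ hε₂.le
      have u0 : 0 ≤ |u| ^ α := by positivity
      have v0 : 0 ≤ |v| ^ α := by positivity
      have m1 := min_le_left (nf ^ α) (ng ^ α)
      have m2 := min_le_right (nf ^ α) (ng ^ α)
      nlinarith
  have hJS : JS α μ f' g' P ξ η := ⟨mξ, mη, fun u v => by rw [eN]; exact hJ u v⟩
  have up : ∀ x : ℝ, cK * |x| ^ β ≤ c * |x| ^ β := fun x => by
    gcongr; exact le_max_left _ _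
  have kK : KK b β c K := ⟨fun x hx => (hK x hx).trans (up x), aK, oK⟩
  have kL : KK b β c L := ⟨fun x hx => (hL x hx).trans (up x), aL, oL⟩
  obtain ⟨r1, r2, r3⟩ := hJS.full hS b0 c0 hβ0 hβ kK kL
  have eD : DT α μ f' g' = dep1 α μ f g + dep2 α μ f g := by
    unfold DT dep1 dep1s dep2 d1 d2
    congr 1
    · congr 1
      · refine integral_congr_ae ?_
        filter_upwards [ef, eg] with s h1 h2
        rw [h1, h2]
      · refine integral_congr_ae ?_
        filter_upwards [ef, eg] with s h1 h2
        rw [h1, h2]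
    · refine integral_congr_ae ?_
      filter_upwards [ef, eg] with s h1 h2
      rw [h1, h2]
  have D0 : 0 ≤ DT α μ f' g' := add_nonneg (add_nonneg d1_nonneg d1_nonneg) d2_nonneg
  refine ⟨r1.integrable_sq, r2.integrable_sq, ?_⟩
  rw [ProbabilityTheory.covariance_eq_sub r1 r2] at r3
  rw [← eD]
  refine le_trans r3 ?_
  have bp : 0 ≤ b ^ (2 * β - α) * DT α μ f' g' := by positivity
  linarith
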